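/- arXiv:1901.06290 — 5 statements merged into one kernel-verified Lean document; each statement's English description precedes it below -/
import Mathlib

section
/- Let X be a compact, locally self-similar metric space whose topological (covering) dimension is n. Then the Hölder dimension of X equals n; that is, every metric space Y that is bi-Hölder homeomorphic to X satisfies dimH(Y) ≥ n, and for every real q > n there exist a metric space Y and a bi-Hölder homeomorphism f : X → Y with dimH(Y) ≤ q. -/
open scoped ENNReal

/-- `X` is locally self-similar: there is `l ≥ 1` such that for every sufficiently large
`R > 1` and every `A ⊆ X` with `diam A ≤ Λ₀ / R`, where `Λ₀ = min 1 (diam X / l)`, there is a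
map `f : A → X` with `R·d(z₁,z₂)/l ≤ d(f z₁, f z₂) ≤ l·R·d(z₁,z₂)` for all `z₁, z₂ ∈ A`. -/
def IsLocSelfSimilar (X : Type*) [MetricSpace X] : Prop :=
  ∃ l : ℝ, 1 ≤ l ∧ ∃ R₀ : ℝ, 1 < R₀ ∧ ∀ R : ℝ, R₀ ≤ R →
    ∀ A : Set X, Metric.diam A ≤ min 1 (Metric.diam (Set.univ : Set X) / l) / R →
      ∃ f : A → X, ∀ z₁ z₂ : A,
        R * dist (z₁ : X) (z₂ : X) / l ≤ dist (f z₁) (f z₂) ∧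
          dist (f z₁) (f z₂) ≤ l * R * dist (z₁ : X) (z₂ : X)

/-- Every open cover of `X` has an open refinement, covering `X`, with multiplicity at most
`m + 1` (no point lies in more than `m + 1` of its members). -/
def CovDimLE (X : Type*) [TopologicalSpace X] (m : ℕ) : Prop :=
  ∀ 𝒜 : Set (Set X), (∀ A ∈ 𝒜, IsOpen A) → (∀ x : X, ∃ A ∈ 𝒜, x ∈ A) →
    ∃ ℬ : Set (Set X), (∀ B ∈ ℬ, IsOpen B) ∧ (∀ x : X, ∃ B ∈ ℬ, x ∈ B) ∧
      (∀ B ∈ ℬ, ∃ A ∈ 𝒜, B ⊆ A) ∧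
      (∀ (x : X) (s : Finset (Set X)), ↑s ⊆ ℬ → (∀ B ∈ s, x ∈ B) → s.card ≤ m + 1)

/-- The topological (covering) dimension of `X` is exactly `n`: `n` is the smallest integer
`m` such that every open cover admits an open refinement with multiplicity at most `m+1`. -/
def IsTopDimEq (X : Type*) [TopologicalSpace X] (n : ℕ) : Prop :=
  CovDimLE X n ∧ ∀ m : ℕ, CovDimLE X m → n ≤ m

/-- There is a `(l, a, b)`-bi-Hölder homeomorphism from `X` onto `Y`. -/
def BiHolderEquivTo (X : Type*) [MetricSpace X] (Y : Type*) [MetricSpace Y] : Prop :=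
  ∃ (l a b : ℝ) (f : X → Y), 0 < l ∧ 0 < a ∧ 0 < b ∧ Function.Surjective f ∧
    ∀ x y : X, (1 / l) * dist x y ^ a ≤ dist (f x) (f y) ∧
      dist (f x) (f y) ≤ l * dist x y ^ b

/-- The Hausdorff dimension of the metric space `Y` (as a whole). -/
noncomputable def dimHSpace (Y : Type*) [MetricSpace Y] : ℝ≥0∞ :=
  dimH (Set.univ : Set Y)

section PartOne
open MeasureTheory

/-- The set of radii such that the corresponding spheres indexed by `s` have a common point. -/
def BadRadii {Y : Type*} [MetricSpace Y] {k : ℕ} (x : Fin k → Y) (s : Finset (Fin k)) :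
    Set (Fin k → ℝ) := {r | ∃ y : Y, ∀ i ∈ s, r i = dist y (x i)}

theorem badRadii_closed {Y : Type*} [MetricSpace Y] [CompactSpace Y] {k : ℕ} (x : Fin k → Y)
    (s : Finset (Fin k)) : IsClosed (BadRadii x s) := by
  have h : IsClosed {p : (Fin k → ℝ) × Y | ∀ i ∈ s, p.1 i = dist p.2 (x i)} := by
    have : {p : (Fin k → ℝ) × Y | ∀ i ∈ s, p.1 i = dist p.2 (x i)} =
        ⋂ i ∈ s, {p : (Fin k → ℝ) × Y | p.1 i = dist p.2 (x i)} := by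
      ext p; simp
    rw [this]
    refine isClosed_biInter fun i _ => isClosed_eq ?_ ?_ <;> fun_prop
  have h2 := isClosedMap_fst_of_compactSpace _ h
  convert h2 using 1
  ext r
  simp [BadRadii]

theorem badRadii_null {Y : Type*} [MetricSpace Y] [MeasurableSpace Y] [BorelSpace Y]
    {k m : ℕ} (x : Fin k → Y)
    (s : Finset (Fin k)) (hs : s.card = m + 1)
    (h0 : μH[((m + 1 : ℕ) : ℝ)] (Set.univ : Set Y) = 0) : volume (BadRadii x s) = 0 := by
  classical
  obtain ⟨p, hp⟩ : ∃ p : Fin k → Prop, ∀ i, p i ↔ i ∈ s := ⟨fun i => i ∈ s, fun _ => Iff.rfl⟩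
  let F : Y → ({i // p i} → ℝ) := fun y i => dist y (x i)
  have hF : LipschitzWith 1 F := by
    refine LipschitzWith.of_dist_le_mul fun y z => ?_
    rw [dist_pi_le_iff (by positivity)]
    intro i
    simp only [F, NNReal.coe_one, one_mul]
    exact dist_dist_dist_le_left _ _ _
  have h1 : volume (F '' Set.univ) = 0 := by
    rw [← hausdorffMeasure_pi_real]
    have := hF.hausdorffMeasure_image_le (d := ((m + 1 : ℕ) : ℝ)) (by positivity) Set.univ
    rw [h0, mul_zero] at this
    have h2 : Fintype.card {i // p i} = m + 1 := by
      rw [Fintype.card_subtype, ← hs]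
      congr 1
      ext i; simp [hp]
    rw [h2]
    exact le_antisymm this bot_le
  have hmp := volume_preserving_piEquivPiSubtypeProd (fun _ : Fin k => ℝ) p
  have h3 : BadRadii x s ⊆ (MeasurableEquiv.piEquivPiSubtypeProd (fun _ : Fin k => ℝ) p) ⁻¹' ((F '' Set.univ) ×ˢ Set.univ) := by
    rintro r ⟨y, hy⟩
    refine ⟨⟨y, trivial, ?_⟩, trivial⟩
    funext i
    exact (hy i.1 ((hp _).1 i.2)).symm
  refine measure_mono_null h3 ?_
  rw [hmp.measure_preimage_equiv]
  show (volume.prod volume) _ = _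
  rw [Measure.prod_prod, h1, zero_mul]

theorem covDimLE_of_hausdorff_null {Y : Type*} [MetricSpace Y] [CompactSpace Y]
    [MeasurableSpace Y] [BorelSpace Y] (m : ℕ)
    (h0 : μH[((m + 1 : ℕ) : ℝ)] (Set.univ : Set Y) = 0) : CovDimLE Y m := by
  classical
  intro 𝒜 hA hcov
  obtain ⟨lam, hlam, hleb⟩ := lebesgue_number_lemma_of_metric_sUnion (s := (Set.univ : Set Y))
    isCompact_univ hA (fun x _ => by
      obtain ⟨A, hA, hx⟩ := hcov x
      exact ⟨A, hA, hx⟩)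
  obtain ⟨T, -, hTfin, hT⟩ := finite_cover_balls_of_compact (isCompact_univ (X := Y))
    (e := lam / 4) (by positivity)
  obtain ⟨k, x, hx⟩ : ∃ (k : ℕ) (x : Fin k → Y), Set.range x = T := by
    obtain ⟨k, e, he⟩ := hTfin.fin_embedding
    exact ⟨k, e, he⟩
  -- generic radii
  let Bad : Set (Fin k → ℝ) := ⋃ s ∈ {s : Finset (Fin k) | s.card = m + 1}, BadRadii x s
  have hBadc : IsClosed Bad := by
    refine Set.Finite.isClosed_biUnion (Set.toFinite _) fun s _ => badRadii_closed x s
  have hBad0 : volume Bad = 0 := by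
    refine (measure_biUnion_null_iff (Set.to_countable _)).2 fun s hs => badRadii_null x s hs h0
  have hbox : 0 < volume (Set.univ.pi fun _ : Fin k => Set.Ioo (lam / 4) (lam / 2)) := by
    rw [volume_pi_pi]
    simp only [Real.volume_Ioo]
    rw [pos_iff_ne_zero, Finset.prod_ne_zero_iff]
    intro i _
    simp
    linarith
  obtain ⟨r, hr, hrB⟩ : ∃ r ∈ (Set.univ.pi fun _ : Fin k => Set.Ioo (lam / 4) (lam / 2)),
      r ∉ Bad := by
    by_contra hcon
    push Not at hcon
    exact absurd (measure_mono_null hcon hBad0) hbox.ne'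
  obtain ⟨τ, hτ, hball⟩ := Metric.isOpen_iff.1 hBadc.isOpen_compl r hrB
  let τ' := min (τ / 2) (lam / 4)
  have hτ' : 0 < τ' := by positivity
  let V : Fin k → Set Y := fun i =>
    Metric.ball (x i) (r i + τ') \ ⋃ j ∈ Set.Iio i, Metric.closedBall (x j) (r j)
  refine ⟨Set.range V, ?_, ?_, ?_, ?_⟩
  · rintro _ ⟨i, rfl⟩
    refine Metric.isOpen_ball.sdiff ?_
    exact Set.Finite.isClosed_biUnion (Set.toFinite _) fun _ _ => Metric.isClosed_closedBall
  · intro y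
    have hne : ∃ i, y ∈ Metric.closedBall (x i) (r i) := by
      have := hT (Set.mem_univ y)
      rw [← hx] at this
      simp only [Set.mem_range, Set.iUnion_exists, Set.iUnion_iUnion_eq', Set.mem_iUnion] at this
      obtain ⟨i, hi⟩ := this
      refine ⟨i, ?_⟩
      have := (hr i trivial).1
      rw [Metric.mem_ball] at hi
      rw [Metric.mem_closedBall]; linarith
    obtain ⟨i, hi, hmin⟩ := WellFounded.has_min (wellFounded_lt (α := Fin k))
      {i | y ∈ Metric.closedBall (x i) (r i)} hne
    refine ⟨V i, ⟨i, rfl⟩, ?_, ?_⟩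
    · have : dist y (x i) ≤ r i := hi
      rw [Metric.mem_ball]; linarith
    · simp only [Set.mem_iUnion, not_exists]
      intro j hj hy
      exact hmin j hy hj
  · rintro _ ⟨i, rfl⟩
    obtain ⟨A, hA, hsub⟩ := hleb (x i) trivial
    refine ⟨A, hA, fun y hy => hsub ?_⟩
    have h1 := hy.1
    have h2 := (hr i trivial).2
    have h3 : τ' ≤ lam / 4 := min_le_right _ _
    rw [Metric.mem_ball] at h1 ⊢
    linarith
  · intro y s hs hy
    by_contra hcard
    push Not at hcard
    obtain ⟨B0, hB0⟩ : s.Nonempty := by rw [← Finset.card_pos]; omega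
    have : Nonempty (Fin k) := ⟨(hs hB0).choose⟩
    choose! g hg using fun B (hB : B ∈ s) => hs hB
    have hinj : Set.InjOn g s := fun a ha b hb hab => by
      rw [← hg a ha, ← hg b hb, hab]
    obtain ⟨I, hI, hIc⟩ := Finset.exists_subset_card_eq (s := s.image g) (n := m + 2) (by
      rw [Finset.card_image_of_injOn hinj]; omega)
    have hyI : ∀ i ∈ I, y ∈ V i := by
      intro i hi
      obtain ⟨B, hB, rfl⟩ := Finset.mem_image.1 (hI hi)
      rw [hg B hB]; exact hy B hB
    have hIne : I.Nonempty := by rw [← Finset.card_pos]; omega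
    let M := I.max' hIne
    have hM : M ∈ I := I.max'_mem hIne
    have hJc : (I.erase M).card = m + 1 := by rw [Finset.card_erase_of_mem hM]; omega
    let r' : Fin k → ℝ := fun i => if i ∈ I.erase M then dist y (x i) else r i
    have hr'1 : r' ∈ Bad := by
      refine Set.mem_biUnion (x := I.erase M) hJc ⟨y, fun i hi => ?_⟩
      simp only [r', if_pos hi]
    refine hball ?_ hr'1
    rw [Metric.mem_ball, dist_pi_lt_iff hτ]
    intro i
    by_cases hi : i ∈ I.erase M
    · simp only [r', if_pos hi]
      have hiI := Finset.mem_of_mem_erase hi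
      have hlt : i < M := lt_of_le_of_ne (I.le_max' i hiI) (Finset.ne_of_mem_erase hi)
      have h1 := (hyI i hiI).1
      have h2 := (hyI M hM).2
      simp only [Set.mem_iUnion, not_exists] at h2
      have h3 := h2 i hlt
      rw [Metric.mem_closedBall, not_le] at h3
      rw [Metric.mem_ball] at h1
      have h4 : τ' ≤ τ / 2 := min_le_left _ _
      rw [Real.dist_eq, abs_lt]; constructor <;> linarith
    · simp only [r', if_neg hi, dist_self]; exact hτ

theorem covDimLE_of_homeo {X Y : Type*} [TopologicalSpace X] [TopologicalSpace Y]
    (e : X ≃ₜ Y) (m : ℕ) (h : CovDimLE Y m) : CovDimLE X m := by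
  classical
  intro 𝒜 hA hcov
  obtain ⟨ℬ, hB, hBc, hBr, hBm⟩ := h ((fun A => e '' A) '' 𝒜)
    (by rintro _ ⟨A, hA', rfl⟩; exact e.isOpenMap _ (hA A hA'))
    (fun y => by
      obtain ⟨A, hA', hx⟩ := hcov (e.symm y)
      exact ⟨e '' A, ⟨A, hA', rfl⟩, ⟨_, hx, by simp⟩⟩)
  refine ⟨(fun B => e ⁻¹' B) '' ℬ, ?_, ?_, ?_, ?_⟩
  · rintro _ ⟨B, hB', rfl⟩; exact (hB B hB').preimage e.continuous
  · intro x
    obtain ⟨B, hB', hx⟩ := hBc (e x)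
    exact ⟨_, ⟨B, hB', rfl⟩, hx⟩
  · rintro _ ⟨B, hB', rfl⟩
    obtain ⟨_, ⟨A, hA', rfl⟩, hs⟩ := hBr B hB'
    refine ⟨A, hA', fun x hx => ?_⟩
    obtain ⟨z, hz, hzx⟩ := hs hx
    rwa [← e.injective hzx]
  · intro x s hs hx
    have hinj : Function.Injective (fun A : Set X => e '' A) := e.injective.image_injective
    rw [← Finset.card_image_of_injective s hinj]
    refine hBm (e x) _ ?_ ?_
    · intro C hC
      obtain ⟨A, hA', rfl⟩ := Finset.mem_image.1 (Finset.mem_coe.1 hC)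
      obtain ⟨B, hB', rfl⟩ := hs hA'
      simpa [Set.image_preimage_eq _ e.surjective] using hB'
    · intro C hC
      obtain ⟨A, hA', rfl⟩ := Finset.mem_image.1 hC
      exact ⟨x, hx A hA', rfl⟩

theorem part_one {X : Type} [MetricSpace X] [CompactSpace X] (n : ℕ) (hdim : IsTopDimEq X n)
    (Y : Type) [MetricSpace Y] (h : BiHolderEquivTo X Y) : (n : ℝ≥0∞) ≤ dimHSpace Y := by
  rcases n with _ | m
  · simp
  by_contra hlt
  push Not at hlt
  obtain ⟨l, a, b, f, hl, ha, hb, hsurj, hf⟩ := h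
  have hinj : Function.Injective f := by
    intro x y hxy
    have h1 := (hf x y).1
    rw [hxy, dist_self] at h1
    by_contra hne
    have h2 : 0 < dist x y := dist_pos.2 hne
    have : 0 < (1 / l) * dist x y ^ a := by positivity
    linarith
  have hcont : Continuous f := by
    rw [continuous_iff_continuousAt]
    intro x
    rw [ContinuousAt, tendsto_iff_dist_tendsto_zero]
    have h1 : Filter.Tendsto (fun y => l * dist y x ^ b) (nhds x) (nhds 0) := by
      have : Filter.Tendsto (fun y => l * dist y x ^ b) (nhds x) (nhds (l * dist x x ^ b)) := by
        refine Filter.Tendsto.const_mul l ?_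
        refine Filter.Tendsto.rpow_const ?_ (Or.inr hb.le)
        exact (continuous_id.dist continuous_const).tendsto x
      simpa [Real.zero_rpow hb.ne'] using this
    exact squeeze_zero (fun _ => dist_nonneg) (fun y => (hf y x).2) h1
  let e : X ≃ₜ Y := Continuous.homeoOfEquivCompactToT2 (f := Equiv.ofBijective f ⟨hinj, hsurj⟩) hcont
  have : CompactSpace Y := e.compactSpace
  let : MeasurableSpace Y := borel Y
  have : BorelSpace Y := ⟨rfl⟩
  have h0 : μH[((m + 1 : ℕ) : ℝ)] (Set.univ : Set Y) = 0 := by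
    have := hausdorffMeasure_of_dimH_lt (X := Y) (s := Set.univ) (d := ((m + 1 : ℕ) : NNReal))
      (by simpa [dimHSpace] using hlt)
    simpa using this
  have := hdim.2 m (covDimLE_of_homeo e m (covDimLE_of_hausdorff_null m h0))
  omega

end PartOne

section Capacity

/-- One step of a `δ`-chain inside `S`. -/
def ChStep {X : Type*} [MetricSpace X] (S : Set X) (δ : ℝ) (x y : X) : Prop :=
  x ∈ S ∧ y ∈ S ∧ dist x y < δ

/-- `x` and `y` are joined by a `δ`-chain inside `S`. -/
def Chain {X : Type*} [MetricSpace X] (S : Set X) (δ : ℝ) : X → X → Prop :=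
  Relation.ReflTransGen (ChStep S δ)

/-- All `δ`-chains of `S` have displacement at most `D`. -/
def SmallSet {X : Type*} [MetricSpace X] (S : Set X) (δ D : ℝ) : Prop :=
  ∀ x y, Chain S δ x y → dist x y ≤ D

/-- `Z` is covered by `n + 1` sets whose `δ`-chains have displacement at most `D`. -/
def ColCov {X : Type*} [MetricSpace X] (n : ℕ) (Z : Set X) (δ D : ℝ) : Prop :=
  ∃ S : Fin (n + 1) → Set X, (∀ z ∈ Z, ∃ c, z ∈ S c) ∧ ∀ c, SmallSet (S c) δ D

theorem Chain.symm {X : Type*} [MetricSpace X] {S : Set X} {δ : ℝ} {x y : X}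
    (h : Chain S δ x y) : Chain S δ y x := by
  induction h with
  | refl => exact Relation.ReflTransGen.refl
  | tail _ h2 ih => exact Relation.ReflTransGen.head ⟨h2.2.1, h2.1, by rw [dist_comm]; exact h2.2.2⟩ ih

theorem Chain.mem {X : Type*} [MetricSpace X] {S : Set X} {δ : ℝ} {x y : X}
    (h : Chain S δ x y) (hx : x ∈ S) : y ∈ S := by
  induction h with
  | refl => exact hx
  | tail _ h2 _ => exact h2.2.1

theorem Chain.mono {X : Type*} [MetricSpace X] {S : Set X} {δ δ' : ℝ} (hd : δ ≤ δ') {x y : X}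
    (h : Chain S δ x y) : Chain S δ' x y :=
  Relation.ReflTransGen.mono (r := ChStep S δ) (fun _ _ h => ⟨h.1, h.2.1, h.2.2.trans_le hd⟩) _ _ h

theorem smallSet_union {X : Type*} [MetricSpace X] {S T : Set X} {δ D τ D' : ℝ}
    (hδ : 0 < δ) (hD : 0 ≤ D) (hD' : 0 ≤ D')
    (hS : SmallSet S δ D) (hT : SmallSet T τ D') (hτ : D + 2 * δ ≤ τ) :
    SmallSet (S ∪ T) δ (D' + 2 * D + 2 * δ) := by
  have key : ∀ x y, x ∈ S ∪ T → Chain (S ∪ T) δ x y →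
      (y ∈ S ∧ Chain S δ x y) ∨ ∃ t t', t' ∈ T ∧ Chain T τ t t' ∧ dist x t ≤ D + δ ∧
        (t' = y ∨ ∃ z, z ∈ S ∧ dist t' z < δ ∧ Chain S δ z y) := by
    intro x y hx h
    induction h with
    | refl =>
      rcases hx with hx | hx
      · exact Or.inl ⟨hx, Relation.ReflTransGen.refl⟩
      · refine Or.inr ⟨x, x, hx, Relation.ReflTransGen.refl, ?_, Or.inl rfl⟩
        rw [dist_self]; positivity
    | @tail y y' _ h2 ih =>
      obtain ⟨hy, hy', hd⟩ := h2
      rcases ih with ⟨hyS, hch⟩ | ⟨t, t', ht', hch, hdt, hend⟩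
      · rcases hy' with hy' | hy'
        · exact Or.inl ⟨hy', hch.tail ⟨hyS, hy', hd⟩⟩
        · refine Or.inr ⟨y', y', hy', Relation.ReflTransGen.refl, ?_, Or.inl rfl⟩
          have h3 := hS x y hch
          have h4 := dist_triangle x y y'
          linarith
      · rcases hend with rfl | ⟨z, hz, hdz, hzy⟩
        · rcases hy' with hy' | hy'
          · exact Or.inr ⟨t, t', ht', hch, hdt, Or.inr ⟨y', hy', hd, Relation.ReflTransGen.refl⟩⟩
          · refine Or.inr ⟨t, y', hy', hch.tail ⟨ht', hy', ?_⟩, hdt, Or.inl rfl⟩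
            linarith
        · have hyS := hzy.mem hz
          rcases hy' with hy' | hy'
          · exact Or.inr ⟨t, t', ht', hch, hdt, Or.inr ⟨z, hz, hdz, hzy.tail ⟨hyS, hy', hd⟩⟩⟩
          · refine Or.inr ⟨t, y', hy', hch.tail ⟨ht', hy', ?_⟩, hdt, Or.inl rfl⟩
            have h3 := hS z y hzy
            have h4 := dist_triangle4 t' z y y'
            linarith
  intro x y h
  rcases Relation.ReflTransGen.cases_head h with rfl | ⟨w, hw, _⟩
  · rw [dist_self]; positivity
  rcases key x y hw.1 h with ⟨_, hch⟩ | ⟨t, t', _, hch, hdt, hend⟩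
  · have := hS x y hch
    linarith
  · have h1 := hT t t' hch
    have h2 : dist t' y ≤ D + δ := by
      rcases hend with rfl | ⟨z, _, hdz, hzy⟩
      · rw [dist_self]; positivity
      · have h3 := hS z y hzy
        have h4 := dist_triangle t' z y
        linarith
    have h4 := dist_triangle4 x t t' y
    linarith

theorem colCov_union {X : Type*} [MetricSpace X] {n : ℕ} {Z Z' : Set X} {δ D τ D' : ℝ}
    (hδ : 0 < δ) (hD : 0 ≤ D) (hD' : 0 ≤ D')
    (hZ : ColCov n Z δ D) (hZ' : ColCov n Z' τ D') (hτ : D + 2 * δ ≤ τ) :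
    ColCov n (Z ∪ Z') δ (D' + 2 * D + 2 * δ) := by
  obtain ⟨S, hS1, hS2⟩ := hZ
  obtain ⟨T, hT1, hT2⟩ := hZ'
  refine ⟨fun c => S c ∪ T c, ?_, fun c => smallSet_union hδ hD hD' (hS2 c) (hT2 c) hτ⟩
  rintro z (hz | hz)
  · obtain ⟨c, hc⟩ := hS1 z hz
    exact ⟨c, Or.inl hc⟩
  · obtain ⟨c, hc⟩ := hT1 z hz
    exact ⟨c, Or.inr hc⟩

theorem ColCov.mono {X : Type*} [MetricSpace X] {n : ℕ} {Z : Set X} {δ D δ' D' : ℝ}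
    (h : ColCov n Z δ D) (h1 : δ' ≤ δ) (h2 : D ≤ D') : ColCov n Z δ' D' := by
  obtain ⟨S, hS1, hS2⟩ := h
  exact ⟨S, hS1, fun c x y hxy => (hS2 c x y (hxy.mono h1)).trans h2⟩

/-- Covering dimension `≤ n` gives coloured covers of small mesh of the whole space. -/
theorem colCov_univ {X : Type*} [MetricSpace X] [CompactSpace X] {n : ℕ} (h : CovDimLE X n)
    {D : ℝ} (hD : 0 < D) : ∃ δ > 0, ColCov n (Set.univ : Set X) δ D := by
  classical
  obtain ⟨ℬ, hB, hBc, hBr, hBm⟩ := h (Set.range fun x : X => Metric.ball x (D / 2))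
    (by rintro _ ⟨x, rfl⟩; exact Metric.isOpen_ball)
    (fun x => ⟨_, ⟨x, rfl⟩, Metric.mem_ball_self (by positivity)⟩)
  have hdiam : ∀ B ∈ ℬ, ∀ x ∈ B, ∀ y ∈ B, dist x y ≤ D := by
    intro B hB x hx y hy
    obtain ⟨_, ⟨z, rfl⟩, hs⟩ := hBr B hB
    have h1 : dist x z < D / 2 := hs hx
    have h2 : dist y z < D / 2 := hs hy
    have h3 := dist_triangle_right x y z
    linarith
  by_cases huniv : Set.univ ∈ ℬ
  · refine ⟨1, one_pos, fun _ => Set.univ, fun z _ => ⟨0, trivial⟩, fun c x y _ => ?_⟩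
    exact hdiam _ huniv x trivial y trivial
  obtain ⟨lam, hlam, hleb⟩ := lebesgue_number_lemma_of_metric_sUnion (s := (Set.univ : Set X))
    isCompact_univ hB (fun x _ => by
      obtain ⟨A, hA, hx⟩ := hBc x
      exact ⟨A, hA, hx⟩)
  have hne : ∀ B ∈ ℬ, (Bᶜ).Nonempty := by
    intro B hB
    rw [Set.nonempty_compl]
    rintro rfl
    exact huniv hB
  let φ : Set X → X → ℝ := fun B x => Metric.infDist x Bᶜ
  have hφmem : ∀ B ∈ ℬ, ∀ x, 0 < φ B x → x ∈ B := by
    intro B hB x hx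
    by_contra hxB
    have : Metric.infDist x Bᶜ = 0 := Metric.infDist_zero_of_mem hxB
    simp only [φ, this, lt_self_iff_false] at hx
  have hφlip : ∀ B x y, φ B x ≤ φ B y + dist x y := fun B x y => Metric.infDist_le_infDist_add_dist
  have hφbig : ∀ x, ∃ B ∈ ℬ, lam ≤ φ B x := by
    intro x
    obtain ⟨B, hB', hs⟩ := hleb x trivial
    refine ⟨B, hB', ?_⟩
    rw [Metric.le_infDist (hne B hB')]
    intro y hy
    by_contra hlt
    push Not at hlt
    exact hy (hs (by rw [Metric.mem_ball, dist_comm]; exact hlt))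
  let g : ℝ := lam / (n + 1)
  have hg : 0 < g := by positivity
  have hgn : g * (n + 1) = lam := by simp only [g]; field_simp
  let S : Fin (n + 1) → Set X := fun i =>
    {x | ∀ B ∈ ℬ, ¬ (g * (i : ℕ) < φ B x ∧ φ B x < g * ((i : ℕ) + 1))}
  refine ⟨g, hg, S, ?_, ?_⟩
  · intro x _
    by_contra hcon
    push Not at hcon
    have hcon' : ∀ i : Fin (n + 1), ∃ B ∈ ℬ, g * (i : ℕ) < φ B x ∧ φ B x < g * ((i : ℕ) + 1) := by
      intro i
      have := hcon i
      simp only [S, Set.mem_ofPred_eq, not_forall, not_not] at this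
      obtain ⟨B, hB, h⟩ := this
      exact ⟨B, hB, h⟩
    choose b hb hb1 hb2 using hcon'
    obtain ⟨B0, hB0, hB0l⟩ := hφbig x
    have hinj : Function.Injective b := by
      have hlt : ∀ i j : Fin (n + 1), i < j → b i ≠ b j := by
        intro i j hij heq
        have h1 := hb2 i
        have h2 := hb1 j
        rw [heq] at h1
        have h3 : ((i : ℕ) : ℝ) + 1 ≤ (j : ℕ) := by exact_mod_cast hij
        nlinarith
      intro i j hij
      rcases lt_trichotomy i j with h | h | h
      · exact absurd hij (hlt i j h)
      · exact h
      · exact absurd hij.symm (hlt j i h)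
    have hB0n : B0 ∉ Finset.univ.image b := by
      intro hmem
      obtain ⟨i, _, rfl⟩ := Finset.mem_image.1 hmem
      have h1 := hb2 i
      have h3 : ((i : ℕ) : ℝ) + 1 ≤ n + 1 := by exact_mod_cast i.2
      nlinarith
    have hcard := hBm x (insert B0 (Finset.univ.image b)) (by
      intro B hB
      simp only [Finset.coe_insert, Finset.coe_image, Finset.coe_univ, Set.image_univ,
        Set.mem_insert_iff, Set.mem_range] at hB
      rcases hB with rfl | ⟨i, rfl⟩
      · exact hB0
      · exact hb i) (by
      intro B hB
      rcases Finset.mem_insert.1 hB with rfl | hB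
      · exact hφmem _ hB0 x (hlam.trans_le hB0l)
      · obtain ⟨i, _, rfl⟩ := Finset.mem_image.1 hB
        exact hφmem _ (hb i) x (lt_of_le_of_lt (by positivity) (hb1 i)))
    rw [Finset.card_insert_of_notMem hB0n, Finset.card_image_of_injective _ hinj,
      Finset.card_univ, Fintype.card_fin] at hcard
    omega
  · intro c x y hxy
    obtain ⟨B0, hB0, hB0l⟩ := hφbig x
    have h3 : ((c : ℕ) : ℝ) + 1 ≤ n + 1 := by exact_mod_cast c.2
    have hx0 : g * ((c : ℕ) + 1) ≤ φ B0 x := by nlinarith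
    have hy0 : g * ((c : ℕ) + 1) ≤ φ B0 y := by
      induction hxy with
      | refl => exact hx0
      | @tail y y' _ hs ih =>
        obtain ⟨_, hy', hd⟩ := hs
        have h1 := hφlip B0 y y'
        have h2 := hy' B0 hB0
        by_contra hlt
        exact h2 ⟨by nlinarith, not_le.1 hlt⟩
    have hpos : 0 < g * ((c : ℕ) + 1) := by positivity
    exact hdiam B0 hB0 x (hφmem _ hB0 x (hpos.trans_le hx0)) y (hφmem _ hB0 y (hpos.trans_le hy0))

end Capacity

section SelfSim

/-- Normalised form of local self-similarity. -/
def Scal (X : Type*) [MetricSpace X] (l a₀ : ℝ) : Prop :=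
  ∀ a : ℝ, 0 < a → a ≤ a₀ → ∀ A : Set X, (∀ x ∈ A, ∀ y ∈ A, dist x y ≤ a) →
    ∃ f : X → X, ∀ x ∈ A, ∀ y ∈ A, dist x y ≤ l * a * dist (f x) (f y) ∧
      dist (f x) (f y) ≤ l / a * dist x y

theorem exists_scal {X : Type*} [MetricSpace X] [CompactSpace X] (h : IsLocSelfSimilar X)
    (hd : 0 < Metric.diam (Set.univ : Set X)) : ∃ l a₀ : ℝ, 0 < l ∧ 0 < a₀ ∧ Scal X l a₀ := by
  classical
  obtain ⟨l, hl, R₀, hR₀, hss⟩ := h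
  have hl0 : 0 < l := by linarith
  set Λ := min 1 (Metric.diam (Set.univ : Set X) / l) with hΛ
  have hΛ0 : 0 < Λ := by positivity
  have hR0 : 0 < R₀ := by linarith
  refine ⟨max (l / Λ) (l * Λ), Λ / R₀, by positivity, by positivity, ?_⟩
  intro a ha ha0 A hA
  have hdA : Metric.diam A ≤ a := Metric.diam_le_of_forall_dist_le ha.le hA
  obtain ⟨f, hf⟩ := hss (Λ / a) (by rw [le_div_iff₀ ha]; rw [le_div_iff₀ hR0] at ha0; linarith) A
    (by
      have : Λ / (Λ / a) = a := by field_simp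
      rw [this]; exact hdA)
  refine ⟨fun x => if hx : x ∈ A then f ⟨x, hx⟩ else x, fun x hx y hy => ?_⟩
  simp only [dif_pos hx, dif_pos hy]
  obtain ⟨h1, h2⟩ := hf ⟨x, hx⟩ ⟨y, hy⟩
  constructor
  · have h3 : dist x y ≤ l / Λ * a * dist (f ⟨x, hx⟩) (f ⟨y, hy⟩) := by
      rw [div_mul_eq_mul_div, div_le_iff₀ hl0, div_le_iff₀ ha] at h1
      rw [div_mul_eq_mul_div, div_mul_eq_mul_div, le_div_iff₀ hΛ0]
      simp only at h1
      linarith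
    refine h3.trans ?_
    gcongr
    exact le_max_left _ _
  · refine h2.trans ?_
    rw [← mul_div_assoc]
    gcongr
    exact le_max_right _ _

/-- Finite codes of small mesh. -/
theorem exists_code {X : Type*} [MetricSpace X] [CompactSpace X] {e : ℝ} (he : 0 < e) :
    ∃ (N : ℕ) (code : X → Fin N), ∀ x y, code x = code y → dist x y ≤ e := by
  obtain ⟨T, -, hTfin, hT⟩ := finite_cover_balls_of_compact (isCompact_univ (X := X))
    (e := e / 2) (by positivity)
  obtain ⟨N, p, hp⟩ := hTfin.fin_embedding
  have : ∀ x, ∃ i, dist x (p i) < e / 2 := by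
    intro x
    have := hT (Set.mem_univ x)
    rw [← hp] at this
    simpa using this
  choose code hcode using this
  refine ⟨N, code, fun x y hxy => ?_⟩
  have h1 := hcode x
  have h2 := hcode y
  rw [← hxy] at h2
  have h3 := dist_triangle_right x y (p (code x))
  linarith

theorem exists_split {X : Type*} [MetricSpace X] [CompactSpace X] {l a₀ : ℝ} (hl : 0 < l)
    (h : Scal X l a₀) {ε : ℝ} (hε : 0 < ε) : ∃ B : ℕ, ∀ a, 0 < a → a ≤ a₀ → ∀ A : Set X,
      (∀ x ∈ A, ∀ y ∈ A, dist x y ≤ a) →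
      ∃ code : X → Fin B, ∀ x ∈ A, ∀ y ∈ A, code x = code y → dist x y ≤ ε * a := by
  obtain ⟨B, code, hcode⟩ := exists_code (X := X) (e := ε / l) (by positivity)
  refine ⟨B, fun a ha ha0 A hA => ?_⟩
  obtain ⟨f, hf⟩ := h a ha ha0 A hA
  refine ⟨code ∘ f, fun x hx y hy hxy => (hf x hx y hy).1.trans ?_⟩
  have h1 := hcode _ _ hxy
  calc l * a * dist (f x) (f y) ≤ l * a * (ε / l) := by gcongr
    _ = ε * a := by field_simp

/-- Polynomial growth of covering numbers. -/
theorem exists_codes {X : Type*} [MetricSpace X] [CompactSpace X] {l a₀ : ℝ} (hl : 0 < l)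
    (ha₀ : 0 < a₀) (h : Scal X l a₀) {ε : ℝ} (hε : 0 < ε) (hε1 : ε ≤ 1) {e : ℝ} (he : 0 < e) :
    ∃ C B : ℕ, ∀ k : ℕ, ∃ code : X → Fin (C * B ^ k),
      ∀ x y, code x = code y → dist x y ≤ e * ε ^ k := by
  obtain ⟨B, hB⟩ := exists_split hl h hε
  obtain ⟨C, code0, hcode0⟩ := exists_code (X := X) (e := min e a₀) (by positivity)
  have key : ∀ k : ℕ, ∃ code : X → Fin (C * B ^ k),
      ∀ x y, code x = code y → dist x y ≤ (min e a₀) * ε ^ k := by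
    intro k
    induction k with
    | zero => 
      refine ⟨fun x => Fin.cast (by simp) (code0 x), fun x y hxy => ?_⟩
      simpa using hcode0 x y (Fin.cast_injective _ hxy)
    | succ k ih =>
      obtain ⟨code, hcode⟩ := ih
      have hpos : 0 < min e a₀ * ε ^ k := by positivity
      have hle : min e a₀ * ε ^ k ≤ a₀ := by
        calc min e a₀ * ε ^ k ≤ a₀ * 1 := by
              gcongr
              · exact min_le_right _ _
              · exact pow_le_one₀ hε.le hε1
          _ = a₀ := mul_one _
      have := fun i => hB _ hpos hle {x | code x = i} (fun x hx y hy => hcode x y (by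
        simp only [Set.mem_ofPred_eq] at hx hy; rw [hx, hy]))
      choose c' hc' using this
      refine ⟨fun x => Fin.cast (by rw [pow_succ, mul_assoc]) (finProdFinEquiv (code x, c' (code x) x)),
        fun x y hxy => ?_⟩
      have h1 : (code x, c' (code x) x) = (code y, c' (code y) y) := by
        apply finProdFinEquiv.injective
        exact Fin.cast_injective _ hxy
      have h2 : code x = code y := congrArg Prod.fst h1
      have h3 : c' (code x) x = c' (code y) y := congrArg Prod.snd h1
      have h4 := hc' (code x) x rfl y h2.symm (by rw [h3, h2])
      calc dist x y ≤ ε * (min e a₀ * ε ^ k) := h4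
        _ = _ := by ring
  refine ⟨C, B, fun k => ?_⟩
  obtain ⟨code, hcode⟩ := key k
  refine ⟨code, fun x y hxy => (hcode x y hxy).trans ?_⟩
  gcongr
  exact min_le_left _ _

theorem colCov_pieces {X : Type*} [MetricSpace X] [CompactSpace X] {l a₀ : ℝ} (hl : 0 < l)
    (h : Scal X l a₀) {n : ℕ} (hn : CovDimLE X n) {D : ℝ} (hD : 0 < D) :
    ∃ δ > 0, ∀ r, 0 < r → 2 * r ≤ a₀ → ∀ T : Set X,
      (∀ t ∈ T, ∀ t' ∈ T, t ≠ t' → 4 * r < dist t t') →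
      ColCov n (⋃ t ∈ T, Metric.closedBall t r) (δ * r) (D * r) := by
  obtain ⟨δ₀, hδ₀, S₀, hS₀c, hS₀⟩ := colCov_univ hn (D := D / (2 * l)) (by positivity)
  refine ⟨min 2 (2 * δ₀ / l), by positivity, fun r hr hra T hT => ?_⟩
  have hball : ∀ t : X, ∀ x ∈ Metric.closedBall t r, ∀ y ∈ Metric.closedBall t r,
      dist x y ≤ 2 * r := by
    intro t x hx y hy
    rw [Metric.mem_closedBall] at hx hy
    have := dist_triangle_right x y t
    linarith
  choose f hf using fun t : X => h (2 * r) (by positivity) hra (Metric.closedBall t r) (hball t)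
  refine ⟨fun c => {x | ∃ t ∈ T, x ∈ Metric.closedBall t r ∧ f t x ∈ S₀ c}, ?_, ?_⟩
  · intro z hz
    simp only [Set.mem_iUnion] at hz
    obtain ⟨t, ht, hz⟩ := hz
    obtain ⟨c, hc⟩ := hS₀c (f t z) trivial
    exact ⟨c, t, ht, hz, hc⟩
  · intro c x y hxy
    have hcase := Relation.ReflTransGen.cases_head hxy
    rcases hcase with rfl | ⟨w, hw, hwy⟩
    · rw [dist_self]; positivity
    obtain ⟨t, ht, hxt, hxc⟩ := hw.1
    have key : y ∈ Metric.closedBall t r ∧ f t y ∈ S₀ c ∧ Chain (S₀ c) δ₀ (f t x) (f t y) := by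
      clear hw hwy
      induction hxy with
      | refl => exact ⟨hxt, hxc, Relation.ReflTransGen.refl⟩
      | @tail y y' _ hs ih =>
        obtain ⟨hyt, hyc, hch⟩ := ih
        obtain ⟨-, ⟨t', ht', hyt', hyc'⟩, hd⟩ := hs
        have hd2 : dist y y' < 2 * r := hd.trans_le (by gcongr; exact min_le_left _ _)
        have htt : t' = t := by
          by_contra hne
          have h1 := hT t' ht' t ht hne
          rw [Metric.mem_closedBall] at hyt hyt'
          have h2 := dist_triangle4 t' y' y t
          rw [dist_comm t' y', dist_comm y' y] at h2
          linarith
        subst htt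
        refine ⟨hyt', hyc', hch.tail ⟨hyc, hyc', ?_⟩⟩
        have h1 := (hf t' y hyt y' hyt').2
        refine h1.trans_lt ?_
        have h3 : dist y y' < 2 * δ₀ / l * r := hd.trans_le (by gcongr; exact min_le_right _ _)
        calc l / (2 * r) * dist y y' < l / (2 * r) * (2 * δ₀ / l * r) := by gcongr
          _ = δ₀ := by field_simp
    have h1 := hS₀ c _ _ key.2.2
    calc dist x y ≤ l * (2 * r) * dist (f t x) (f t y) := (hf t x hxt y key.1).1
      _ ≤ l * (2 * r) * (D / (2 * l)) := by gcongr
      _ = D * r := by field_simp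

theorem colCov_many {X : Type*} [MetricSpace X] [CompactSpace X] {l a₀ : ℝ} (hl : 0 < l)
    (h : Scal X l a₀) {n : ℕ} (hn : CovDimLE X n) (M : ℕ) : ∀ {D : ℝ} (_ : 0 < D),
    ∃ δ > 0, ∀ r, 0 < r → 2 * r ≤ a₀ → ∀ T : ℕ → Set X,
      (∀ i, ∀ t ∈ T i, ∀ t' ∈ T i, t ≠ t' → 4 * r < dist t t') →
      ColCov n (⋃ i ∈ Set.Iio M, ⋃ t ∈ T i, Metric.closedBall t r) (δ * r) (D * r) := by
  induction M with
  | zero =>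
    intro D hD
    refine ⟨1, one_pos, fun r hr _ T _ => ⟨fun _ => ∅, ?_, ?_⟩⟩
    · intro z hz
      simp at hz
    · intro c x y hxy
      rcases Relation.ReflTransGen.cases_head hxy with rfl | ⟨w, hw, _⟩
      · rw [dist_self]; positivity
      · exact absurd hw.1 (by simp)
  | succ M ih =>
    intro D hD
    obtain ⟨τ, hτ, hcoarse⟩ := ih (D := D / 2) (by positivity)
    obtain ⟨δ₁, hδ₁, hfine⟩ := colCov_pieces hl h hn (D := min (τ / 2) (D / 8)) (by positivity)
    refine ⟨min δ₁ (min (τ / 4) (D / 8)), by positivity, fun r hr hra T hT => ?_⟩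
    have h1 := hcoarse r hr hra T hT
    have h2 := hfine r hr hra (T M) (hT M)
    set D₁ := min (τ / 2) (D / 8)
    set δ := min δ₁ (min (τ / 4) (D / 8))
    have e1 : D₁ ≤ τ / 2 := min_le_left _ _
    have e2 : D₁ ≤ D / 8 := min_le_right _ _
    have e3 : δ ≤ τ / 4 := (min_le_right _ _).trans (min_le_left _ _)
    have e4 : δ ≤ D / 8 := (min_le_right _ _).trans (min_le_right _ _)
    have e5 : δ ≤ δ₁ := min_le_left _ _
    have e0 : 0 < D₁ := by positivity
    have e6 : 0 < δ := by positivity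
    have h3 := colCov_union (by positivity) (by positivity) (by positivity)
      (h2.mono (δ' := δ * r) (by gcongr) le_rfl) h1 (by nlinarith)
    refine ColCov.mono (?_ : ColCov n _ (δ * r) _) le_rfl
      (?_ : D / 2 * r + 2 * (D₁ * r) + 2 * (δ * r) ≤ D * r)
    · convert h3 using 1
      ext z
      simp only [Set.mem_iUnion, Set.mem_Iio, Set.mem_union]
      constructor
      · rintro ⟨i, hi, hz⟩
        rcases Nat.lt_succ_iff_lt_or_eq.1 hi with hi | rfl
        · exact Or.inr ⟨i, hi, hz⟩
        · exact Or.inl hz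
      · rintro (hz | ⟨i, hi, hz⟩)
        · exact ⟨M, by omega, hz⟩
        · exact ⟨i, by omega, hz⟩
    · nlinarith

theorem exists_net {X : Type*} [MetricSpace X] (F : Finset X) {r : ℝ} (hr : 0 < r) :
    ∃ T : Finset X, (∀ t ∈ T, ∀ t' ∈ T, t ≠ t' → r ≤ dist t t') ∧
      ∀ x ∈ F, ∃ t ∈ T, dist x t < r := by
  classical
  induction F using Finset.induction_on with
  | empty => exact ⟨∅, by simp, by simp⟩
  | insert a F _ ih =>
    obtain ⟨T, hT1, hT2⟩ := ih
    by_cases ha : ∃ t ∈ T, dist a t < r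
    · refine ⟨T, hT1, fun x hx => ?_⟩
      rcases Finset.mem_insert.1 hx with rfl | hx
      · exact ha
      · exact hT2 x hx
    · push Not at ha
      refine ⟨insert a T, ?_, ?_⟩
      · intro t ht t' ht' hne
        rcases Finset.mem_insert.1 ht with rfl | htF <;> rcases Finset.mem_insert.1 ht' with rfl | htF'
        · exact absurd rfl hne
        · exact ha _ htF'
        · rw [dist_comm]; exact ha _ htF
        · exact hT1 t htF t' htF' hne
      · intro x hx
        rcases Finset.mem_insert.1 hx with rfl | hx
        · exact ⟨x, Finset.mem_insert_self _ _, by rwa [dist_self]⟩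
        · obtain ⟨t, ht, h⟩ := hT2 x hx
          exact ⟨t, Finset.mem_insert_of_mem ht, h⟩

open Classical in
theorem exists_coloring {X : Type*} [MetricSpace X] (T : Finset X) (ρ : ℝ) (B : ℕ)
    (hB : ∀ t ∈ T, (T.filter fun t' => dist t t' ≤ ρ).card ≤ B) :
    ∃ c : X → ℕ, (∀ t ∈ T, c t < B + 1) ∧ ∀ t ∈ T, ∀ t' ∈ T, t ≠ t' → c t = c t' → ρ < dist t t' := by
  have key : ∀ F ⊆ T, ∃ c : X → ℕ, (∀ t ∈ F, c t < B + 1) ∧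
      ∀ t ∈ F, ∀ t' ∈ F, t ≠ t' → c t = c t' → ρ < dist t t' := by
    intro F
    induction F using Finset.induction_on with
    | empty => intro _; exact ⟨fun _ => 0, by simp, by simp⟩
    | insert a F haF ih =>
      intro hF
      obtain ⟨c, hc1, hc2⟩ := ih ((Finset.subset_insert _ _).trans hF)
      have haT : a ∈ T := hF (Finset.mem_insert_self _ _)
      obtain ⟨k, hk, hkn⟩ : ∃ k ∈ Finset.range (B + 1),
          k ∉ (T.filter fun t' => dist a t' ≤ ρ).image c := by
        by_contra hcon
        push Not at hcon
        have h1 := Finset.card_le_card hcon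
        rw [Finset.card_range] at h1
        have h2 := (Finset.card_image_le (s := T.filter fun t' => dist a t' ≤ ρ) (f := c))
        have h3 := hB a haT
        omega
      have hnew : ∀ t ∈ F, c t = k → ρ < dist a t := by
        intro t ht hct
        by_contra hle
        push Not at hle
        exact hkn (Finset.mem_image.2 ⟨t, Finset.mem_filter.2
          ⟨hF (Finset.mem_insert_of_mem ht), hle⟩, hct⟩)
      have hne : ∀ t ∈ F, t ≠ a := fun t ht h => haF (h ▸ ht)
      refine ⟨Function.update c a k, ?_, ?_⟩
      · intro t ht
        rcases Finset.mem_insert.1 ht with rfl | ht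
        · simpa using hk
        · rw [Function.update_of_ne (hne t ht)]; exact hc1 t ht
      · intro t ht t' ht' htt
        rcases Finset.mem_insert.1 ht with rfl | htF <;> rcases Finset.mem_insert.1 ht' with rfl | htF'
        · exact absurd rfl htt
        · rw [Function.update_self, Function.update_of_ne (hne t' htF')]
          exact fun h => hnew t' htF' h.symm
        · rw [Function.update_self, Function.update_of_ne (hne t htF), dist_comm]
          exact fun h => hnew t htF h
        · rw [Function.update_of_ne (hne t htF), Function.update_of_ne (hne t' htF')]
          exact hc2 t htF t' htF' htt
  exact key T subset_rfl

/-- Capacity dimension at most `n`. -/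
theorem capacity {X : Type*} [MetricSpace X] [CompactSpace X] {l a₀ : ℝ} (hl : 0 < l)
    (h : Scal X l a₀) {n : ℕ} (hn : CovDimLE X n) :
    ∃ δ > 0, ∀ r, 0 < r → 8 * r ≤ a₀ → ColCov n (Set.univ : Set X) (δ * r) r := by
  classical
  obtain ⟨B, hB⟩ := exists_split hl h (ε := 1 / 32) (by norm_num)
  obtain ⟨δ, hδ, hmany⟩ := colCov_many hl h hn (B + 1) one_pos
  refine ⟨δ, hδ, fun r hr hra => ?_⟩
  obtain ⟨F, -, hFfin, hF⟩ := finite_cover_balls_of_compact (isCompact_univ (X := X))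
    (e := r / 2) (by positivity)
  obtain ⟨T, hT1, hT2⟩ := exists_net hFfin.toFinset (r := r / 2) (by positivity)
  have hdeg : ∀ t ∈ T, (T.filter fun t' => dist t t' ≤ 4 * r).card ≤ B := by
    intro t ht
    obtain ⟨code, hcode⟩ := hB (8 * r) (by positivity) hra (Metric.closedBall t (4 * r)) (by
      intro x hx y hy
      rw [Metric.mem_closedBall] at hx hy
      have := dist_triangle_right x y t
      linarith)
    have hinj : Set.InjOn code (T.filter fun t' => dist t t' ≤ 4 * r) := by
      intro x hx y hy hxy
      simp only [Finset.coe_filter, Set.mem_ofPred_eq] at hx hy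
      by_contra hne
      have h1 := hT1 x hx.1 y hy.1 hne
      have h2 := hcode x (by rw [Metric.mem_closedBall, dist_comm]; exact hx.2) y
        (by rw [Metric.mem_closedBall, dist_comm]; exact hy.2) hxy
      linarith
    have := Finset.card_le_card_of_injOn code (fun x _ => Finset.mem_univ _) hinj
    simpa using this
  obtain ⟨c, hc1, hc2⟩ := exists_coloring T (4 * r) B hdeg
  have h1 := hmany r hr (by linarith) (fun i => {t | t ∈ T ∧ c t = i}) (by
    intro i t ht t' ht' hne
    exact hc2 t ht.1 t' ht'.1 hne (by rw [ht.2, ht'.2]))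
  rw [one_mul] at h1
  convert h1 using 1
  symm
  rw [Set.eq_univ_iff_forall]
  intro x
  have hx := hF (Set.mem_univ x)
  simp only [Set.mem_iUnion] at hx
  obtain ⟨z, hz, hxz⟩ := hx
  obtain ⟨t, ht, hzt⟩ := hT2 z (by simpa using hz)
  simp only [Set.mem_iUnion]
  refine ⟨c t, hc1 t ht, t, ⟨ht, rfl⟩, ?_⟩
  rw [Metric.mem_ball] at hxz
  rw [Metric.mem_closedBall]
  have := dist_triangle x z t
  linarith

end SelfSim

section Levels

/-- A coloured family of bump functions at scale `r`. -/
structure Level (X : Type*) [MetricSpace X] (n : ℕ) (L r : ℝ) (N : ℕ) where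
  p : Fin (n + 1) × Fin N → X
  φ : X → Fin (n + 1) × Fin N → ℝ
  nonneg : ∀ x i, 0 ≤ φ x i
  le_one : ∀ x i, φ x i ≤ 1
  lip : ∀ x y i, φ x i ≤ φ y i + L / r * dist x y
  top : ∀ x, ∃ i, φ x i = 1
  near : ∀ x i, 0 < φ x i → dist x (p i) ≤ 2 * r
  col : ∀ x i j, 0 < φ x i → 0 < φ x j → i.1 = j.1 → i = j

theorem exists_level {X : Type*} [MetricSpace X] [Nonempty X] {n N : ℕ} {δ r : ℝ}
    (hδ : 0 < δ) (hδ2 : δ ≤ 2) (hr : 0 < r) (h : ColCov n (Set.univ : Set X) (δ * r) r)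
    (code : X → Fin N) (hcode : ∀ x y, code x = code y → dist x y < δ * r) :
    Nonempty (Level X n (2 / δ) r N) := by
  classical
  obtain ⟨S, hSc, hS⟩ := h
  -- canonical representative of a chain component
  let rep : Fin (n + 1) → X → X := fun c x => Classical.epsilon (Chain (S c) (δ * r) x)
  have hrep : ∀ c x, Chain (S c) (δ * r) x (rep c x) := fun c x =>
    Classical.epsilon_spec (p := Chain (S c) (δ * r) x) ⟨x, Relation.ReflTransGen.refl⟩
  have hrepeq : ∀ c x y, Chain (S c) (δ * r) x y → rep c x = rep c y := by
    intro c x y hxy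
    have : Chain (S c) (δ * r) x = Chain (S c) (δ * r) y := by
      funext z
      exact propext ⟨fun h => hxy.symm.trans h, fun h => hxy.trans h⟩
    simp only [rep, this]
  let cell : Fin (n + 1) × Fin N → Set X := fun i => {x | x ∈ S i.1 ∧ code (rep i.1 x) = i.2}
  have hcell1 : ∀ i, ∀ x ∈ cell i, ∀ y ∈ cell i, dist x y ≤ r := by
    intro i x hx y hy
    apply hS i.1
    have h1 := hrep i.1 x
    have h2 := hrep i.1 y
    have h3 : dist (rep i.1 x) (rep i.1 y) < δ * r := hcode _ _ (by rw [hx.2, hy.2])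
    exact (h1.tail ⟨h1.mem hx.1, h2.mem hy.1, h3⟩).trans h2.symm
  have hcell2 : ∀ i j, i.1 = j.1 → ∀ x ∈ cell i, ∀ y ∈ cell j, dist x y < δ * r → i = j := by
    rintro ⟨c, a⟩ ⟨c', b⟩ hc x hx y hy hxy
    simp only at hc
    subst hc
    have h1 : Chain (S c) (δ * r) x y := Relation.ReflTransGen.single ⟨hx.1, hy.1, hxy⟩
    have h2 := hrepeq c x y h1
    have h3 : code (rep c x) = a := hx.2
    have h4 : code (rep c y) = b := hy.2
    rw [← h3, ← h4, h2]
  let p : Fin (n + 1) × Fin N → X := fun i => Classical.epsilon (fun x => x ∈ cell i)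
  have hp : ∀ i, (cell i).Nonempty → p i ∈ cell i := fun i hi => Classical.epsilon_spec hi
  let φ : X → Fin (n + 1) × Fin N → ℝ := fun x i =>
    if (cell i).Nonempty then max 0 (1 - 2 / (δ * r) * Metric.infDist x (cell i)) else 0
  have hpos : ∀ x i, 0 < φ x i → (cell i).Nonempty ∧ ∃ y ∈ cell i, dist x y < δ * r / 2 := by
    intro x i hx
    by_cases hne : (cell i).Nonempty
    · refine ⟨hne, ?_⟩
      simp only [φ, if_pos hne, lt_max_iff, lt_self_iff_false, false_or] at hx
      rw [← Metric.infDist_lt_iff hne]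
      have h2 : 2 / (δ * r) * Metric.infDist x (cell i) < 1 := by linarith
      rw [div_mul_eq_mul_div, div_lt_one (by positivity)] at h2
      linarith
    · simp only [φ, if_neg hne, lt_self_iff_false] at hx
  refine ⟨⟨p, φ, ?_, ?_, ?_, ?_, ?_, ?_⟩⟩
  · intro x i
    simp only [φ]; split_ifs
    · exact le_max_left _ _
    · exact le_rfl
  · intro x i
    simp only [φ]; split_ifs
    · refine max_le zero_le_one ?_
      have : 0 ≤ 2 / (δ * r) * Metric.infDist x (cell i) :=
        mul_nonneg (by positivity) Metric.infDist_nonneg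
      linarith
    · exact zero_le_one
  · intro x y i
    have h0 : 0 ≤ 2 / δ / r * dist x y := by positivity
    simp only [φ]; split_ifs
    · have h1 : Metric.infDist y (cell i) ≤ Metric.infDist x (cell i) + dist y x :=
        Metric.infDist_le_infDist_add_dist
      refine max_le ?_ ?_
      · exact add_nonneg (le_max_left _ _) h0
      · have h2 : 2 / (δ * r) * Metric.infDist y (cell i) ≤
            2 / (δ * r) * (Metric.infDist x (cell i) + dist y x) := by gcongr
        have h3 := le_max_right 0 (1 - 2 / (δ * r) * Metric.infDist y (cell i))
        rw [div_div, dist_comm x y]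
        linarith
    · linarith
  · intro x
    obtain ⟨c, hc⟩ := hSc x trivial
    refine ⟨(c, code (rep c x)), ?_⟩
    have hx : x ∈ cell (c, code (rep c x)) := ⟨hc, rfl⟩
    simp only [φ]
    rw [if_pos ⟨x, hx⟩, Metric.infDist_zero_of_mem hx]
    simp
  · intro x i hx
    obtain ⟨hne, y, hy, hxy⟩ := hpos x i hx
    have h1 := hcell1 i y hy (p i) (hp i hne)
    have h2 := dist_triangle x y (p i)
    nlinarith
  · intro x i j hi hj hij
    obtain ⟨-, y, hy, hxy⟩ := hpos x i hi
    obtain ⟨-, z, hz, hxz⟩ := hpos x j hj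
    refine hcell2 i j hij y hy z hz ?_
    have := dist_triangle_left y z x
    linarith

end Levels

section Limit

/-- `t` is a point of the simplex-like set carried by the vertices of the level close to `x`. -/
def NearAt {X : Type*} [MetricSpace X] {n N : ℕ} {L r : ℝ} (ℓ : Level X n L r N)
    (t : Fin (n + 1) × Fin N → ℝ) (x : X) : Prop :=
  (∀ w, 0 ≤ t w) ∧ (∀ w, t w ≤ 1) ∧ (∃ w, t w = 1) ∧
    (∀ w, t w ≤ 0 ∨ dist x (ℓ.p w) ≤ 2 * r) ∧
    (∀ w w', w.1 = w'.1 → w ≠ w' → t w ≤ 0 ∨ t w' ≤ 0)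

theorem Level.nearAt {X : Type*} [MetricSpace X] {n N : ℕ} {L r : ℝ} (ℓ : Level X n L r N)
    (x : X) : NearAt ℓ (ℓ.φ x) x := by
  refine ⟨ℓ.nonneg x, ℓ.le_one x, ℓ.top x, fun w => ?_, fun w w' hc hne => ?_⟩
  · rcases le_or_gt (ℓ.φ x w) 0 with h | h
    · exact Or.inl h
    · exact Or.inr (ℓ.near x w h)
  · by_contra hcon
    push Not at hcon
    exact hne (ℓ.col x w w' hcon.1 hcon.2 hc)

theorem NearAt.isClosed {X : Type*} [MetricSpace X] {n N : ℕ} {L r : ℝ} (ℓ : Level X n L r N)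
    (x : X) : IsClosed {t | NearAt ℓ t x} := by
  have h0 : ∀ w, Continuous fun t : Fin (n + 1) × Fin N → ℝ => t w := fun w => continuous_apply w
  have hle : ∀ w, IsClosed {t : Fin (n + 1) × Fin N → ℝ | t w ≤ 0} := fun w =>
    isClosed_le (h0 w) continuous_const
  have e : {t | NearAt ℓ t x} =
      (⋂ w, {t : Fin (n + 1) × Fin N → ℝ | 0 ≤ t w}) ∩ ((⋂ w, {t | t w ≤ 1}) ∩
        ((⋃ w, {t | t w = 1}) ∩ ((⋂ w, ({t | t w ≤ 0} ∪ {_t | dist x (ℓ.p w) ≤ 2 * r})) ∩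
          ⋂ w, ⋂ w', ⋂ (_ : w.1 = w'.1), ⋂ (_ : w ≠ w'), ({t | t w ≤ 0} ∪ {t | t w' ≤ 0})))) := by
    ext t
    simp only [NearAt, Set.mem_ofPred_eq, Set.mem_inter_iff, Set.mem_iInter, Set.mem_iUnion,
      Set.mem_union]
  rw [e]
  refine IsClosed.inter (isClosed_iInter fun w => isClosed_le continuous_const (h0 w)) ?_
  refine IsClosed.inter (isClosed_iInter fun w => isClosed_le (h0 w) continuous_const) ?_
  refine IsClosed.inter (isClosed_iUnion_of_finite fun w => isClosed_eq (h0 w) continuous_const) ?_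
  refine IsClosed.inter (isClosed_iInter fun w => (hle w).union isClosed_const) ?_
  exact isClosed_iInter fun w => isClosed_iInter fun w' => isClosed_iInter fun _ =>
    isClosed_iInter fun _ => (hle w).union (hle w')

theorem NearAt.dist_le_one {X : Type*} [MetricSpace X] {n N : ℕ} {L r : ℝ} {ℓ : Level X n L r N}
    {t t' : Fin (n + 1) × Fin N → ℝ} {x y : X} (h : NearAt ℓ t x) (h' : NearAt ℓ t' y) :
    dist t t' ≤ 1 := by
  rw [dist_pi_le_iff zero_le_one]
  intro w
  rw [Real.dist_eq, abs_le]
  have h1 := h.1 w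
  have h2 := h.2.1 w
  have h3 := h'.1 w
  have h4 := h'.2.1 w
  constructor <;> linarith

theorem NearAt.dist_le_of_dist_lt {X : Type*} [MetricSpace X] {n N : ℕ} {L r : ℝ}
    {ℓ : Level X n L r N}
    {t t' : Fin (n + 1) × Fin N → ℝ} {x y : X} (h : NearAt ℓ t x) (h' : NearAt ℓ t' y)
    (hlt : dist t t' < 1) : dist x y ≤ 4 * r := by
  obtain ⟨w, hw⟩ := h.2.2.1
  have h1 := (dist_le_pi_dist t t' w).trans_lt hlt
  rw [hw, Real.dist_eq, abs_lt] at h1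
  have h2 : 0 < t' w := by linarith
  have h3 := (h.2.2.2.1 w).resolve_left (by linarith)
  have h4 := (h'.2.2.2.1 w).resolve_left (by linarith)
  have h5 := dist_triangle_right x y (ℓ.p w)
  linarith

/-- One term of the bonding map. -/
noncomputable def gterm {X : Type*} [MetricSpace X] {n N N' : ℕ} {L r r' : ℝ}
    (ℓ : Level X n L r N) (ℓ' : Level X n L r' N') (t : Fin (n + 1) × Fin N' → ℝ)
    (v : Fin (n + 1) × Fin N) (w : Fin (n + 1) × Fin N') : ℝ :=
  if 0 < t w then max 0 (min 1 (2 * ℓ.φ (ℓ'.p w) v - 1 + t w / 2)) else 0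

/-- The bonding map between consecutive levels. -/
noncomputable def gmap {X : Type*} [MetricSpace X] {n N N' : ℕ} {L r r' : ℝ}
    (ℓ : Level X n L r N) (ℓ' : Level X n L r' N') (t : Fin (n + 1) × Fin N' → ℝ)
    (v : Fin (n + 1) × Fin N) : ℝ :=
  ⨆ w, gterm ℓ ℓ' t v w

variable {X : Type*} [MetricSpace X] {n N N' : ℕ} {L r r' : ℝ}
    (ℓ : Level X n L r N) (ℓ' : Level X n L r' N')

theorem gterm_nonneg (t v w) : 0 ≤ gterm ℓ ℓ' t v w := by
  unfold gterm
  split_ifs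
  · exact le_max_left _ _
  · exact le_rfl

theorem gterm_le_one (t v w) : gterm ℓ ℓ' t v w ≤ 1 := by
  unfold gterm
  split_ifs
  · exact max_le zero_le_one (min_le_left _ _)
  · exact zero_le_one

theorem gterm_le_gmap (t v w) : gterm ℓ ℓ' t v w ≤ gmap ℓ ℓ' t v :=
  le_ciSup (f := fun w => gterm ℓ ℓ' t v w) (Set.finite_range _).bddAbove w

theorem gmap_nonneg (t v) : 0 ≤ gmap ℓ ℓ' t v :=
  Real.iSup_nonneg fun w => gterm_nonneg ℓ ℓ' t v w

theorem gmap_le_one (t v) : gmap ℓ ℓ' t v ≤ 1 :=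
  Real.iSup_le (fun w => gterm_le_one ℓ ℓ' t v w) zero_le_one

theorem gmap_pos {t v} (h : 0 < gmap ℓ ℓ' t v) :
    ∃ w, 0 < t w ∧ 0 < 2 * ℓ.φ (ℓ'.p w) v - 1 + t w / 2 := by
  by_contra hcon
  push Not at hcon
  refine absurd h (not_lt.2 (Real.iSup_le (fun w => ?_) le_rfl))
  unfold gterm
  split_ifs with h1
  · exact max_le le_rfl ((min_le_right _ _).trans (hcon w h1))
  · exact le_rfl

variable {ℓ ℓ'}

theorem lip_bound (hr : 0 < r) (hL : 0 < L) (hrr : 64 * L * r' ≤ r) {c : ℝ} {x y : X} {v}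
    (hc : 0 ≤ c) (h : dist x y ≤ c * r') : ℓ.φ x v ≤ ℓ.φ y v + c / 64 := by
  have h1 := ℓ.lip x y v
  have h2 : L / r * dist x y ≤ c / 64 := by
    calc L / r * dist x y ≤ L / r * (c * r') := by gcongr
      _ = (c / 64) * ((64 * L * r') / r) := by field_simp
      _ ≤ (c / 64) * 1 := by
        gcongr
        rwa [div_le_one hr]
      _ = c / 64 := mul_one _
  linarith

theorem NearAt.gmap (hr : 0 < r) (hL : 0 < L) (hrr : 64 * L * r' ≤ r)
    {t : Fin (n + 1) × Fin N' → ℝ} {x : X} (h : NearAt ℓ' t x) :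
    NearAt ℓ (gmap ℓ ℓ' t) x := by
  obtain ⟨h0, h1, ⟨w1, hw1⟩, h3, h4⟩ := h
  have key : ∀ v, 0 < _root_.gmap ℓ ℓ' t v → 0 < ℓ.φ x v := by
    intro v hv
    obtain ⟨w, hw, hw2⟩ := gmap_pos ℓ ℓ' hv
    have h5 := (h3 w).resolve_left (by linarith)
    rw [dist_comm] at h5
    have h6 := lip_bound (ℓ := ℓ) (v := v) hr hL hrr (by norm_num) h5
    have h7 := h1 w
    linarith
  refine ⟨gmap_nonneg ℓ ℓ' t, gmap_le_one ℓ ℓ' t, ?_, fun v => ?_, fun v v' hc hne => ?_⟩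
  · obtain ⟨v, hv⟩ := ℓ.top x
    refine ⟨v, le_antisymm (gmap_le_one ℓ ℓ' t v) (le_trans ?_ (gterm_le_gmap ℓ ℓ' t v w1))⟩
    have h5 := (h3 w1).resolve_left (by linarith)
    have h6 := lip_bound (ℓ := ℓ) (v := v) hr hL hrr (by norm_num) h5
    unfold gterm
    rw [if_pos (by linarith), hw1]
    refine le_max_of_le_right (le_min le_rfl ?_)
    linarith
  · rcases le_or_gt (_root_.gmap ℓ ℓ' t v) 0 with h | h
    · exact Or.inl h
    · exact Or.inr (ℓ.near x v (key v h))
  · by_contra hcon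
    push Not at hcon
    exact hne (ℓ.col x v v' (key v hcon.1) (key v' hcon.2) hc)

theorem clamp_le {a b d : ℝ} (hd : 0 ≤ d) (h : a ≤ b + d) :
    max 0 (min 1 a) ≤ max 0 (min 1 b) + d := by
  rcases le_total a 1 with h1 | h1 <;> rcases le_total b 1 with h2 | h2 <;>
    simp only [h1, h2, min_eq_right, min_eq_left] <;>
    refine max_le ?_ ?_ <;>
    first
    | (have := le_max_left (0:ℝ) b; have := le_max_right (0:ℝ) b; linarith)
    | (have := le_max_left (0:ℝ) 1; have := le_max_right (0:ℝ) 1; linarith)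

theorem gmap_le (hr : 0 < r) (hL : 0 < L) (hrr : 64 * L * r' ≤ r)
    {t t' : Fin (n + 1) × Fin N' → ℝ} {x y : X} (h : NearAt ℓ' t x) (h' : NearAt ℓ' t' y)
    (hxy : dist x y ≤ 4 * r') (v) :
    gmap ℓ ℓ' t v ≤ gmap ℓ ℓ' t' v + 1 / 2 * dist t t' := by
  have hD : 0 ≤ dist t t' := dist_nonneg
  have hg := gmap_nonneg ℓ ℓ' t' v
  refine Real.iSup_le (fun w => ?_) (by linarith)
  have hw : |t w - t' w| ≤ dist t t' := dist_le_pi_dist t t' w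
  rw [abs_le] at hw
  by_cases htw : 0 < t w
  · by_cases htw' : 0 < t' w
    · refine le_trans ?_ (add_le_add_left (gterm_le_gmap ℓ ℓ' t' v w) _)
      unfold gterm
      rw [if_pos htw, if_pos htw']
      exact clamp_le (by linarith) (by linarith)
    · obtain ⟨w1, hw1⟩ := h'.2.2.1
      refine le_trans ?_ (add_le_add_left (gterm_le_gmap ℓ ℓ' t' v w1) _)
      unfold gterm
      rw [if_pos htw, if_pos (by linarith)]
      refine clamp_le (by linarith) ?_
      have h5 := (h.2.2.2.1 w).resolve_left (by linarith)
      have h6 := (h'.2.2.2.1 w1).resolve_left (by linarith)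
      have h7 : dist (ℓ'.p w) (ℓ'.p w1) ≤ 8 * r' := by
        have := dist_triangle4 (ℓ'.p w) x y (ℓ'.p w1)
        rw [dist_comm _ x] at this
        linarith
      have h8 := lip_bound (ℓ := ℓ) (v := v) hr hL hrr (by norm_num) h7
      linarith
  · have : gterm ℓ ℓ' t v w = 0 := by unfold gterm; rw [if_neg htw]
    linarith

theorem dist_gmap_le (hr : 0 < r) (hL : 0 < L) (hrr : 64 * L * r' ≤ r)
    {t t' : Fin (n + 1) × Fin N' → ℝ} {x y : X} (h : NearAt ℓ' t x) (h' : NearAt ℓ' t' y)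
    (hxy : dist x y ≤ 4 * r') :
    dist (gmap ℓ ℓ' t) (gmap ℓ ℓ' t') ≤ 1 / 2 * dist t t' := by
  rw [dist_pi_le_iff (by positivity)]
  intro v
  have h1 := gmap_le (ℓ := ℓ) hr hL hrr h h' hxy v
  have h2 := gmap_le (ℓ := ℓ) hr hL hrr h' h (by rwa [dist_comm]) v
  rw [dist_comm t'] at h2
  rw [Real.dist_eq, abs_le]
  constructor <;> linarith

end Limit

section System

variable {X : Type*} [MetricSpace X] {n : ℕ} {L : ℝ} {R : ℕ → ℝ} {N : ℕ → ℕ}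

/-- Finite approximations of the canonical map. -/
noncomputable def approxMap (lev : ∀ k, Level X n L (R k) (N k)) :
    ℕ → (j : ℕ) → X → (Fin (n + 1) × Fin (N j) → ℝ)
  | 0, j, x => (lev j).φ x
  | k + 1, j, x => gmap (lev j) (lev (j + 1)) (approxMap lev k (j + 1) x)

theorem exists_system (lev : ∀ k, Level X n L (R k) (N k)) (hL : 0 < L) (hR : ∀ k, 0 < R k)
    (hRR : ∀ k, 64 * L * R (k + 1) ≤ R k) :
    ∃ F : ∀ j : ℕ, X → (Fin (n + 1) × Fin (N j) → ℝ),
      (∀ j x, NearAt (lev j) (F j x) x) ∧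
      (∀ j x, F j x = gmap (lev j) (lev (j + 1)) (F (j + 1) x)) := by
  have hA : ∀ k j x, NearAt (lev j) (approxMap lev k j x) x := by
    intro k
    induction k with
    | zero => exact fun j x => (lev j).nearAt x
    | succ k ih => exact fun j x => (ih (j + 1) x).gmap (hR j) hL (hRR j)
  have hx4 : ∀ (j : ℕ) (x : X), dist x x ≤ 4 * R j := by
    intro j x
    rw [dist_self]; have := hR j; linarith
  have hd : ∀ k j x, dist (approxMap lev k j x) (approxMap lev (k + 1) j x) ≤ 1 * (1 / 2) ^ k := by
    intro k
    induction k with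
    | zero =>
      intro j x
      simpa using (hA 0 j x).dist_le_one (hA 1 j x)
    | succ k ih =>
      intro j x
      have h1 := dist_gmap_le (ℓ := lev j) (hR j) hL (hRR j) (hA k (j + 1) x)
        (hA (k + 1) (j + 1) x) (hx4 _ x)
      have h2 := ih (j + 1) x
      calc _ ≤ _ := h1
        _ ≤ 1 / 2 * (1 * (1 / 2) ^ k) := by gcongr
        _ = _ := by ring
  have hlim : ∀ j x, ∃ t, Filter.Tendsto (fun k => approxMap lev k j x) Filter.atTop (nhds t) :=
    fun j x => cauchySeq_tendsto_of_complete
      (cauchySeq_of_le_geometric (1 / 2) 1 (by norm_num) (fun k => hd k j x))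
  choose F hF using hlim
  have hFN : ∀ j x, NearAt (lev j) (F j x) x := fun j x =>
    (NearAt.isClosed (lev j) x).mem_of_tendsto (hF j x)
      (Filter.Eventually.of_forall fun k => hA k j x)
  refine ⟨F, hFN, fun j x => ?_⟩
  have h1 : Filter.Tendsto (fun k => approxMap lev (k + 1) j x) Filter.atTop (nhds (F j x)) :=
    (hF j x).comp (Filter.tendsto_add_atTop_nat 1)
  refine tendsto_nhds_unique h1 ?_
  rw [tendsto_iff_dist_tendsto_zero]
  have h2 := tendsto_iff_dist_tendsto_zero.1 (hF (j + 1) x)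
  refine squeeze_zero (fun _ => dist_nonneg) (fun k => ?_) h2
  have h3 := dist_gmap_le (ℓ := lev j) (hR j) hL (hRR j) (hA k (j + 1) x)
    (hFN (j + 1) x) (hx4 _ x)
  have h4 : 0 ≤ dist (approxMap lev k (j + 1) x) (F (j + 1) x) := dist_nonneg
  exact h3.trans (by linarith)

/-- Contraction along the system. -/
theorem system_contract (lev : ∀ k, Level X n L (R k) (N k)) (hL : 0 < L) (hR : ∀ k, 0 < R k)
    (hRR : ∀ k, 64 * L * R (k + 1) ≤ R k) (hRa : Antitone R)
    (F : ∀ j : ℕ, X → (Fin (n + 1) × Fin (N j) → ℝ))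
    (hF : ∀ j x, NearAt (lev j) (F j x) x)
    (hFg : ∀ j x, F j x = gmap (lev j) (lev (j + 1)) (F (j + 1) x)) (j k : ℕ) (x y : X)
    (hxy : dist x y ≤ 4 * R (j + k)) :
    dist (F j x) (F j y) ≤ (1 / 2) ^ k * dist (F (j + k) x) (F (j + k) y) := by
  induction k with
  | zero => simp
  | succ k ih =>
    have h1 := ih (hxy.trans (by have := hRa (show j + k ≤ j + (k + 1) by omega); linarith))
    have h2 : dist (F (j + k) x) (F (j + k) y)
        ≤ 1 / 2 * dist (F (j + k + 1) x) (F (j + k + 1) y) := by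
      rw [hFg (j + k) x, hFg (j + k) y]
      exact dist_gmap_le (ℓ := lev (j + k)) (hR _) hL (hRR _) (hF (j + k + 1) x)
        (hF (j + k + 1) y) hxy
    calc _ ≤ _ := h1
      _ ≤ (1 / 2) ^ k * (1 / 2 * dist (F (j + k + 1) x) (F (j + k + 1) y)) := by gcongr
      _ = _ := by rw [pow_succ, mul_assoc]; rfl

end System

section Dimension

theorem dimH_le_of_codes {Y : Type*} [MetricSpace Y] (I : ℕ → Type*) [∀ k, Fintype (I k)]
    (code : ∀ k, Y → I k) {s : ℝ} (hs : 0 < s) (hs1 : s < 1)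
    (hcode : ∀ k, 1 ≤ k → ∀ x y, code k x = code k y → dist x y ≤ s ^ k) {q K : ℝ} (hq : 0 ≤ q)
    (hK : ∀ k, (Fintype.card (I k) : ℝ) * (s ^ k) ^ q ≤ K) :
    dimHSpace Y ≤ ENNReal.ofReal q := by
  unfold dimHSpace
  borelize Y
  have hr : Filter.Tendsto (fun k : ℕ => ENNReal.ofReal (s ^ k)) Filter.atTop (nhds 0) := by
    have h1 := tendsto_pow_atTop_nhds_zero_of_lt_one hs.le hs1
    have h2 := ENNReal.tendsto_ofReal h1
    simpa using h2
  have hdiam : ∀ k, 1 ≤ k → ∀ i : I k,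
      Metric.ediam (code k ⁻¹' {i}) ≤ ENNReal.ofReal (s ^ k) := by
    intro k hk i
    refine Metric.ediam_le fun x hx y hy => ?_
    rw [edist_dist]
    refine ENNReal.ofReal_le_ofReal (hcode k hk x y ?_)
    rw [Set.mem_preimage, Set.mem_singleton_iff] at hx hy
    rw [hx, hy]
  have hM := MeasureTheory.Measure.hausdorffMeasure_le_liminf_sum (X := Y) q Set.univ
    (l := Filter.atTop) (fun k : ℕ => ENNReal.ofReal (s ^ k)) hr
    (fun k (i : I k) => code k ⁻¹' {i})
    (Filter.eventually_atTop.2 ⟨1, fun k hk i => hdiam k hk i⟩)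
    (Filter.Eventually.of_forall fun k x _ => Set.mem_iUnion.2 ⟨code k x, rfl⟩)
  have hfin : MeasureTheory.Measure.hausdorffMeasure q (Set.univ : Set Y) ≠ ⊤ := by
    refine ne_top_of_le_ne_top (b := ENNReal.ofReal K) ENNReal.ofReal_ne_top (hM.trans ?_)
    refine Filter.liminf_le_of_frequently_le' (Filter.Eventually.frequently ?_)
    filter_upwards [Filter.eventually_ge_atTop 1] with k hk
    calc ∑ i : I k, Metric.ediam (code k ⁻¹' {i}) ^ q
        ≤ ∑ _i : I k, ENNReal.ofReal (s ^ k) ^ q :=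
          Finset.sum_le_sum fun i _ => ENNReal.rpow_le_rpow (hdiam k hk i) hq
      _ = ENNReal.ofReal ((Fintype.card (I k) : ℝ) * (s ^ k) ^ q) := by
          rw [Finset.sum_const, Finset.card_univ, nsmul_eq_mul,
            ENNReal.ofReal_rpow_of_nonneg (by positivity) hq,
            ENNReal.ofReal_mul (by positivity), ENNReal.ofReal_natCast]
      _ ≤ ENNReal.ofReal K := ENNReal.ofReal_le_ofReal (hK k)
  have h3 := dimH_le_of_hausdorffMeasure_ne_top (d := q.toNNReal) (s := (Set.univ : Set Y))
    (by rwa [Real.coe_toNNReal q hq])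
  exact h3

theorem exists_grid_code {X : Type*} [MetricSpace X] {n N : ℕ} {L r : ℝ} (ℓ : Level X n L r N)
    (f : X → (Fin (n + 1) × Fin N → ℝ)) (hf : ∀ x, NearAt ℓ (f x) x) (M : ℕ) (hM : 0 < M) :
    ∃ code : X → (Fin (n + 1) → Fin N) × Fin (n + 1) × (Fin n → Fin (M + 1)),
      ∀ x y, code x = code y → dist (f x) (f y) ≤ 1 / (M : ℝ) := by
  classical
  have hM0 : (0 : ℝ) < M := by exact_mod_cast hM
  have hv : ∀ x c, ∃ a, ∀ b, b ≠ a → f x (c, b) = 0 := by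
    intro x c
    obtain ⟨h0, -, ⟨w1, -⟩, -, h4⟩ := hf x
    by_cases h : ∃ a, 0 < f x (c, a)
    · obtain ⟨a, ha⟩ := h
      refine ⟨a, fun b hb => ?_⟩
      have := (h4 (c, b) (c, a) rfl (by simpa using hb)).resolve_right (by linarith)
      exact le_antisymm this (h0 _)
    · push Not at h
      exact ⟨w1.2, fun b _ => le_antisymm (h b) (h0 _)⟩
  choose v hv using hv
  have ht : ∀ x, ∃ c, f x (c, v x c) = 1 := by
    intro x
    obtain ⟨-, -, ⟨⟨c, a⟩, hw⟩, -, -⟩ := hf x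
    refine ⟨c, ?_⟩
    by_cases h : a = v x c
    · rw [← h]; exact hw
    · rw [hv x c a h] at hw; norm_num at hw
  choose c₀ hc₀ using ht
  have hfl : ∀ x w, ⌊(M : ℝ) * f x w⌋₊ < M + 1 := by
    intro x w
    rw [Nat.floor_lt (mul_nonneg hM0.le ((hf x).1 w))]
    have := (hf x).2.1 w
    push_cast
    nlinarith
  refine ⟨fun x => (v x, c₀ x, fun i => ⟨⌊(M : ℝ) * f x ((c₀ x).succAbove i,
    v x ((c₀ x).succAbove i))⌋₊, hfl _ _⟩), fun x y hxy => ?_⟩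
  simp only [Prod.mk.injEq] at hxy
  obtain ⟨h1, h2, h3⟩ := hxy
  rw [dist_pi_le_iff (by positivity)]
  rintro ⟨c, a⟩
  by_cases ha : a = v x c
  · by_cases hc : c = c₀ x
    · have e1 : f x (c, a) = 1 := by rw [ha, hc]; exact hc₀ x
      have e2 : f y (c, a) = 1 := by rw [ha, hc, h1, h2]; exact hc₀ y
      rw [e1, e2, dist_self]; positivity
    · obtain ⟨i, hi⟩ := Fin.exists_succAbove_eq hc
      have h4 := congrFun h3 i
      simp only [Fin.mk.injEq] at h4
      rw [← h2, ← h1, hi, ← ha] at h4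
      have k1 := Nat.floor_le (mul_nonneg hM0.le ((hf x).1 (c, a)))
      have k2 := Nat.lt_floor_add_one ((M : ℝ) * f x (c, a))
      have k3 := Nat.floor_le (mul_nonneg hM0.le ((hf y).1 (c, a)))
      have k4 := Nat.lt_floor_add_one ((M : ℝ) * f y (c, a))
      rw [← h4] at k3 k4
      rw [Real.dist_eq, le_div_iff₀ hM0, ← abs_of_pos hM0, ← abs_mul, abs_le]
      constructor <;> nlinarith
  · rw [hv x c a ha, hv y c a (by rw [← h1]; exact ha), dist_self]; positivity

end Dimension

section NewMetric

variable {X : Type} (D : ℕ → X → X → ℝ) (s : ℝ)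

/-- The new distance. -/
noncomputable def rho (x y : X) : ℝ := ⨆ j : ℕ, s ^ j * D j x y

variable {D s}

theorem rho_bdd (hs : 0 < s) (hs1 : s ≤ 1 / 2) (hD1 : ∀ j x y, D j x y ≤ 1) (x y : X) :
    BddAbove (Set.range fun j : ℕ => s ^ j * D j x y) := by
  refine ⟨1, ?_⟩
  rintro _ ⟨j, rfl⟩
  have h1 : s ^ j ≤ 1 := pow_le_one₀ hs.le (by linarith)
  have h2 : 0 < s ^ j := by positivity
  have h3 := hD1 j x y
  show s ^ j * D j x y ≤ 1
  nlinarith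

theorem le_rho (hs : 0 < s) (hs1 : s ≤ 1 / 2) (hD1 : ∀ j x y, D j x y ≤ 1) (x y : X) (j : ℕ) :
    s ^ j * D j x y ≤ rho D s x y :=
  le_ciSup (rho_bdd hs hs1 hD1 x y) j

theorem rho_le {x y : X} {c : ℝ} (h : ∀ j, s ^ j * D j x y ≤ c) : rho D s x y ≤ c :=
  ciSup_le h

theorem exists_newMetric (hs : 0 < s) (hs1 : s ≤ 1 / 2) (hD1 : ∀ j x y, D j x y ≤ 1)
    (h0 : ∀ j x, D j x x = 0) (hc : ∀ j x y, D j x y = D j y x)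
    (ht : ∀ j x y z, D j x z ≤ D j x y + D j y z) (hp : ∀ x y, x ≠ y → ∃ j, 1 ≤ D j x y) :
    ∃ m : MetricSpace X, ∀ x y, @dist X m.toDist x y = rho D s x y := by
  refine ⟨@MetricSpace.mk X { dist := rho D s, dist_self := ?_, dist_comm := ?_, dist_triangle := ?_ } ?_, fun x y => rfl⟩
  · intro x
    simp [rho, h0]
  · intro x y
    simp only [rho, hc _ x y]
  · intro x y z
    refine rho_le fun j => ?_
    have h1 := le_rho hs hs1 hD1 x y j
    have h2 := le_rho hs hs1 hD1 y z j
    have h3 := ht j x y z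
    have h4 : 0 < s ^ j := by positivity
    nlinarith
  · intro x y hxy
    by_contra hne
    obtain ⟨j, hj⟩ := hp x y hne
    have h1 := le_rho hs hs1 hD1 x y j
    have h4 : 0 < s ^ j := by positivity
    have h5 : rho D s x y = 0 := hxy
    nlinarith

theorem pow_rpow_comm {ε b u : ℝ} (hε : 0 < ε) (h : ε ^ b = u) (m : ℕ) :
    (ε ^ m) ^ b = u ^ m := by
  rw [← Real.rpow_natCast, ← Real.rpow_mul hε.le, mul_comm, Real.rpow_mul hε.le, h,
    Real.rpow_natCast]

theorem exists_exponent {ε u : ℝ} (hε : 0 < ε) (hε1 : ε < 1) (hu : 0 < u) (hu1 : u < 1) :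
    ∃ b : ℝ, 0 < b ∧ ε ^ b = u := by
  refine ⟨Real.log u / Real.log ε,
    div_pos_of_neg_of_neg (Real.log_neg hu hu1) (Real.log_neg hε hε1), ?_⟩
  have h := (Real.log_neg hε hε1).ne
  rw [Real.rpow_def_of_pos hε, mul_div_cancel₀ _ h, Real.exp_log hu]

theorem rho_holder [MetricSpace X] [CompactSpace X] {R₀ ε : ℝ} (hR₀ : 0 < R₀) (hε : 0 < ε) (hε1 : ε < 1)
    (hs : 0 < s) (hs1 : s ≤ 1 / 2)
    (hD1 : ∀ j x y, D j x y ≤ 1) (h0 : ∀ j x, D j x x = 0)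
    (hfar : ∀ j x y, R₀ * ε ^ j < dist x y → 1 ≤ D j x y)
    (hnear : ∀ j k x y, dist x y ≤ R₀ * ε ^ (j + k) → D j x y ≤ (1 / 2) ^ k) :
    ∃ l a b : ℝ, 0 < l ∧ 0 < a ∧ 0 < b ∧ ∀ x y, (1 / l) * dist x y ^ a ≤ rho D s x y ∧
      rho D s x y ≤ l * dist x y ^ b := by
  classical
  obtain ⟨a, ha, hea⟩ := exists_exponent hε hε1 hs (by linarith : s < 1)
  obtain ⟨b, hb, heb⟩ := exists_exponent hε hε1 (by norm_num : (0 : ℝ) < 1 / 2) (by norm_num)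
  have hdi : ∀ x y : X, dist x y ≤ Metric.diam (Set.univ : Set X) := fun x y =>
    Metric.dist_le_diam_of_mem isCompact_univ.isBounded (Set.mem_univ x) (Set.mem_univ y)
  set K := max (R₀ / ε) (Metric.diam (Set.univ : Set X)) with hK
  have hK0 : 0 < K := lt_max_of_lt_left (by positivity)
  have hKa : 0 < K ^ a := Real.rpow_pos_of_pos hK0 a
  have hRb : 0 < R₀ ^ b := Real.rpow_pos_of_pos hR₀ b
  refine ⟨max (K ^ a) (2 / R₀ ^ b), a, b, lt_max_of_lt_left hKa, ha, hb, fun x y => ?_⟩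
  by_cases hxy : x = y
  · subst hxy
    have : rho D s x x = 0 := by simp [rho, h0]
    rw [this, dist_self, Real.zero_rpow ha.ne', Real.zero_rpow hb.ne']
    simp
  have hd : 0 < dist x y := dist_pos.2 hxy
  have hex : ∃ m, R₀ * ε ^ m < dist x y := by
    obtain ⟨m, hm⟩ := exists_pow_lt_of_lt_one (div_pos hd hR₀) hε1
    exact ⟨m, by rw [lt_div_iff₀ hR₀] at hm; linarith⟩
  obtain ⟨m, hm, hmin⟩ : ∃ m, R₀ * ε ^ m < dist x y ∧ ∀ k < m, dist x y ≤ R₀ * ε ^ k :=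
    ⟨Nat.find hex, Nat.find_spec hex, fun k hk => not_lt.1 (Nat.find_min hex hk)⟩
  have hsm : 0 < s ^ m := by positivity
  constructor
  · have h1 : dist x y ≤ K * ε ^ m := by
      rcases m with _ | m
      · rw [pow_zero, mul_one]; exact (hdi x y).trans (le_max_right _ _)
      · calc dist x y ≤ R₀ * ε ^ m := hmin m (Nat.lt_succ_self m)
          _ = R₀ / ε * ε ^ (m + 1) := by field_simp; ring
          _ ≤ K * ε ^ (m + 1) := by gcongr; exact le_max_left _ _
    have h2 : dist x y ^ a ≤ K ^ a * s ^ m := by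
      calc dist x y ^ a ≤ (K * ε ^ m) ^ a := Real.rpow_le_rpow hd.le h1 ha.le
        _ = K ^ a * s ^ m := by
          rw [Real.mul_rpow hK0.le (by positivity), pow_rpow_comm hε hea]
    have h3 := le_rho hs hs1 hD1 x y m
    have h4 := hfar m x y hm
    have h5 : s ^ m ≤ rho D s x y := by nlinarith
    calc 1 / max (K ^ a) (2 / R₀ ^ b) * dist x y ^ a ≤ 1 / K ^ a * (K ^ a * s ^ m) := by
          gcongr
          exact le_max_left _ _
      _ = s ^ m := by field_simp
      _ ≤ _ := h5
  · have h1 : rho D s x y ≤ 2 * (1 / 2) ^ m := by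
      rcases m with _ | m
      · refine rho_le fun j => ?_
        have e1 : s ^ j ≤ 1 := pow_le_one₀ hs.le (by linarith)
        have e2 : 0 < s ^ j := by positivity
        have e3 := hD1 j x y
        rw [pow_zero]
        nlinarith
      · refine rho_le fun j => ?_
        have e0 : (2 : ℝ) * (1 / 2) ^ (m + 1) = (1 / 2) ^ m := by ring
        rw [e0]
        have e2 : 0 < s ^ j := by positivity
        have e1 : s ^ j ≤ (1 / 2) ^ j := pow_le_pow_left₀ hs.le hs1 j
        rcases le_total j m with hjm | hjm
        · obtain ⟨k, rfl⟩ := Nat.exists_eq_add_of_le hjm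
          have e3 := hnear j k x y (hmin _ (Nat.lt_succ_self _))
          rw [pow_add]
          have e4 : (0 : ℝ) < (1 / 2) ^ k := by positivity
          calc s ^ j * D j x y ≤ s ^ j * (1 / 2) ^ k := by gcongr
            _ ≤ _ := by gcongr
        · have e3 := hD1 j x y
          have e4 : ((1 : ℝ) / 2) ^ j ≤ (1 / 2) ^ m :=
            pow_le_pow_of_le_one (by norm_num) (by norm_num) hjm
          nlinarith
    have h2 : R₀ ^ b * (1 / 2) ^ m ≤ dist x y ^ b := by
      calc R₀ ^ b * (1 / 2) ^ m = (R₀ * ε ^ m) ^ b := by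
            rw [Real.mul_rpow hR₀.le (by positivity), pow_rpow_comm hε heb]
        _ ≤ _ := Real.rpow_le_rpow (by positivity) hm.le hb.le
    calc rho D s x y ≤ 2 * (1 / 2) ^ m := h1
      _ = 2 / R₀ ^ b * (R₀ ^ b * (1 / 2) ^ m) := by field_simp
      _ ≤ max (K ^ a) (2 / R₀ ^ b) * dist x y ^ b := by
        gcongr
        exact le_max_right _ _

theorem rho_small (hs : 0 < s) (hs1 : s ≤ 1 / 2)
    (hD1 : ∀ j x y, D j x y ≤ 1)
    (hcon : ∀ j k x y, D (j + k) x y < 1 → D j x y ≤ D (j + k) x y) {k : ℕ} (hk : 1 ≤ k)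
    {x y : X} (h : D k x y ≤ s ^ k) : rho D s x y ≤ s ^ k := by
  refine rho_le fun j => ?_
  have hsk : s ^ k < 1 := pow_lt_one₀ hs.le (by linarith) (by omega)
  have e1 : s ^ j ≤ 1 := pow_le_one₀ hs.le (by linarith)
  have e2 : 0 < s ^ j := by positivity
  have e3 : 0 < s ^ k := by positivity
  rcases le_total j k with hjk | hjk
  · obtain ⟨i, rfl⟩ := Nat.exists_eq_add_of_le hjk
    have e4 := hcon j i x y (h.trans_lt hsk)
    calc s ^ j * D j x y ≤ s ^ j * s ^ (j + i) := by gcongr; exact e4.trans h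
      _ ≤ 1 * s ^ (j + i) := by gcongr
      _ = _ := one_mul _
  · have e3 := hD1 j x y
    have e4 : s ^ j ≤ s ^ k := pow_le_pow_of_le_one hs.le (by linarith) hjk
    nlinarith

end NewMetric

section Final

theorem part_two_aux {X : Type} [MetricSpace X] [CompactSpace X] [Nonempty X]
    (hss : IsLocSelfSimilar X) (n : ℕ) (hdim : CovDimLE X n)
    (hdiam : 0 < Metric.diam (Set.univ : Set X)) (q : ℝ) (hq : (n : ℝ) < q) :
    ∃ (Y : Type) (mY : MetricSpace Y),
        @BiHolderEquivTo X _ Y mY ∧ @dimHSpace Y mY ≤ ENNReal.ofReal q := by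
  classical
  obtain ⟨l, a₀, hl, ha₀, hS⟩ := exists_scal hss hdiam
  obtain ⟨δ₀, hδ₀, hcap⟩ := capacity hl hS hdim
  set δ := min δ₀ 2 with hδdef
  have hδ : 0 < δ := lt_min hδ₀ two_pos
  have hδ2 : δ ≤ 2 := min_le_right _ _
  set L := 2 / δ with hLdef
  have hL : 0 < L := by positivity
  set r₀ := a₀ / 8 with hr₀def
  have hr₀ : 0 < r₀ := by positivity
  set ε := min (1 / 2) (1 / (64 * L)) with hεdef
  have hε : 0 < ε := by positivity
  have hε2 : ε ≤ 1 / 2 := min_le_left _ _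
  have hεL : 64 * L * ε ≤ 1 := by
    have : ε ≤ 1 / (64 * L) := min_le_right _ _
    rw [le_div_iff₀ (by positivity)] at this
    linarith
  obtain ⟨C, B, hCB⟩ := exists_codes hl ha₀ hS hε (by linarith : ε ≤ 1)
    (e := δ * r₀ / 2) (by positivity)
  choose code hcode using hCB
  let R : ℕ → ℝ := fun k => r₀ * ε ^ k
  let N : ℕ → ℕ := fun k => C * B ^ k
  have hR : ∀ k, 0 < R k := fun k => by positivity
  have hRa : Antitone R := fun i j hij => by
    have : ε ^ j ≤ ε ^ i := pow_le_pow_of_le_one hε.le (by linarith) hij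
    show r₀ * ε ^ j ≤ r₀ * ε ^ i
    gcongr
  have hRR : ∀ k, 64 * L * R (k + 1) ≤ R k := fun k => by
    have h1 : 64 * L * R (k + 1) = (64 * L * ε) * R k := by simp only [R]; ring
    rw [h1]
    have := hR k
    nlinarith
  have hlev : ∀ k, Nonempty (Level X n L (R k) (N k)) := by
    intro k
    refine exists_level hδ hδ2 (hR k) ?_ (code k) fun x y hxy => ?_
    · have h1 := hcap (R k) (hR k) (by
        have := hRa (Nat.zero_le k)
        simp only [R, pow_zero, mul_one] at this ⊢
        linarith)
      refine h1.mono ?_ le_rfl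
      have := hR k
      gcongr
      exact min_le_left _ _
    · have h1 := hcode k x y hxy
      have h2 : 0 < δ * R k := mul_pos hδ (hR k)
      have h3 : δ * r₀ / 2 * ε ^ k = δ * R k / 2 := by simp only [R]; ring
      linarith
  let lev : ∀ k, Level X n L (R k) (N k) := fun k => (hlev k).some
  obtain ⟨F, hF, hFg⟩ := exists_system lev hL hR hRR
  have hcontract := system_contract lev hL hR hRR hRa F hF hFg
  let D : ℕ → X → X → ℝ := fun j x y => dist (F j x) (F j y)
  have hD1 : ∀ j x y, D j x y ≤ 1 := fun j x y => (hF j x).dist_le_one (hF j y)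
  have hD0 : ∀ j x, D j x x = 0 := fun j x => dist_self _
  have hfar : ∀ j x y, 4 * r₀ * ε ^ j < dist x y → 1 ≤ D j x y := by
    intro j x y h
    by_contra hcon
    have h1 := (hF j x).dist_le_of_dist_lt (hF j y) (not_le.1 hcon)
    simp only [R] at h1
    linarith
  have hnear : ∀ j k x y, dist x y ≤ 4 * r₀ * ε ^ (j + k) → D j x y ≤ (1 / 2) ^ k := by
    intro j k x y h
    have h1 := hcontract j k x y (by simp only [R]; linarith)
    refine h1.trans ?_
    have h2 := hD1 (j + k) x y
    have h3 : (0 : ℝ) < (1 / 2) ^ k := by positivity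
    calc _ ≤ (1 / 2 : ℝ) ^ k * 1 := by gcongr
      _ = _ := mul_one _
  have hcon : ∀ j k x y, D (j + k) x y < 1 → D j x y ≤ D (j + k) x y := by
    intro j k x y h
    have h1 := hcontract j k x y ((hF (j + k) x).dist_le_of_dist_lt (hF (j + k) y) h)
    refine h1.trans ?_
    have h3 : ((1 : ℝ) / 2) ^ k ≤ 1 := pow_le_one₀ (by norm_num) (by norm_num)
    calc _ ≤ 1 * dist (F (j + k) x) (F (j + k) y) := by gcongr
      _ = _ := one_mul _
  have hp : ∀ x y, x ≠ y → ∃ j, 1 ≤ D j x y := by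
    intro x y hxy
    have hd : 0 < dist x y := dist_pos.2 hxy
    obtain ⟨m, hm⟩ := exists_pow_lt_of_lt_one (div_pos hd (by positivity : 0 < 4 * r₀))
      (by linarith : ε < 1)
    exact ⟨m, hfar m x y (by rw [lt_div_iff₀ (by positivity)] at hm; linarith)⟩
  -- choice of the base
  obtain ⟨Q, hQ2, hQ⟩ : ∃ Q : ℕ, 2 ≤ Q ∧ (B : ℝ) ^ (n + 1) ≤ (Q : ℝ) ^ (q - n) := by
    have h1 := (tendsto_rpow_atTop (sub_pos.2 hq)).comp tendsto_natCast_atTop_atTop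
    have h2 := (h1.eventually_ge_atTop ((B : ℝ) ^ (n + 1))).and (Filter.eventually_ge_atTop 2)
    obtain ⟨Q, hQ⟩ := h2.exists
    exact ⟨Q, hQ.2, hQ.1⟩
  have hQ2' : (2 : ℝ) ≤ Q := by exact_mod_cast hQ2
  have hQ0 : (0 : ℝ) < Q := by linarith
  set s : ℝ := 1 / Q with hsdef
  have hs : 0 < s := by positivity
  have hs1 : s ≤ 1 / 2 := by
    rw [hsdef]; gcongr
  obtain ⟨l', a, b, hl', ha, hb, hab⟩ := rho_holder (D := D) (R₀ := 4 * r₀) (by positivity) hε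
      (by linarith) hs hs1 hD1 hD0 hfar hnear
  have hgc := fun k => exists_grid_code (lev k) (F k) (hF k) (Q ^ k) (by positivity)
  choose gc hgc using hgc
  obtain ⟨mY, hmY⟩ := exists_newMetric (D := D) hs hs1 hD1 hD0 (fun j x y => dist_comm _ _)
    (fun j x y z => dist_triangle _ _ _) hp
  refine ⟨X, mY, ?_, ?_⟩
  · refine ⟨l', a, b, fun x => x, hl', ha, hb, fun x => ⟨x, rfl⟩, fun x y => ?_⟩
    rw [hmY x y]
    exact hab x y
  · have hq0 : 0 ≤ q := (Nat.cast_nonneg n).trans hq.le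
    refine @dimH_le_of_codes X mY
      (fun k => (Fin (n + 1) → Fin (N k)) × Fin (n + 1) × (Fin n → Fin (Q ^ k + 1))) _
      gc s hs (by linarith) ?_ q ((C : ℝ) ^ (n + 1) * (n + 1) * 2 ^ n) hq0 ?_
    · intro k hk x y hxy
      rw [hmY x y]
      refine rho_small hs hs1 hD1 hcon hk ?_
      have h1 := hgc k x y hxy
      have h2 : s ^ k = 1 / ((Q ^ k : ℕ) : ℝ) := by
        rw [hsdef, div_pow, one_pow]; push_cast; rfl
      rw [h2]
      exact h1
    · intro k
      have hQk : (1 : ℝ) ≤ (Q : ℝ) ^ k := one_le_pow₀ (by linarith)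
      have hQk0 : (0 : ℝ) < (Q : ℝ) ^ k := by positivity
      have hsq : (s ^ k) ^ q = ((Q : ℝ) ^ q)⁻¹ ^ k := by
        refine pow_rpow_comm hs ?_ k
        rw [hsdef, one_div, Real.inv_rpow hQ0.le]
      have hcard : (Fintype.card ((Fin (n + 1) → Fin (N k)) × Fin (n + 1) ×
          (Fin n → Fin (Q ^ k + 1))) : ℝ) = ((C : ℝ) * B ^ k) ^ (n + 1) * ((n + 1) * ((Q : ℝ) ^ k + 1) ^ n) := by
        simp [N]
      rw [hcard, hsq]
      have h1 : ((Q : ℝ) ^ k + 1) ^ n ≤ (2 * (Q : ℝ) ^ k) ^ n := by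
        gcongr; linarith
      have h2 : (B : ℝ) ^ (n + 1) * (Q : ℝ) ^ n * ((Q : ℝ) ^ q)⁻¹ ≤ 1 := by
        rw [Real.rpow_sub hQ0, Real.rpow_natCast, le_div_iff₀ (by positivity)] at hQ
        have hQq : 0 < (Q : ℝ) ^ q := Real.rpow_pos_of_pos hQ0 q
        rw [← div_eq_mul_inv, div_le_one hQq]
        exact hQ
      have hQq : 0 < (Q : ℝ) ^ q := Real.rpow_pos_of_pos hQ0 q
      calc ((C : ℝ) * B ^ k) ^ (n + 1) * ((n + 1) * ((Q : ℝ) ^ k + 1) ^ n) * ((Q : ℝ) ^ q)⁻¹ ^ k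
          ≤ ((C : ℝ) * B ^ k) ^ (n + 1) * ((n + 1) * (2 * (Q : ℝ) ^ k) ^ n) *
            ((Q : ℝ) ^ q)⁻¹ ^ k := by gcongr
        _ = ((C : ℝ) ^ (n + 1) * (n + 1) * 2 ^ n) *
            ((B : ℝ) ^ (n + 1) * (Q : ℝ) ^ n * ((Q : ℝ) ^ q)⁻¹) ^ k := by
          simp only [mul_pow, ← pow_mul]
          rw [mul_comm k (n + 1), mul_comm k n]
          ring
        _ ≤ ((C : ℝ) ^ (n + 1) * (n + 1) * 2 ^ n) * 1 := by
          gcongr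
          exact pow_le_one₀ (by positivity) h2
        _ = _ := mul_one _

theorem part_two {X : Type} [MetricSpace X] [CompactSpace X]
    (hss : IsLocSelfSimilar X) (n : ℕ) (hdim : CovDimLE X n) (q : ℝ) (hq : (n : ℝ) < q) :
    ∃ (Y : Type) (mY : MetricSpace Y),
        @BiHolderEquivTo X _ Y mY ∧ @dimHSpace Y mY ≤ ENNReal.ofReal q := by
  rcases lt_or_ge 0 (Metric.diam (Set.univ : Set X)) with hd | hd
  · have : Nonempty X := by
      by_contra hne
      rw [not_nonempty_iff] at hne
      rw [Set.univ_eq_empty_iff.2 hne, Metric.diam_empty] at hd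
      exact lt_irrefl _ hd
    exact part_two_aux hss n hdim hd q hq
  · have hsub : (Set.univ : Set X).Subsingleton := by
      intro x hx y hy
      have h1 := Metric.dist_le_diam_of_mem isCompact_univ.isBounded hx hy
      exact dist_le_zero.1 (h1.trans hd)
    refine ⟨X, inferInstance, ⟨1, 1, 1, id, one_pos, one_pos, one_pos, Function.surjective_id,
      fun x y => ?_⟩, ?_⟩
    · simp
    · unfold dimHSpace
      rw [dimH_subsingleton hsub]
      exact bot_le

end Final

/-- A compact, locally self-similar metric space of topological (covering)
dimension `n` has Hölder dimension `n`: every metric space bi-Hölder homeomorphic to `X` has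
Hausdorff dimension at least `n`, and for every `q > n` there is a metric space bi-Hölder
homeomorphic to `X` with Hausdorff dimension at most `q`. -/
theorem statement3 {X : Type} [MetricSpace X] [CompactSpace X]
    (hss : IsLocSelfSimilar X) (n : ℕ) (hdim : IsTopDimEq X n) :
    (∀ (Y : Type) (mY : MetricSpace Y),
      @BiHolderEquivTo X _ Y mY → (n : ℝ≥0∞) ≤ @dimHSpace Y mY) ∧
    (∀ q : ℝ, (n : ℝ) < q →
      ∃ (Y : Type) (mY : MetricSpace Y),
        @BiHolderEquivTo X _ Y mY ∧ @dimHSpace Y mY ≤ ENNReal.ofReal q) := by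
  exact ⟨fun Y mY h => part_one n hdim Y h, fun q hq => part_two hss n hdim.1 q hq⟩
end

section
/- Let n ≥ 1, let C ⊆ [0,1] be the standard ternary (1/3-)Cantor set, and let X = C × [0,1]^n ⊆ ℝ^{n+1} with the Euclidean metric. If Y is a metric space and f : X → Y is a (λ,α,β)-bi-Hölder homeomorphism, then dimH(Y) ≥ n + (log 2)/(α·log 3); in particular dimH(Y) > n. -/
open scoped ENNReal

/-- The set `C × [0,1]^n` inside Euclidean space `ℝ^{n+1}`, where `C` is the standard ternary
Cantor set (coordinate `0`) and the remaining `n` coordinates range over `[0,1]`. -/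
def cantorCube (n : ℕ) : Set (EuclideanSpace ℝ (Fin (n + 1))) :=
  {x | x 0 ∈ cantorSet ∧ ∀ i : Fin (n + 1), i ≠ 0 → x i ∈ Set.Icc (0 : ℝ) 1}


namespace PM

/-- Shift by one in direction `j`. -/
def sh {ι : Type*} [DecidableEq ι] (j : ι) (v : ι → ℕ) : ι → ℕ := Function.update v j (v j + 1)

lemma sh_same {ι : Type*} [DecidableEq ι] (j : ι) (v : ι → ℕ) : sh j v j = v j + 1 := by
  simp [sh]

lemma sh_ne {ι : Type*} [DecidableEq ι] {j k : ι} (h : k ≠ j) (v : ι → ℕ) : sh j v k = v k := by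
  simp [sh, h]

lemma sh_comm {ι : Type*} [DecidableEq ι] (j k : ι) (v : ι → ℕ) : sh j (sh k v) = sh k (sh j v) := by
  by_cases h : j = k
  · rw [h]
  · ext m
    simp only [sh, Function.update_apply]
    grind

/-- Discrete Jacobian mod 2. -/
def J {ι : Type*} [DecidableEq ι] (χ : ι → (ι → ℕ) → ZMod 2) :
    List ι → Finset ι → (ι → ℕ) → ZMod 2
  | [], _, _ => 1
  | i :: L, S, v => ∑ j ∈ S, (χ i (sh j v) - χ i v) * J χ L (S.erase j) (sh j v)

lemma symm_sum {ι : Type*} [DecidableEq ι] (S : Finset ι) (a : ι → ι → ZMod 2)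
    (h : ∀ j k, a j k = a k j) : ∑ j ∈ S, ∑ k ∈ S.erase j, a j k = 0 := by
  rw [Finset.sum_sigma']
  refine Finset.sum_involution (fun p _ => ⟨p.2, p.1⟩) ?_ ?_ ?_ ?_
  · rintro ⟨j, k⟩ _
    simp only
    rw [h k j]
    exact CharTwo.add_self_eq_zero _
  · rintro ⟨j, k⟩ hm _ he
    simp only [Finset.mem_sigma, Finset.mem_erase] at hm
    have := congrArg Sigma.fst he
    exact hm.2.1 this
  · rintro ⟨j, k⟩ hm
    simp only [Finset.mem_sigma, Finset.mem_erase] at hm ⊢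
    exact ⟨hm.2.2, fun h => hm.2.1 h.symm, hm.1⟩
  · rintro ⟨j, k⟩ _
    rfl

lemma stokes_of_closed {ι : Type*} [DecidableEq ι] (χ : ι → (ι → ℕ) → ZMod 2) (i : ι) (L : List ι)
    (S : Finset ι) (v : ι → ℕ)
    (h : ∑ j ∈ S, (J χ L (S.erase j) (sh j v) - J χ L (S.erase j) v) = 0) :
    J χ (i :: L) S v = ∑ j ∈ S, (χ i (sh j v) * J χ L (S.erase j) (sh j v)
      - χ i v * J χ L (S.erase j) v) := by
  have : ∑ j ∈ S, (χ i (sh j v) * J χ L (S.erase j) (sh j v) - χ i v * J χ L (S.erase j) v)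
      = J χ (i :: L) S v + χ i v * ∑ j ∈ S, (J χ L (S.erase j) (sh j v) - J χ L (S.erase j) v) := by
    rw [J, Finset.mul_sum, ← Finset.sum_add_distrib]
    refine Finset.sum_congr rfl fun j _ => ?_
    ring
  rw [this, h]
  ring

lemma closed {ι : Type*} [DecidableEq ι] (χ : ι → (ι → ℕ) → ZMod 2) (L : List ι) :
    ∀ (S : Finset ι) (v : ι → ℕ),
    ∑ j ∈ S, (J χ L (S.erase j) (sh j v) - J χ L (S.erase j) v) = 0 := by
  induction L with
  | nil => intro S v; simp [J]
  | cons i L ih =>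
    intro S v
    have key := symm_sum S (fun j k =>
      (χ i (sh k (sh j v)) * J χ L ((S.erase j).erase k) (sh k (sh j v))
        - χ i (sh j v) * J χ L ((S.erase j).erase k) (sh j v))
      - (χ i (sh k v) * J χ L ((S.erase j).erase k) (sh k v)
        - χ i v * J χ L ((S.erase j).erase k) v)) (by
        intro j k
        rw [sh_comm k j, Finset.erase_right_comm (a := j) (b := k)]
        ring)
    rw [← key]
    refine Finset.sum_congr rfl fun j _ => ?_
    rw [stokes_of_closed χ i L _ _ (ih _ _), stokes_of_closed χ i L _ _ (ih _ _),
      ← Finset.sum_sub_distrib]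

/-- Box in the directions `S` through `u`. -/
def box {ι : Type*} [Fintype ι] [DecidableEq ι] (N : ℕ) (S : Finset ι) (u : ι → ℕ) :
    Finset (ι → ℕ) :=
  Fintype.piFinset fun i => if i ∈ S then Finset.range N else {u i}

lemma mem_box {ι : Type*} [Fintype ι] [DecidableEq ι] {N : ℕ} {S : Finset ι} {u v : ι → ℕ} :
    v ∈ box N S u ↔ ∀ i, if i ∈ S then v i < N else v i = u i := by
  simp only [box, Fintype.mem_piFinset]
  refine forall_congr' fun i => ?_
  split_ifs <;> simp

lemma sum_box {ι : Type*} [Fintype ι] [DecidableEq ι] (N : ℕ) (S : Finset ι) (u : ι → ℕ) (j : ι)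
    (hj : j ∈ S) (F : (ι → ℕ) → ZMod 2) :
    ∑ v ∈ box N S u, F v =
      ∑ t ∈ Finset.range N, ∑ v ∈ box N (S.erase j) (Function.update u j t), F v := by
  rw [← Finset.sum_fiberwise_of_maps_to (t := Finset.range N) (g := fun v => v j)]
  · refine Finset.sum_congr rfl fun t ht => Finset.sum_congr ?_ fun _ _ => rfl
    ext v
    simp only [Finset.mem_filter, mem_box, Finset.mem_erase, Function.update_apply]
    simp only [Finset.mem_range] at ht
    constructor
    · rintro ⟨h1, h2⟩ i
      have := h1 i
      by_cases hij : i = j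
      · subst hij; simp [h2]
      · simpa [hij] using this
    · intro h
      have hjt : v j = t := by simpa using h j
      refine ⟨fun i => ?_, hjt⟩
      by_cases hij : i = j
      · subst hij; simp [hj, hjt, ht]
      · simpa [hij] using h i
  · intro v hv
    have := mem_box.1 hv j
    simpa [hj] using this

lemma sum_box_sh {ι : Type*} [Fintype ι] [DecidableEq ι] (N : ℕ) (S : Finset ι) (u : ι → ℕ) (j : ι)
    (hj : j ∉ S) (t : ℕ) (F : (ι → ℕ) → ZMod 2) :
    ∑ v ∈ box N S (Function.update u j t), F (sh j v) =
      ∑ v ∈ box N S (Function.update u j (t + 1)), F v := by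
  refine Finset.sum_nbij' (sh j) (fun v => Function.update v j t) ?_ ?_ ?_ ?_ ?_
  · intro v hv
    rw [mem_box] at hv ⊢
    intro i
    have := hv i
    by_cases hij : i = j
    · subst hij; simp_all [sh]
    · simpa [sh, hij] using this
  · intro v hv
    rw [mem_box] at hv ⊢
    intro i
    have := hv i
    by_cases hij : i = j
    · subst hij; simp_all
    · simpa [hij] using this
  · intro v hv
    rw [mem_box] at hv
    have := hv j
    simp [hj] at this
    ext i
    by_cases hij : i = j
    · subst hij; simp [this]
    · simp [sh, hij]
  · intro v hv
    rw [mem_box] at hv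
    have := hv j
    simp [hj] at this
    ext i
    by_cases hij : i = j
    · subst hij; simp [this, sh]
    · simp [sh, hij]
  · intro v _; rfl

lemma sum_box_diff {ι : Type*} [Fintype ι] [DecidableEq ι] (N : ℕ) (S : Finset ι) (u : ι → ℕ) (j : ι)
    (hj : j ∈ S) (F : (ι → ℕ) → ZMod 2) :
    ∑ v ∈ box N S u, (F (sh j v) - F v) =
      ∑ v ∈ box N (S.erase j) (Function.update u j N), F v
      - ∑ v ∈ box N (S.erase j) (Function.update u j 0), F v := by
  rw [sum_box N S u j hj, ← Finset.sum_range_sub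
    (fun t => ∑ v ∈ box N (S.erase j) (Function.update u j t), F v)]
  refine Finset.sum_congr rfl fun t _ => ?_
  rw [Finset.sum_sub_distrib, sum_box_sh _ _ _ _ (by simp)]

lemma vanish {ι : Type*} [DecidableEq ι] (χ : ι → (ι → ℕ) → ZMod 2) (j : ι) (t : ℕ) (c : ZMod 2)
    (hc : ∀ v, v j = t → χ j v = c) (L : List ι) : ∀ (S : Finset ι) (v : ι → ℕ),
    j ∈ L → j ∉ S → v j = t → J χ L S v = 0 := by
  induction L with
  | nil => intro S v h; simp at h
  | cons i L ih =>
    intro S v hjL hjS hv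
    rw [J]
    refine Finset.sum_eq_zero fun k hk => ?_
    have hkj : j ≠ k := fun h => hjS (h ▸ hk)
    by_cases hij : i = j
    · subst hij
      rw [hc v hv, hc (sh k v) (by rw [sh_ne hkj, hv])]
      simp
    · rw [ih (S.erase k) (sh k v) ?_ ?_ ?_, mul_zero]
      · simpa [Ne.symm hij] using hjL
      · simp [hjS]
      · rw [sh_ne hkj, hv]

lemma sumJ {ι : Type*} [Fintype ι] [DecidableEq ι] (χ : ι → (ι → ℕ) → ZMod 2) (N : ℕ)
    (h0 : ∀ i v, v i = 0 → χ i v = 0) (h1 : ∀ i v, v i = N → χ i v = 1) (L : List ι) :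
    L.Nodup → ∀ u : ι → ℕ, ∑ v ∈ box N L.toFinset u, J χ L L.toFinset v = 1 := by
  induction L with
  | nil =>
    intro _ u
    have : box N (List.toFinset ([] : List ι)) u = {u} := by
      ext v
      simp [mem_box, funext_iff]
    rw [this]
    simp [J]
  | cons i L ih =>
    intro hnd u
    obtain ⟨hi, hnd⟩ := List.nodup_cons.1 hnd
    set S := (i :: L).toFinset with hS
    have hSi : S.erase i = L.toFinset := by
      rw [hS, List.toFinset_cons, Finset.erase_insert (by simpa using hi)]
    have hiS : i ∈ S := by simp [hS]
    have e1 : ∑ v ∈ box N S u, J χ (i :: L) S v =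
        ∑ j ∈ S, ∑ v ∈ box N S u, (χ i (sh j v) * J χ L (S.erase j) (sh j v)
          - χ i v * J χ L (S.erase j) v) := by
      rw [Finset.sum_comm]
      exact Finset.sum_congr rfl fun v _ => stokes_of_closed χ i L S v (closed χ L S v)
    rw [e1, Finset.sum_eq_single_of_mem i hiS]
    · rw [sum_box_diff N S u i hiS (fun v => χ i v * J χ L (S.erase i) v), hSi]
      have a0 : ∑ v ∈ box N L.toFinset (Function.update u i 0), χ i v * J χ L L.toFinset v = 0 := by
        refine Finset.sum_eq_zero fun v hv => ?_
        have := mem_box.1 hv i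
        simp [hi] at this
        rw [h0 i v this, zero_mul]
      rw [a0, sub_zero, ← ih hnd (Function.update u i N)]
      refine Finset.sum_congr rfl fun v hv => ?_
      have := mem_box.1 hv i
      simp [hi] at this
      rw [h1 i v this, one_mul]
    · intro j hjS hji
      have hjL : j ∈ L := by simpa [hS, hji] using hjS
      rw [sum_box_diff N S u j hjS (fun v => χ i v * J χ L (S.erase j) v)]
      rw [Finset.sum_eq_zero, Finset.sum_eq_zero, sub_zero]
      · intro v hv
        have := mem_box.1 hv j
        simp at this
        rw [vanish χ j 0 0 (h0 j) L _ v hjL (by simp) this, mul_zero]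
      · intro v hv
        have := mem_box.1 hv j
        simp at this
        rw [vanish χ j N 1 (h1 j) L _ v hjL (by simp) this, mul_zero]

lemma nonvanish {ι : Type*} [DecidableEq ι] (χ : ι → (ι → ℕ) → ZMod 2) (L : List ι) :
    ∀ (S : Finset ι) (v : ι → ℕ), J χ L S v ≠ 0 → ∀ i ∈ L, ∃ p q : ι → ℕ,
      (∀ k, v k ≤ p k ∧ p k ≤ v k + if k ∈ S then 1 else 0) ∧
      (∀ k, v k ≤ q k ∧ q k ≤ v k + if k ∈ S then 1 else 0) ∧ χ i p ≠ χ i q := by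
  induction L with
  | nil => intro S v _ i hi; simp at hi
  | cons a L ih =>
    intro S v hJ i hi
    rw [J] at hJ
    obtain ⟨j, hj, hne⟩ := Finset.exists_ne_zero_of_sum_ne_zero hJ
    have hne1 := left_ne_zero_of_mul hne
    have hne2 := right_ne_zero_of_mul hne
    rcases List.mem_cons.1 hi with rfl | hi
    · refine ⟨sh j v, v, fun k => ?_, fun k => by simp, sub_ne_zero.1 hne1⟩
      by_cases hk : k = j
      · subst hk; simp [sh, hj]
      · simp [sh, hk]
    · obtain ⟨p, q, hp, hq, h⟩ := ih _ _ hne2 i hi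
      have gen : ∀ p : ι → ℕ, (∀ k, sh j v k ≤ p k ∧ p k ≤ sh j v k + if k ∈ S.erase j then 1 else 0) →
          (∀ k, v k ≤ p k ∧ p k ≤ v k + if k ∈ S then 1 else 0) := by
        intro p hp k
        have := hp k
        by_cases hk : k = j
        · subst hk
          simp [sh] at this
          simp [hj]
          omega
        · simpa [sh, hk] using this
      exact ⟨p, q, gen p hp, gen q hq, h⟩

lemma exists_cell {ι : Type*} [Fintype ι] [DecidableEq ι] (χ : ι → (ι → ℕ) → ZMod 2) (N : ℕ)
    (h0 : ∀ i v, v i = 0 → χ i v = 0) (h1 : ∀ i v, v i = N → χ i v = 1) :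
    ∃ v : ι → ℕ, (∀ k, v k < N) ∧ ∀ i, ∃ p q : ι → ℕ, (∀ k, v k ≤ p k ∧ p k ≤ v k + 1) ∧
      (∀ k, v k ≤ q k ∧ q k ≤ v k + 1) ∧ χ i p ≠ χ i q := by
  have h := sumJ χ N h0 h1 Finset.univ.toList (Finset.nodup_toList _) 0
  have hne : ∑ v ∈ box N (Finset.univ.toList : List ι).toFinset 0,
      J χ Finset.univ.toList (Finset.univ.toList : List ι).toFinset v ≠ 0 := by
    rw [h]; exact one_ne_zero
  obtain ⟨v, hv, hJ⟩ := Finset.exists_ne_zero_of_sum_ne_zero hne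
  refine ⟨v, fun k => by simpa using mem_box.1 hv k, fun i => ?_⟩
  simpa using nonvanish χ _ _ v hJ i (by simp)

/-- Poincaré–Miranda. -/
theorem poincare_miranda {ι : Type*} [Fintype ι] [DecidableEq ι] (G : (ι → ℝ) → (ι → ℝ))
    (hG : Continuous G) (z : ι → ℝ)
    (h0 : ∀ x i, x i = 0 → G x i ≤ z i) (h1 : ∀ x i, x i = 1 → z i < G x i) :
    ∃ x : ι → ℝ, G x = z := by
  classical
  have cell : ∀ N : ℕ, ∃ v : ι → ℕ, (∀ k, v k < N + 1) ∧ ∀ i, ∃ p q : ι → ℕ,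
      (∀ k, v k ≤ p k ∧ p k ≤ v k + 1) ∧ (∀ k, v k ≤ q k ∧ q k ≤ v k + 1) ∧
      G (fun k => (p k : ℝ) / (N + 1 : ℕ)) i ≤ z i ∧
      z i < G (fun k => (q k : ℝ) / (N + 1 : ℕ)) i := by
    intro N
    obtain ⟨v, hv, h⟩ := exists_cell
      (fun i v => if z i < G (fun k => (v k : ℝ) / (N + 1 : ℕ)) i then (1 : ZMod 2) else 0) (N + 1)
      (by
        intro i v hv
        rw [if_neg]
        exact not_lt.2 (h0 _ _ (by simp [hv])))
      (by
        intro i v hv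
        rw [if_pos]
        refine h1 _ _ ?_
        simp only [hv]
        exact div_self (by positivity))
    refine ⟨v, hv, fun i => ?_⟩
    obtain ⟨p, q, hp, hq, hne⟩ := h i
    by_cases c1 : z i < G (fun k => (p k : ℝ) / (N + 1 : ℕ)) i
    · by_cases c2 : z i < G (fun k => (q k : ℝ) / (N + 1 : ℕ)) i
      · exact absurd (by simp only [if_pos c1, if_pos c2]) hne
      · exact ⟨q, p, hq, hp, not_lt.1 c2, c1⟩
    · by_cases c2 : z i < G (fun k => (q k : ℝ) / (N + 1 : ℕ)) i
      · exact ⟨p, q, hp, hq, not_lt.1 c1, c2⟩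
      · exact absurd (by simp only [if_neg c1, if_neg c2]) hne
  choose v hv p q hp hq hGp hGq using cell
  have hcpt : IsCompact (Set.Icc (0 : ι → ℝ) 1) := isCompact_Icc
  obtain ⟨x, -, φ, hφ, hx⟩ := hcpt.tendsto_subseq
    (x := fun N k => (v N k : ℝ) / (N + 1 : ℕ)) (by
      intro N
      constructor
      · intro k; simp only [Pi.zero_apply]; positivity
      · intro k
        simp only [Pi.one_apply]
        rw [div_le_one (by positivity)]
        exact_mod_cast (hv N k).le)
  have hN : Filter.Tendsto (fun m => (1 : ℝ) / ((φ m + 1 : ℕ) : ℝ)) Filter.atTop (nhds 0) := by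
    have := tendsto_one_div_add_atTop_nhds_zero_nat (𝕜 := ℝ)
    simpa [Function.comp_def] using this.comp hφ.tendsto_atTop
  have near : ∀ r : ℕ → ι → ℕ, (∀ N k, v N k ≤ r N k ∧ r N k ≤ v N k + 1) →
      Filter.Tendsto (fun m => (fun k => (r (φ m) k : ℝ) / (φ m + 1 : ℕ))) Filter.atTop (nhds x) := by
    intro r hr
    rw [tendsto_pi_nhds] at hx ⊢
    intro k
    have hxk := hx k
    refine tendsto_of_tendsto_of_tendsto_of_le_of_le hxk
      (by simpa only [add_zero] using hxk.add hN) ?_ ?_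
    · intro m
      simp only [Function.comp]
      gcongr
      exact (hr _ k).1
    · intro m
      simp only [Function.comp]
      rw [← add_div]
      gcongr
      exact_mod_cast (hr _ k).2
  refine ⟨x, funext fun i => le_antisymm ?_ ?_⟩
  · have t := ((continuous_apply i).comp hG).continuousAt.tendsto.comp
      (near (fun N => p N i) (fun N => hp N i))
    exact le_of_tendsto t (Filter.Eventually.of_forall fun m => hGp (φ m) i)
  · have t := ((continuous_apply i).comp hG).continuousAt.tendsto.comp
      (near (fun N => q N i) (fun N => hq N i))
    exact ge_of_tendsto t (Filter.Eventually.of_forall fun m => (hGq (φ m) i).le)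

end PM

namespace PM

lemma ofDigits_sep_aux (u v : ℕ → Bool) (k : ℕ) (hk : ∀ i < k, u i = v i) (hu : u k = true)
    (hv : v k = false) :
    ((3 : ℝ) ^ (k + 1))⁻¹ ≤ Real.ofDigits (fun i ↦ cond (u i) (2 : Fin 3) 0) -
      Real.ofDigits (fun i ↦ cond (v i) (2 : Fin 3) 0) := by
  rw [Real.ofDigits_eq_sum_add_ofDigits _ (k + 1),
    Real.ofDigits_eq_sum_add_ofDigits (fun i ↦ cond (v i) (2 : Fin 3) 0) (k + 1),
    Finset.sum_range_succ, Finset.sum_range_succ]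
  have : ∑ x ∈ Finset.range k, Real.ofDigitsTerm (fun i ↦ cond (u i) (2 : Fin 3) 0) x =
      ∑ x ∈ Finset.range k, Real.ofDigitsTerm (fun i ↦ cond (v i) (2 : Fin 3) 0) x := by
    refine Finset.sum_congr rfl fun x hx => ?_
    simp [Real.ofDigitsTerm, hk x (Finset.mem_range.1 hx)]
  rw [this]
  have e1 : Real.ofDigitsTerm (fun i ↦ cond (u i) (2 : Fin 3) 0) k = 2 * ((3 : ℝ) ^ (k + 1))⁻¹ := by
    simp [Real.ofDigitsTerm, hu]
  have e2 : Real.ofDigitsTerm (fun i ↦ cond (v i) (2 : Fin 3) 0) k = 0 := by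
    simp [Real.ofDigitsTerm, hv]
  rw [e1, e2]
  have a1 := Real.ofDigits_nonneg (fun i => (fun i ↦ cond (u i) (2 : Fin 3) 0) (i + (k + 1)))
  have a2 := Real.ofDigits_le_one (fun i => (fun i ↦ cond (v i) (2 : Fin 3) 0) (i + (k + 1)))
  push_cast
  have hp : (0 : ℝ) < ((3 : ℝ) ^ (k + 1))⁻¹ := by positivity
  nlinarith

/-- The Cantor function. -/
noncomputable def cf (c : cantorSet) : ℝ :=
  Real.ofDigits (fun i => cond (cantorSetEquivNatToBool c i) (1 : Fin 2) 0)

lemma cf_surj (t : ℝ) (ht : t ∈ Set.Icc (0 : ℝ) 1) : ∃ c, cf c = t := by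
  obtain ⟨d, -, rfl⟩ := Real.ofDigits_SurjOn (b := 2) (by norm_num) ht
  refine ⟨cantorSetEquivNatToBool.symm (fun i => decide (d i = 1)), ?_⟩
  rw [cf, Equiv.apply_symm_apply]
  congr 1
  ext i
  have : d i = 0 ∨ d i = 1 := by
    generalize d i = e
    revert e; decide
  rcases this with h | h <;> simp [h]

lemma cf_holder (x y : cantorSet) :
    |cf x - cf y| ≤ 2 * |(x : ℝ) - y| ^ (Real.log 2 / Real.log 3) := by
  have hx : (x : ℝ) = Real.ofDigits (fun i ↦ cond (cantorSetEquivNatToBool x i) (2 : Fin 3) 0) :=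
    congrArg Subtype.val (cantorSetEquivNatToBool.symm_apply_apply x).symm
  have hy : (y : ℝ) = Real.ofDigits (fun i ↦ cond (cantorSetEquivNatToBool y i) (2 : Fin 3) 0) :=
    congrArg Subtype.val (cantorSetEquivNatToBool.symm_apply_apply y).symm
  rw [hx, hy, cf, cf]
  generalize cantorSetEquivNatToBool x = u
  generalize cantorSetEquivNatToBool y = v
  by_cases huv : u = v
  · subst huv
    simp only [sub_self, abs_zero]
    positivity
  have hex : ∃ k, u k ≠ v k := Function.ne_iff.1 huv
  classical
  set k := Nat.find hex with hkdef
  have hk : u k ≠ v k := Nat.find_spec hex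
  have hlt : ∀ i < k, u i = v i := fun i hi => not_not.1 (Nat.find_min hex hi)
  have sep : ((3 : ℝ) ^ (k + 1))⁻¹ ≤ |Real.ofDigits (fun i ↦ cond (u i) (2 : Fin 3) 0) -
      Real.ofDigits (fun i ↦ cond (v i) (2 : Fin 3) 0)| := by
    cases hu : u k <;> cases hv : v k
    · exact absurd (hu.trans hv.symm) hk
    · rw [abs_sub_comm]
      exact (ofDigits_sep_aux v u k (fun i hi => (hlt i hi).symm) hv hu).trans (le_abs_self _)
    · exact (ofDigits_sep_aux u v k hlt hu hv).trans (le_abs_self _)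
    · exact absurd (hu.trans hv.symm) hk
  have up := Real.abs_ofDigits_sub_ofDigits_le (b := 2)
    (x := fun i => cond (u i) (1 : Fin 2) 0) (y := fun i => cond (v i) (1 : Fin 2) 0) (n := k)
    (fun i hi => by rw [hlt i hi])
  have l3 : 0 < Real.log 3 := Real.log_pos (by norm_num)
  have l2 : 0 < Real.log 2 := Real.log_pos (by norm_num)
  have e3 : (3 : ℝ) ^ (Real.log 2 / Real.log 3) = 2 := by
    rw [Real.rpow_def_of_pos (by norm_num), mul_div_cancel₀ _ l3.ne', Real.exp_log (by norm_num)]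
  calc _ ≤ (((2 : ℕ) : ℝ) ^ k)⁻¹ := up
    _ = 2 * (((3 : ℝ) ^ (k + 1))⁻¹) ^ (Real.log 2 / Real.log 3) := by
      rw [Real.inv_rpow (by positivity), ← Real.rpow_natCast 3, ← Real.rpow_mul (by norm_num),
        mul_comm ((k + 1 : ℕ) : ℝ), Real.rpow_mul (by norm_num), e3, Real.rpow_natCast]
      push_cast
      rw [pow_succ]
      field_simp
    _ ≤ _ := by gcongr

lemma prod_rpow_ennreal {ι : Type*} (S : Finset ι) (x : ℝ≥0∞) (r : ι → NNReal) :
    ∏ i ∈ S, x ^ (r i : ℝ) = x ^ ((∑ i ∈ S, r i : NNReal) : ℝ) := by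
  classical
  induction S using Finset.induction_on with
  | empty => simp
  | insert i S hi ih =>
    rw [Finset.prod_insert hi, Finset.sum_insert hi, ih, NNReal.coe_add,
      ENNReal.rpow_add_of_nonneg _ _ (NNReal.coe_nonneg _) (NNReal.coe_nonneg _)]

open MeasureTheory Metric in
lemma dim_lower {Y : Type*} [MetricSpace Y] {ι : Type*} [Fintype ι] (Ψ : ι → Y → ℝ)
    (K r : ι → NNReal) (hΨ : ∀ i, HolderWith (K i) (r i) (Ψ i))
    (hsurj : ∀ z : ι → ℝ, (∀ i, z i ∈ Set.Ioo (0 : ℝ) 1) → ∃ y, ∀ i, Ψ i y = z i) :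
    ((∑ i, r i : NNReal) : ℝ≥0∞) ≤ dimH (Set.univ : Set Y) := by
  borelize Y
  apply le_dimH_of_hausdorffMeasure_ne_zero
  intro hzero
  rw [Measure.hausdorffMeasure_apply] at hzero
  simp only [ENNReal.iSup_eq_zero] at hzero
  have hz1 := hzero 1 one_pos
  set Kp : NNReal := ∏ i, K i + 1 with hKp
  have hKpos : (Kp : ℝ≥0∞) ≠ 0 := by
    rw [hKp]; simp
  have hlt : (⨅ (t : ℕ → Set Y) (_ : Set.univ ⊆ ⋃ n, t n) (_ : ∀ n, ediam (t n) ≤ 1),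
          ∑' n, ⨆ _ : (t n).Nonempty, ediam (t n) ^ ((∑ i, r i : NNReal) : ℝ)) < (Kp : ℝ≥0∞)⁻¹ := by
    rw [hz1]
    simp
  simp only [iInf_lt_iff] at hlt
  obtain ⟨t, hcov, -, hsum⟩ := hlt
  let Φ : Y → ι → ℝ := fun y i => Ψ i y
  have hvol : volume (Set.pi Set.univ (fun _ : ι => Set.Ioo (0 : ℝ) 1)) = 1 := by
    rw [Real.volume_pi_Ioo]; simp
  have hsub : Set.pi Set.univ (fun _ : ι => Set.Ioo (0 : ℝ) 1) ⊆ ⋃ n, Φ '' (t n) := by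
    intro z hz
    obtain ⟨y, hy⟩ := hsurj z (fun i => hz i trivial)
    obtain ⟨n, hn⟩ := Set.mem_iUnion.1 (hcov (Set.mem_univ y))
    exact Set.mem_iUnion.2 ⟨n, y, hn, funext hy⟩
  have hpiece : ∀ n, volume (Φ '' (t n)) ≤
      Kp * ⨆ _ : (t n).Nonempty, ediam (t n) ^ ((∑ i, r i : NNReal) : ℝ) := by
    intro n
    rcases (t n).eq_empty_or_nonempty with he | hne
    · simp [he]
    · rw [iSup_pos hne]
      calc volume (Φ '' (t n)) ≤ ∏ i, ediam (Function.eval i '' (Φ '' (t n))) :=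
            Real.volume_pi_le_prod_diam _
        _ ≤ ∏ i, ((K i : ℝ≥0∞) * ediam (t n) ^ (r i : ℝ)) := by
            refine Finset.prod_le_prod' fun i _ => ?_
            rw [Set.image_image]
            exact (hΨ i).ediam_image_le (t n)
        _ = (∏ i, K i : NNReal) * ediam (t n) ^ ((∑ i, r i : NNReal) : ℝ) := by
            rw [Finset.prod_mul_distrib]
            congr 1
            · push_cast; rfl
            · exact prod_rpow_ennreal _ _ _
        _ ≤ _ := by
            gcongr
            rw [hKp]
            exact le_self_add
  have : (1 : ℝ≥0∞) < 1 := by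
    calc (1 : ℝ≥0∞) = volume (Set.pi Set.univ (fun _ : ι => Set.Ioo (0 : ℝ) 1)) := hvol.symm
      _ ≤ volume (⋃ n, Φ '' (t n)) := measure_mono hsub
      _ ≤ ∑' n, volume (Φ '' (t n)) := measure_iUnion_le _
      _ ≤ ∑' n, Kp * ⨆ _ : (t n).Nonempty, ediam (t n) ^ ((∑ i, r i : NNReal) : ℝ) :=
          ENNReal.tsum_le_tsum hpiece
      _ = Kp * ∑' n, ⨆ _ : (t n).Nonempty, ediam (t n) ^ ((∑ i, r i : NNReal) : ℝ) :=
          ENNReal.tsum_mul_left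
      _ < Kp * (Kp : ℝ≥0∞)⁻¹ := by
          exact ENNReal.mul_lt_mul_right hKpos ENNReal.coe_ne_top hsum
      _ = 1 := ENNReal.mul_inv_cancel hKpos ENNReal.coe_ne_top
  exact lt_irrefl _ this

end PM

namespace PM

lemma coord_le {n : ℕ} (x y : ↥(cantorCube n)) (i : Fin (n + 1)) :
    |x.1 i - y.1 i| ≤ dist x y := by
  have := PiLp.norm_apply_le (x.1 - y.1) i
  rw [Subtype.dist_eq, dist_eq_norm]
  simpa [Real.norm_eq_abs] using this

lemma holder_of_real {Y Z : Type*} [MetricSpace Y] [MetricSpace Z] (g : Y → Z) (K r : NNReal)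
    (h : ∀ x y, dist (g x) (g y) ≤ K * dist x y ^ (r : ℝ)) : HolderWith K r g := by
  intro x y
  rw [edist_dist, edist_dist, ENNReal.ofReal_rpow_of_nonneg dist_nonneg (NNReal.coe_nonneg r),
    ← ENNReal.ofReal_coe_nnreal, ← ENNReal.ofReal_mul (NNReal.coe_nonneg K)]
  exact ENNReal.ofReal_le_ofReal (h x y)

/-- The slice over `c`. -/
noncomputable def slice {n : ℕ} (c : cantorSet) (x : Fin n → ℝ) : ↥(cantorCube n) :=
  ⟨WithLp.toLp 2 (Fin.cons (c : ℝ) (fun k => (Set.projIcc (0 : ℝ) 1 zero_le_one (x k) : ℝ))), by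
    refine ⟨by simp, fun i hi => ?_⟩
    obtain ⟨k, rfl⟩ := Fin.exists_succ_eq.2 hi
    simp⟩

lemma slice_zero {n : ℕ} (c : cantorSet) (x : Fin n → ℝ) : (slice c x).1 0 = c := by
  simp [slice]

lemma slice_succ {n : ℕ} (c : cantorSet) (x : Fin n → ℝ) (k : Fin n) :
    (slice c x).1 k.succ = (Set.projIcc (0 : ℝ) 1 zero_le_one (x k) : ℝ) := by
  simp [slice]

lemma slice_continuous {n : ℕ} (c : cantorSet) : Continuous (slice (n := n) c) := by
  refine Continuous.subtype_mk ((PiLp.continuous_toLp 2 _).comp ?_) _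
  refine continuous_pi fun i => ?_
  refine Fin.cases ?_ (fun k => ?_) i
  · simp only [Fin.cons_zero]; exact continuous_const
  · simp only [Fin.cons_succ]
    exact continuous_subtype_val.comp (continuous_projIcc.comp (continuous_apply k))

end PM

/-- For `n ≥ 1`, if `Y` is a metric space and
`f : C × [0,1]^n → Y` is a `(l, a, b)`-bi-Hölder homeomorphism, then
`dimH Y ≥ n + log 2 / (a · log 3) > n`. -/
theorem statement4 (n : ℕ) (hn : 1 ≤ n) {Y : Type*} [MetricSpace Y]
    (l a b : ℝ) (hl : 0 < l) (ha : 0 < a) (hb : 0 < b)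
    (f : ↥(cantorCube n) → Y) (hsurj : Function.Surjective f)
    (hf : ∀ x y : ↥(cantorCube n),
      (1 / l) * dist x y ^ a ≤ dist (f x) (f y) ∧
        dist (f x) (f y) ≤ l * dist x y ^ b) :
    ENNReal.ofReal ((n : ℝ) + Real.log 2 / (a * Real.log 3)) ≤ dimH (Set.univ : Set Y) ∧
      (n : ℝ≥0∞) < dimH (Set.univ : Set Y) := by
  have l3 : 0 < Real.log 3 := Real.log_pos (by norm_num)
  have l2 : 0 < Real.log 2 := Real.log_pos (by norm_num)
  have hs : 0 < Real.log 2 / (a * Real.log 3) := by positivity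
  suffices main : ENNReal.ofReal ((n : ℝ) + Real.log 2 / (a * Real.log 3)) ≤
      dimH (Set.univ : Set Y) by
    refine ⟨main, lt_of_lt_of_le ?_ main⟩
    rw [← ENNReal.ofReal_natCast, ENNReal.ofReal_lt_ofReal_iff (by positivity)]
    linarith
  -- continuity and injectivity of f
  have hcont : Continuous f := by
    have : HolderWith ⟨l, hl.le⟩ ⟨b, hb.le⟩ f :=
      PM.holder_of_real f _ _ fun x y => (hf x y).2
    exact this.continuous hb
  have hinj : Function.Injective f := by
    intro x y hxy
    by_contra hne
    have h1 := (hf x y).1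
    rw [hxy, dist_self] at h1
    have : 0 < dist x y := dist_pos.2 hne
    have : 0 < 1 / l * dist x y ^ a := by positivity
    linarith
  obtain ⟨g, hg⟩ := hsurj.hasRightInverse
  have hgf : ∀ x, g (f x) = x := fun x => hinj (hg (f x))
  have hgd : ∀ y y2, dist (g y) (g y2) ≤ (l * dist y y2) ^ (1 / a) := by
    intro y y2
    have h1 := (hf (g y) (g y2)).1
    rw [hg y, hg y2, one_div, inv_mul_le_iff₀ hl] at h1
    calc dist (g y) (g y2) = (dist (g y) (g y2) ^ a) ^ (1 / a) := by
          rw [← Real.rpow_mul dist_nonneg, mul_one_div_cancel ha.ne', Real.rpow_one]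
      _ ≤ _ := by gcongr
  let s : NNReal := ⟨Real.log 2 / (a * Real.log 3), hs.le⟩
  let K0 : NNReal := ⟨2 * l ^ (Real.log 2 / (a * Real.log 3)), by positivity⟩
  let A : Fin n → Set ↥(cantorCube n) := fun i => {x | x.1 i.succ = 0}
  let Ψ : Fin (n + 1) → Y → ℝ := Fin.cons (fun y => PM.cf ⟨(g y).1 0, (g y).2.1⟩)
    (fun i y => l * Metric.infDist y (f '' A i))
  let K : Fin (n + 1) → NNReal := Fin.cons K0 (fun _ => ⟨l, hl.le⟩)
  let r : Fin (n + 1) → NNReal := Fin.cons s (fun _ => 1)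
  have key := PM.dim_lower Ψ K r ?_ ?_
  · have hr : ENNReal.ofReal ((n : ℝ) + Real.log 2 / (a * Real.log 3)) =
        ((∑ i, r i : NNReal) : ℝ≥0∞) := by
      rw [← ENNReal.ofReal_coe_nnreal]
      congr 1
      have hsum : ∑ i, r i = s + n := by
        rw [Fin.sum_univ_succ]
        simp only [r, Fin.cons_zero, Fin.cons_succ]
        simp
      rw [hsum, NNReal.coe_add, NNReal.coe_natCast, add_comm]
      rfl
    rw [hr]
    exact key
  · intro i
    apply PM.holder_of_real
    have toabs : ∀ u v : ℝ, dist u v = |u - v| := Real.dist_eq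
    simp only [toabs]
    refine Fin.cases ?_ (fun k => ?_) i
    · intro x y
      simp only [Ψ, K, r, Fin.cons_zero]
      refine (PM.cf_holder _ _).trans ?_
      have h1 : |(g x).1 0 - (g y).1 0| ≤ (l * dist x y) ^ (1 / a) :=
        (PM.coord_le (g x) (g y) 0).trans (hgd x y)
      calc 2 * |(g x).1 0 - (g y).1 0| ^ (Real.log 2 / Real.log 3)
          ≤ 2 * ((l * dist x y) ^ (1 / a)) ^ (Real.log 2 / Real.log 3) := by gcongr
        _ = 2 * (l * dist x y) ^ (Real.log 2 / (a * Real.log 3)) := by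
          rw [← Real.rpow_mul (by positivity)]
          congr 2
          field_simp
        _ = K0 * dist x y ^ (s : ℝ) := by
          rw [Real.mul_rpow hl.le dist_nonneg, ← mul_assoc]
          rfl
    · intro x y
      simp only [Ψ, K, r, Fin.cons_succ, NNReal.coe_one, Real.rpow_one]
      rw [← mul_sub, abs_mul, abs_of_pos hl]
      change l * _ ≤ l * _
      gcongr
      have := (Metric.lipschitz_infDist_pt (f '' A k)).dist_le_mul x y
      simpa [Real.dist_eq] using this
  · intro z hz
    obtain ⟨c, hc⟩ := PM.cf_surj (z 0) ⟨(hz 0).1.le, (hz 0).2.le⟩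
    obtain ⟨x, hx⟩ := PM.poincare_miranda
      (fun x i => l * Metric.infDist (f (PM.slice c x)) (f '' A i)) (by
        refine continuous_pi fun i => continuous_const.mul ?_
        exact (Metric.continuous_infDist_pt _).comp (hcont.comp (PM.slice_continuous c)))
      (fun i => z i.succ) (by
        intro x i hxi
        have hm : PM.slice c x ∈ A i := by
          change (PM.slice c x).1 i.succ = 0
          rw [PM.slice_succ, hxi, Set.projIcc_left]
        rw [Metric.infDist_zero_of_mem (Set.mem_image_of_mem f hm), mul_zero]
        exact (hz _).1.le) (by
        intro x i hxi
        have hne : (f '' A i).Nonempty := by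
          refine ⟨_, PM.slice c 0, ?_, rfl⟩
          change (PM.slice c 0).1 i.succ = 0
          rw [PM.slice_succ, Pi.zero_apply, Set.projIcc_left]
        have h1 : 1 / l ≤ Metric.infDist (f (PM.slice c x)) (f '' A i) := by
          rw [Metric.le_infDist hne]
          rintro _ ⟨w, hw, rfl⟩
          have hw : w.1 i.succ = 0 := hw
          refine le_trans ?_ (hf _ _).1
          have h2 := PM.coord_le (PM.slice c x) w i.succ
          rw [PM.slice_succ, hxi, Set.projIcc_right, hw] at h2
          have h3 : 1 ≤ dist (PM.slice c x) w := by simpa using h2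
          have h4 : 1 ≤ dist (PM.slice c x) w ^ a := Real.one_le_rpow h3 ha.le
          exact le_mul_of_one_le_right (by positivity) h4
        have h5 : 1 ≤ l * Metric.infDist (f (PM.slice c x)) (f '' A i) := by
          calc (1 : ℝ) = l * (1 / l) := by field_simp
            _ ≤ _ := by gcongr
        exact lt_of_lt_of_le (hz _).2 h5)
    refine ⟨f (PM.slice c x), fun i => ?_⟩
    refine Fin.cases ?_ (fun k => ?_) i
    · simp only [Ψ, Fin.cons_zero]
      rw [← hc]
      congr 1
      apply Subtype.ext
      simp only [hgf, PM.slice_zero]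
    · simp only [Ψ, Fin.cons_succ]
      exact congrFun hx k
end

section
/- There exists a compact, totally disconnected subset X of [0,1] (hence a compact, doubling metric space of topological dimension 0) such that dimH(X) = 1 and every metric space Y for which there exists a bi-Hölder homeomorphism f : X → Y satisfies dimH(Y) ≥ 1. Consequently X has Hölder dimension 1. -/
open scoped ENNReal

/-- The Hölder dimension of `X`: the infimum of the Hausdorff dimensions of all metric spaces
bi-Hölder homeomorphic to `X`. -/
noncomputable def holderDim (X : Type*) [MetricSpace X] : ℝ≥0∞ :=
  ⨅ (Y : Type) (mY : MetricSpace Y) (_ : @BiHolderEquivTo X _ Y mY), @dimHSpace Y mY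

open Set MeasureTheory Filter Topology

namespace HolderCantor

/-- a dense sequence of positive reals -/
noncomputable def cen (i : ℕ) : ℝ := (TopologicalSpace.denseSeq (Set.Ioi (0 : ℝ)) i : ℝ)

lemma cen_pos (i : ℕ) : 0 < cen i := (TopologicalSpace.denseSeq (Set.Ioi (0 : ℝ)) i).2

noncomputable def rad (i : ℕ) : ℝ := Real.exp (-(1 / cen i) - (i + 1 : ℝ))

lemma rad_pos (i : ℕ) : 0 < rad i := Real.exp_pos _

lemma rad_le (i : ℕ) : rad i ≤ cen i / 2 := by
  have hc := cen_pos i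
  have h1 : Real.exp (-(i + 1 : ℝ)) ≤ 1 / 2 := by
    have h2 : (2 : ℝ) ≤ Real.exp (i + 1 : ℝ) := by
      have := Real.add_one_le_exp (i + 1 : ℝ)
      have h0 : (0 : ℝ) ≤ i := by positivity
      linarith
    rw [Real.exp_neg, one_div]
    exact inv_anti₀ (by norm_num) h2
  have h2 : Real.exp (-(1 / cen i)) ≤ cen i := by
    rw [Real.exp_neg]
    have := Real.add_one_le_exp (1 / cen i)
    have h3 : 1 / cen i ≤ Real.exp (1 / cen i) := by linarith
    rw [inv_le_comm₀ (Real.exp_pos _) hc]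
    simpa using h3
  have : rad i = Real.exp (-(1 / cen i)) * Real.exp (-(i + 1 : ℝ)) := by
    rw [rad, ← Real.exp_add]; congr 1
  rw [this]
  calc _ ≤ cen i * (1 / 2) := mul_le_mul h2 h1 (Real.exp_pos _).le hc.le
    _ = _ := by ring

noncomputable def X : Set ℝ := Set.Icc 0 1 \ ⋃ i, Metric.ball (cen i) (rad i)

lemma X_sub : X ⊆ Set.Icc 0 1 := sdiff_subset

lemma X_compact : IsCompact X :=
  isCompact_Icc.diff (isOpen_iUnion fun _ => Metric.isOpen_ball)

lemma zero_mem : (0 : ℝ) ∈ X := by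
  refine ⟨by simp, ?_⟩
  simp only [mem_iUnion, not_exists, Metric.mem_ball, not_lt]
  intro i
  have := rad_le i
  have hc := cen_pos i
  rw [Real.dist_eq, zero_sub, abs_neg, abs_of_pos hc]
  linarith

lemma X_td : IsTotallyDisconnected X := by
  intro t ht hpre x hx y hy
  by_contra hne
  wlog hlt : x < y generalizing x y
  · exact this hy hx (Ne.symm hne) (lt_of_le_of_ne (not_lt.1 hlt) (Ne.symm hne))
  have hx0 : 0 ≤ x := (ht hx).1.1
  have hd := TopologicalSpace.denseRange_denseSeq (Set.Ioi (0 : ℝ))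
  have ho : IsOpen ((Subtype.val : Set.Ioi (0 : ℝ) → ℝ) ⁻¹' (Set.Ioo x y)) :=
    isOpen_Ioo.preimage continuous_subtype_val
  obtain ⟨i, hi⟩ := hd.exists_mem_open ho
    ⟨⟨(x + y) / 2, by simp only [mem_Ioi]; linarith⟩, by
      simp only [mem_preimage, mem_Ioo]; constructor <;> linarith⟩
  have hi' : cen i ∈ Set.Ioo x y := hi
  have := ht (hpre.Icc_subset hx hy (Ioo_subset_Icc_self hi'))
  exact this.2 (mem_iUnion.2 ⟨i, Metric.mem_ball_self (rad_pos i)⟩)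

noncomputable def K (b : ℝ) : ℝ := ∑' i : ℕ, Real.exp (-b * (i + 1 : ℝ))

lemma summ {b : ℝ} (hb : 0 < b) : Summable fun i : ℕ => Real.exp (-b * (i + 1 : ℝ)) := by
  have h : Summable fun i : ℕ => Real.exp (-b) ^ i :=
    summable_geometric_of_lt_one (Real.exp_pos _).le (by rw [Real.exp_lt_one_iff]; linarith)
  have h2 := h.mul_left (Real.exp (-b))
  refine h2.congr fun i => ?_
  rw [← Real.exp_nat_mul, ← Real.exp_add]; congr 1; ring

lemma gap_bound {L b s : ℝ} (hL : 0 < L) (hb : 0 < b) (hs : 0 < s) (hs1 : 1 ≤ 2 * s) (g : ℝ → ℝ)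
    (hg : ∀ x y, |g x - g y| ≤ L * |x - y| ^ b) :
    volume (g '' (Set.Icc 0 (1 / (2 * s)) \ X)) ≤
      ENNReal.ofReal (2 * L * Real.exp (-b * s) * K b) := by
  classical
  have hsub : g '' (Set.Icc 0 (1 / (2 * s)) \ X) ⊆ ⋃ i : ℕ,
      (if cen i ≤ 1 / s then Metric.closedBall (g (cen i)) (L * rad i ^ b) else ∅) := by
    rintro _ ⟨x, ⟨hx, hxX⟩, rfl⟩
    have hx1 : x ∈ Set.Icc (0 : ℝ) 1 :=
      ⟨hx.1, hx.2.trans (by rw [div_le_one (by positivity)]; exact hs1)⟩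
    have : x ∈ ⋃ i, Metric.ball (cen i) (rad i) := by
      by_contra hcon; exact hxX ⟨hx1, hcon⟩
    obtain ⟨i, hi⟩ := mem_iUnion.1 this
    refine mem_iUnion.2 ⟨i, ?_⟩
    rw [Metric.mem_ball, Real.dist_eq] at hi
    have hr := rad_le i
    have h1 : cen i ≤ 1 / s := by
      have h2 := (abs_lt.1 hi).1
      have h3 : cen i ≤ 2 * (1 / (2 * s)) := by linarith [hx.2]
      calc cen i ≤ _ := h3
        _ = 1 / s := by field_simp
    rw [if_pos h1, Metric.mem_closedBall, Real.dist_eq]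
    refine (hg _ _).trans ?_
    gcongr
  refine (measure_mono hsub).trans ((measure_iUnion_le _).trans ?_)
  have hsum := (summ hb).mul_left (2 * L * Real.exp (-b * s))
  rw [K, ← tsum_mul_left, ENNReal.ofReal_tsum_of_nonneg (fun i => by positivity) hsum]
  refine ENNReal.tsum_le_tsum fun i => ?_
  split_ifs with h
  · rw [Real.volume_closedBall]
    apply ENNReal.ofReal_le_ofReal
    have hc := cen_pos i
    have h1 : s ≤ 1 / cen i := by
      rw [le_div_iff₀ hc]; rw [le_div_iff₀ hs] at h; linarith
    have h2 : rad i ^ b ≤ Real.exp (-b * s) * Real.exp (-b * (i + 1 : ℝ)) := by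
      rw [rad, ← Real.exp_mul, ← Real.exp_add]
      apply Real.exp_le_exp.2
      nlinarith
    calc 2 * (L * rad i ^ b) = 2 * L * rad i ^ b := by ring
      _ ≤ 2 * L * (Real.exp (-b * s) * Real.exp (-b * (i + 1 : ℝ))) := by gcongr
      _ = _ := by ring
  · simp

lemma small {b : ℝ} (hb : 0 < b) (a C : ℝ) {ε : ℝ} (hε : 0 < ε) :
    ∀ᶠ s : ℝ in atTop, C * Real.exp (-b * s) < ε * (1 / (4 * s)) ^ a := by
  have h := (tendsto_rpow_mul_exp_neg_mul_atTop_nhds_zero a b hb).const_mul (C * 4 ^ a)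
  rw [mul_zero] at h
  filter_upwards [h.eventually (gt_mem_nhds hε), eventually_gt_atTop 0] with s hs h0
  have hp : 0 < (4 * s) ^ a := by positivity
  rw [Real.div_rpow (by norm_num) (by positivity), Real.one_rpow, mul_one_div, lt_div_iff₀ hp,
    Real.mul_rpow (by norm_num) h0.le]
  calc _ = C * 4 ^ a * (s ^ a * Real.exp (-b * s)) := by ring
    _ < ε := hs

lemma exists_pt : ∀ᶠ s : ℝ in atTop, ∃ p ∈ X, 1 / (4 * s) ≤ p ∧ p ≤ 1 / (2 * s) := by
  filter_upwards [small (b := 1) one_pos 1 (2 * 1 * K 1) one_pos, eventually_ge_atTop 1]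
    with s hs h1
  have h0 : 0 < s := by linarith
  by_contra! hcon
  have hg := gap_bound (L := 1) (b := 1) (s := s) one_pos one_pos h0 (by linarith) id
    (fun x y => by simp)
  have hsub : Set.Icc (1 / (4 * s)) (1 / (2 * s)) ⊆ id '' (Set.Icc 0 (1 / (2 * s)) \ X) := by
    intro x hx
    refine ⟨x, ⟨⟨le_trans (by positivity) hx.1, hx.2⟩, fun hX => ?_⟩, rfl⟩
    exact absurd hx.2 (not_le.2 (hcon x hX hx.1))
  have h2 := (measure_mono hsub).trans hg
  rw [Real.volume_Icc] at h2
  have h3 : 1 / (2 * s) - 1 / (4 * s) = 1 / (4 * s) := by field_simp; norm_num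
  rw [h3] at h2
  rw [Real.rpow_one] at hs
  have h4 : 2 * 1 * Real.exp (-1 * s) * K 1 < 1 / (4 * s) := by linarith
  exact absurd h2 (not_le.2 ((ENNReal.ofReal_lt_ofReal_iff (by positivity)).2 h4))

lemma abs_rpow_tri {b : ℝ} (hb : 0 < b) (hb1 : b ≤ 1) (x y z : ℝ) :
    |x - z| ^ b ≤ |x - y| ^ b + |y - z| ^ b :=
  (Real.rpow_le_rpow (abs_nonneg _) (abs_sub_le x y z) hb.le).trans
    (Real.rpow_add_le_add_rpow (abs_nonneg _) (abs_nonneg _) hb.le hb1)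

/-- McShane extension for Hölder functions. -/
lemma extend {L b : ℝ} (hL : 0 < L) (hb : 0 < b) (hb1 : b ≤ 1) (v : X → ℝ)
    (hv : ∀ x y : X, |v x - v y| ≤ L * |(x : ℝ) - y| ^ b) :
    ∃ g : ℝ → ℝ, (∀ x y, |g x - g y| ≤ L * |x - y| ^ b) ∧ ∀ x : X, g x = v x := by
  have : Nonempty X := ⟨⟨0, zero_mem⟩⟩
  have hbdd : ∀ x : ℝ, BddBelow (Set.range fun z : X => v z + L * |x - z| ^ b) := by
    intro x
    refine ⟨v ⟨0, zero_mem⟩ - L * |0 - x| ^ b, ?_⟩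
    rintro _ ⟨z, rfl⟩
    have h1 := (abs_le.1 (hv ⟨0, zero_mem⟩ z)).2
    have h2 := abs_rpow_tri hb hb1 0 x z
    simp only at h1 ⊢
    nlinarith
  have key : ∀ x y : ℝ, (⨅ z : X, v z + L * |x - z| ^ b) ≤
      (⨅ z : X, v z + L * |y - z| ^ b) + L * |x - y| ^ b := by
    intro x y
    rw [← sub_le_iff_le_add]
    refine le_ciInf fun z => ?_
    rw [sub_le_iff_le_add]
    refine ciInf_le_of_le (hbdd x) z ?_
    have h2 := abs_rpow_tri hb hb1 x y z
    nlinarith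
  refine ⟨fun x => ⨅ z : X, v z + L * |x - z| ^ b, fun x y => ?_, fun x => ?_⟩
  · have h1 := key x y
    have h2 := key y x
    rw [abs_sub_comm y x] at h2
    rw [abs_le]; constructor <;> linarith
  · apply le_antisymm
    · refine ciInf_le_of_le (hbdd x) x ?_
      simp [Real.zero_rpow hb.ne']
    · refine le_ciInf fun z => ?_
      have := (abs_le.1 (hv x z)).2
      linarith

lemma main (Y : Type) [MetricSpace Y] (h : BiHolderEquivTo X Y) : 1 ≤ dimHSpace Y := by
  obtain ⟨l, a, b', f, hl, ha, hb', -, hf⟩ := h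
  set b := min b' 1 with hbdef
  have hb : 0 < b := lt_min hb' one_pos
  have hb1 : b ≤ 1 := min_le_right _ _
  let z0 : X := ⟨0, zero_mem⟩
  let φ : Y → ℝ := dist (f z0)
  have hφ : LipschitzWith 1 φ := LipschitzWith.dist_right _
  let v : X → ℝ := fun x => φ (f x)
  have hv : ∀ x y : X, |v x - v y| ≤ l * |(x : ℝ) - y| ^ b := by
    intro x y
    have h1 : |v x - v y| ≤ dist (f x) (f y) := by
      have := hφ.dist_le_mul (f x) (f y)
      rw [Real.dist_eq] at this
      simpa using this
    have h2 := (hf x y).2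
    have hd : dist x y = |(x : ℝ) - y| := rfl
    rw [hd] at h2
    have hle : |(x : ℝ) - y| ≤ 1 := by
      have hx := X_sub x.2
      have hy := X_sub y.2
      rw [abs_le]; constructor <;> linarith [hx.1, hx.2, hy.1, hy.2]
    have h3 := Real.rpow_le_rpow_of_exponent_ge' (abs_nonneg _) hle hb.le (min_le_left b' 1)
    exact h1.trans (h2.trans (by gcongr))
  obtain ⟨g, hg, hgv⟩ := extend hl hb hb1 v hv
  have hcont : Continuous g := by
    rw [continuous_iff_continuousAt]
    intro x
    rw [ContinuousAt, tendsto_iff_dist_tendsto_zero]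
    have h1 : Tendsto (fun y : ℝ => l * |y - x| ^ b) (𝓝 x) (𝓝 0) := by
      have : Continuous fun y : ℝ => l * |y - x| ^ b :=
        continuous_const.mul ((continuous_abs.comp (continuous_id.sub continuous_const)).rpow_const
          (fun _ => Or.inr hb.le))
      have h2 := this.tendsto x
      simpa [Real.zero_rpow hb.ne'] using h2
    exact squeeze_zero (fun _ => dist_nonneg) (fun y => hg y x) h1
  have hne : volume (Set.range v) ≠ 0 := by
    intro h0
    obtain ⟨s, ⟨p, hpX, hp1, hp2⟩, hs, hs1⟩ := (exists_pt.and ((small hb a (2 * l * K b)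
      (ε := 1 / l) (by positivity)).and (eventually_ge_atTop 1))).exists
    have hs0 : 0 < s := by linarith
    have hp0 : 0 ≤ p := le_trans (by positivity) hp1
    have hgap := gap_bound hl hb hs0 (by linarith) g hg
    have hsub : Set.Icc (g 0) (g p) ⊆ Set.range v ∪ g '' (Set.Icc 0 (1 / (2 * s)) \ X) := by
      intro y hy
      obtain ⟨x, hx, rfl⟩ := intermediate_value_Icc hp0 hcont.continuousOn hy
      by_cases hxX : x ∈ X
      · exact Or.inl ⟨⟨x, hxX⟩, (hgv ⟨x, hxX⟩).symm⟩
      · exact Or.inr ⟨x, ⟨⟨hx.1, hx.2.trans hp2⟩, hxX⟩, rfl⟩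
    have hvol := (measure_mono (μ := volume) hsub).trans (measure_union_le _ _)
    rw [h0, zero_add, Real.volume_Icc] at hvol
    have hvol2 := hvol.trans hgap
    have e0 : g 0 = 0 := by
      have := hgv z0
      simpa [v, φ, z0] using this
    have ep : g p = dist (f z0) (f ⟨p, hpX⟩) := hgv ⟨p, hpX⟩
    have h5 := (hf z0 ⟨p, hpX⟩).1
    have hd : dist z0 (⟨p, hpX⟩ : X) = p := by
      change |(0 : ℝ) - p| = p
      rw [zero_sub, abs_neg, abs_of_nonneg hp0]
    rw [hd, ← ep] at h5
    have h6 : 1 / l * (1 / (4 * s)) ^ a ≤ 1 / l * p ^ a := by gcongr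
    have h7 : 2 * l * Real.exp (-b * s) * K b < g p - g 0 := by rw [e0]; linarith
    have h8 : 0 < g p - g 0 := by
      rw [e0, sub_zero]
      refine lt_of_lt_of_le ?_ (h6.trans h5)
      positivity
    exact absurd hvol2 (not_le.2 ((ENNReal.ofReal_lt_ofReal_iff h8).2 h7))
  have hdim : (1 : ℝ≥0∞) ≤ dimH (Set.range v) := by
    have := le_dimH_of_hausdorffMeasure_ne_zero (s := Set.range v) (d := 1)
      (by simpa [hausdorffMeasure_real] using hne)
    simpa using this
  have hsub : Set.range v ⊆ φ '' Set.univ := by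
    rintro _ ⟨x, rfl⟩; exact ⟨f x, trivial, rfl⟩
  exact hdim.trans ((dimH_mono hsub).trans (hφ.dimH_image_le _))

lemma self_equiv : BiHolderEquivTo X X :=
  ⟨1, 1, 1, id, one_pos, one_pos, one_pos, Function.surjective_id, fun x y => by simp⟩

lemma dimHSpace_X : dimHSpace X = dimH X := by
  rw [dimHSpace, ← (isometry_subtype_coe (s := X)).dimH_image]; simp

lemma dimH_X : dimH X = 1 := by
  apply le_antisymm
  · rw [← Real.dimH_univ]; exact dimH_mono (subset_univ _)
  · rw [← dimHSpace_X]; exact main X self_equiv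

end HolderCantor

/-- There is a compact, totally disconnected subset `X ⊆ [0,1]` with
`dimH X = 1` such that every metric space bi-Hölder homeomorphic to `X` has Hausdorff
dimension at least `1`; consequently `X` has Hölder dimension `1`. -/
theorem statement5 :
    ∃ X : Set ℝ, X ⊆ Set.Icc (0 : ℝ) 1 ∧ IsCompact X ∧ IsTotallyDisconnected X ∧
      dimH X = 1 ∧
      (∀ (Y : Type) (mY : MetricSpace Y),
        @BiHolderEquivTo ↥X _ Y mY → 1 ≤ @dimHSpace Y mY) ∧
      holderDim ↥X = 1 := by
  refine ⟨HolderCantor.X, HolderCantor.X_sub, HolderCantor.X_compact, HolderCantor.X_td,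
    HolderCantor.dimH_X, fun Y mY h => HolderCantor.main Y h, ?_⟩
  apply le_antisymm
  · refine (iInf_le_of_le (↥HolderCantor.X) (iInf_le_of_le (Subtype.metricSpace)
      (iInf_le_of_le HolderCantor.self_equiv le_rfl))).trans ?_
    rw [HolderCantor.dimHSpace_X, HolderCantor.dimH_X]
  · exact le_iInf fun Y => le_iInf fun mY => le_iInf fun h => HolderCantor.main Y h
end

section
/- Let X be a metric space and 𝒰 a finite open cover of X with multiplicity at most m+1 whose members are all proper subsets of X. Then for all x, y ∈ X, |Σ_{U∈𝒰} d(x, X∖U) − Σ_{U∈𝒰} d(y, X∖U)| ≤ 2(m+1)·d(x,y). -/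
open scoped Classical

/-- If `𝒰` is a finite open cover of a metric space `X` with multiplicity at
most `m+1`, all of whose members are proper subsets of `X`, then the function
`x ↦ ∑_{U ∈ 𝒰} d(x, X∖U)` is `2(m+1)`-Lipschitz. -/
theorem statement11 {X : Type*} [MetricSpace X] (m : ℕ) (𝒰 : Finset (Set X))
    (hopen : ∀ U ∈ 𝒰, IsOpen U)
    (hcover : ∀ x : X, ∃ U ∈ 𝒰, x ∈ U)
    (hproper : ∀ U ∈ 𝒰, U ≠ Set.univ)
    (hmult : ∀ x : X, (𝒰.filter fun U => x ∈ U).card ≤ m + 1)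
    (x y : X) :
    |(∑ U ∈ 𝒰, Metric.infDist x Uᶜ) - ∑ U ∈ 𝒰, Metric.infDist y Uᶜ| ≤
      2 * ((m : ℝ) + 1) * dist x y := by
  have key : ∀ U ∈ 𝒰, |Metric.infDist x Uᶜ - Metric.infDist y Uᶜ| ≤
      (if x ∈ U then dist x y else 0) + (if y ∈ U then dist x y else 0) := by
    intro U _
    have h1 : Metric.infDist x Uᶜ ≤ Metric.infDist y Uᶜ + dist x y :=
      Metric.infDist_le_infDist_add_dist
    have h2 : Metric.infDist y Uᶜ ≤ Metric.infDist x Uᶜ + dist y x :=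
      Metric.infDist_le_infDist_add_dist
    rw [dist_comm y x] at h2
    have hd : 0 ≤ dist x y := dist_nonneg
    have hz : ∀ z : X, z ∉ U → Metric.infDist z Uᶜ = 0 := fun z hz =>
      Metric.infDist_zero_of_mem hz
    by_cases hx : x ∈ U
    · have : 0 ≤ (if y ∈ U then dist x y else 0) := by split_ifs <;> simp
      rw [if_pos hx, abs_le]
      constructor <;> linarith
    · by_cases hy : y ∈ U
      · rw [if_neg hx, if_pos hy, abs_le]
        constructor <;> linarith
      · simp [hx, hy, hz x hx, hz y hy]
  have cnt : ∀ z : X, ∑ U ∈ 𝒰, (if z ∈ U then dist x y else 0) ≤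
      ((m : ℝ) + 1) * dist x y := by
    intro z
    rw [← Finset.sum_filter, Finset.sum_const, nsmul_eq_mul]
    have h : (((𝒰.filter fun U => z ∈ U).card : ℕ) : ℝ) ≤ (m : ℝ) + 1 := by
      exact_mod_cast hmult z
    exact mul_le_mul_of_nonneg_right h dist_nonneg
  rw [← Finset.sum_sub_distrib]
  refine (Finset.abs_sum_le_sum_abs _ _).trans ((Finset.sum_le_sum key).trans ?_)
  rw [Finset.sum_add_distrib]
  linarith [cnt x, cnt y]
end

section
/- Let n ≥ 1, let C ⊆ [0,1] be the standard ternary (1/3-)Cantor set, and let X = C × [0,1]^n ⊆ ℝ^{n+1} with the Euclidean metric. Then X has capacity dimension exactly n: there exists σ ∈ (0,1) such that for every sufficiently small δ > 0 there is an (n+1)-coloured open cover of X with mesh at most δ and Lebesgue number at least σδ, and no such statement holds with n colours in place of n+1 for any σ ∈ (0,1). -/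
/-- A family of sets is `m`-coloured if it is the union of `m` subfamilies, each consisting of
pairwise disjoint sets. -/
def IsColoured {X : Type*} (m : ℕ) (𝒰 : Set (Set X)) : Prop :=
  ∃ c : Set X → Fin m, ∀ U ∈ 𝒰, ∀ V ∈ 𝒰, U ≠ V → c U = c V → Disjoint U V

/-- For every sufficiently small `δ > 0` the metric space `X` has an `m`-coloured open cover
with mesh at most `δ` and Lebesgue number at least `σδ`. -/
def HasColouredCovers (X : Type*) [MetricSpace X] (m : ℕ) (σ : ℝ) : Prop :=
  ∃ δ₀ : ℝ, 0 < δ₀ ∧ ∀ δ : ℝ, 0 < δ → δ ≤ δ₀ →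
    ∃ 𝒰 : Set (Set X), (∀ U ∈ 𝒰, IsOpen U) ∧ (∀ x : X, ∃ U ∈ 𝒰, x ∈ U) ∧
      IsColoured m 𝒰 ∧ (∀ U ∈ 𝒰, Metric.diam U ≤ δ) ∧
      (∀ x : X, ∃ U ∈ 𝒰, Metric.ball x (σ * δ) ⊆ U)

section Comb
variable {ι : Type*} [DecidableEq ι]

/-- unit step in direction `j` -/
def stepAt (j : ι) (x : ι → ℕ) : ι → ℕ := Function.update x j (x j + 1)

lemma stepAt_comm (j k : ι) (x : ι → ℕ) : stepAt j (stepAt k x) = stepAt k (stepAt j x) := by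
  funext m
  by_cases h1 : m = j <;> by_cases h2 : m = k <;> by_cases h3 : j = k <;>
    simp_all [stepAt, Function.update_apply]

/-- discrete mod 2 Jacobian -/
def discJac (F : ι → (ι → ℕ) → ZMod 2) : List ι → Finset ι → (ι → ℕ) → ZMod 2
  | [], _, _ => 1
  | i :: l, S, x => ∑ j ∈ S,
      (F i (stepAt j x) * discJac F l (S.erase j) (stepAt j x) - F i x * discJac F l (S.erase j) x)

lemma discJac_closed (F : ι → (ι → ℕ) → ZMod 2) (l : List ι) (S : Finset ι) (x : ι → ℕ) :
    ∑ j ∈ S, (discJac F l (S.erase j) (stepAt j x) - discJac F l (S.erase j) x) = 0 := by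
  cases l with
  | nil => simp [discJac]
  | cons i l =>
    simp only [discJac]
    simp only [← Finset.sum_sub_distrib]
    rw [Finset.sum_sigma']
    refine Finset.sum_involution (fun a _ => ⟨a.2, a.1⟩) ?_ ?_ ?_ ?_
    · rintro ⟨j, k⟩ h
      simp only
      rw [stepAt_comm k j, Finset.erase_right_comm (a := k) (b := j)]
      set a := F i (stepAt j (stepAt k x))
      have : ∀ a b c d : ZMod 2, (a - b - (c - d)) + (a - c - (b - d)) = 0 := by decide
      exact this _ _ _ _
    · rintro ⟨j, k⟩ h _ h2
      simp at h h2
      exact h.2.1 h2.1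
    · rintro ⟨j, k⟩ h
      simp at h ⊢
      exact ⟨h.2.2, Ne.symm h.2.1, h.1⟩
    · rintro ⟨j, k⟩ h
      rfl

lemma discJac_cons (F : ι → (ι → ℕ) → ZMod 2) (i : ι) (l : List ι) (S : Finset ι) (x : ι → ℕ) :
    discJac F (i :: l) S x =
      ∑ j ∈ S, (F i (stepAt j x) - F i x) * discJac F l (S.erase j) (stepAt j x) := by
  have h := discJac_closed F l S x
  have h2 : F i x * ∑ j ∈ S, (discJac F l (S.erase j) (stepAt j x)
      - discJac F l (S.erase j) x) = 0 := by rw [h, mul_zero]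
  rw [Finset.mul_sum] at h2
  rw [← sub_zero (discJac F (i :: l) S x), ← h2]
  simp only [discJac]
  rw [← Finset.sum_sub_distrib]
  refine Finset.sum_congr rfl fun j _ => ?_
  ring

lemma discJac_local (F : ι → (ι → ℕ) → ZMod 2) (k : ι) (l : List ι) : ∀ (S : Finset ι) (x : ι → ℕ),
    k ∈ l → (∀ z : ι → ℕ, (∀ m, m ∉ S → z m = x m) → (∀ m, z m = x m ∨ z m = x m + 1) →
      F k z = F k x) → discJac F l S x = 0 := by
  induction l with
  | nil => intro S x h; simp at h
  | cons i l ih =>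
    intro S x hk hF
    rw [discJac_cons]
    refine Finset.sum_eq_zero fun j hj => ?_
    have hstep : F k (stepAt j x) = F k x := by
      apply hF
      · intro m hm
        have : m ≠ j := by rintro rfl; exact hm hj
        simp [stepAt, this]
      · intro m
        by_cases h : m = j
        · subst h; simp [stepAt]
        · simp [stepAt, h]
    rcases List.mem_cons.1 hk with rfl | hk
    · rw [hstep]; simp
    · rw [ih (S.erase j) (stepAt j x) hk, mul_zero]
      intro z hz1 hz2
      rw [hstep]
      apply hF
      · intro m hm
        have : m ≠ j := by rintro rfl; exact hm hj
        rw [hz1 m (by simp [hm])]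
        simp [stepAt, this]
      · intro m
        by_cases h : m = j
        · subst h
          rw [hz1 m (by simp)]
          simp [stepAt]
        · have := hz2 m
          simpa [stepAt, h] using this

variable [Fintype ι]

/-- the box -/
def gridBox (N : ℕ) (S : Finset ι) (c : ι → ℕ) : Finset (ι → ℕ) :=
  Fintype.piFinset (fun i => if i ∈ S then Finset.range N else {c i})

lemma mem_gridBox {N : ℕ} {S : Finset ι} {c y : ι → ℕ} :
    y ∈ gridBox N S c ↔ ∀ i, (i ∈ S → y i < N) ∧ (i ∉ S → y i = c i) := by
  unfold gridBox
  rw [Fintype.mem_piFinset]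
  refine forall_congr' fun i => ?_
  by_cases h : i ∈ S <;> simp [h]

lemma sum_gridBox {N : ℕ} {S : Finset ι} (c : ι → ℕ) {j : ι} (hj : j ∈ S)
    (g : (ι → ℕ) → ZMod 2) :
    ∑ y ∈ gridBox N S c, g y =
      ∑ y ∈ gridBox N (S.erase j) (Function.update c j 0), ∑ t ∈ Finset.range N,
        g (Function.update y j t) := by
  rw [Finset.sum_sigma']
  refine Finset.sum_bij' (fun y _ => ⟨Function.update y j 0, y j⟩)
    (fun a _ => Function.update a.1 j a.2) ?_ ?_ ?_ ?_ ?_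
  · intro y hy
    rw [mem_gridBox] at hy
    simp only [Finset.mem_sigma, mem_gridBox, Finset.mem_range]
    refine ⟨fun i => ?_, (hy j).1 hj⟩
    by_cases h : i = j
    · subst h; simp
    · simpa [h] using hy i
  · rintro ⟨y, t⟩ hy
    simp only [Finset.mem_sigma, mem_gridBox, Finset.mem_range] at hy
    rw [mem_gridBox]
    intro i
    by_cases h : i = j
    · subst h; simpa [hj] using hy.2
    · simpa [h] using hy.1 i
  · intro y hy; simp
  · rintro ⟨y, t⟩ hy
    simp only [Finset.mem_sigma, mem_gridBox, Finset.mem_range] at hy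
    have : y j = 0 := by simpa using (hy.1 j).2 (by simp)
    simp [← this]
  · intro y hy; simp

lemma sum_discJac (F : ι → (ι → ℕ) → ZMod 2) (N : ℕ) (h0 : ∀ i x, x i = 0 → F i x = 1)
    (hN : ∀ i x, x i = N → F i x = 0) (l : List ι) : l.Nodup → ∀ c : ι → ℕ,
    ∑ y ∈ gridBox N l.toFinset c, discJac F l l.toFinset y = 1 := by
  induction l with
  | nil =>
    intro _ c
    have : gridBox N (List.toFinset ([] : List ι)) c = {c} := by
      ext y; simp [mem_gridBox, funext_iff]
    rw [this]; simp [discJac]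
  | cons i l ih =>
    intro hl c
    rw [List.nodup_cons] at hl
    set S := (i :: l).toFinset with hS
    have hSi : S.erase i = l.toFinset := by
      rw [hS, List.toFinset_cons, Finset.erase_insert]; simpa using hl.1
    simp only [discJac]
    rw [Finset.sum_comm]
    have key : ∀ j ∈ S, (∑ y ∈ gridBox N S c, (F i (stepAt j y) * discJac F l (S.erase j)
        (stepAt j y) - F i y * discJac F l (S.erase j) y)) = if j = i then 1 else 0 := by
      intro j hj
      rw [sum_gridBox c hj]
      have tel : ∀ y : ι → ℕ, ∑ t ∈ Finset.range N,
          (F i (stepAt j (Function.update y j t)) * discJac F l (S.erase j)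
            (stepAt j (Function.update y j t)) -
            F i (Function.update y j t) * discJac F l (S.erase j) (Function.update y j t)) =
          F i (Function.update y j N) * discJac F l (S.erase j) (Function.update y j N) -
          F i (Function.update y j 0) * discJac F l (S.erase j) (Function.update y j 0) := by
        intro y
        rw [← Finset.sum_range_sub (fun t => F i (Function.update y j t) *
          discJac F l (S.erase j) (Function.update y j t))]
        refine Finset.sum_congr rfl fun t _ => ?_
        simp [stepAt]
      simp only [tel]
      split_ifs with hji
      · subst hji
        rw [hSi]
        have := ih hl.2 (Function.update c j 0)
        rw [← this]
        refine Finset.sum_congr rfl fun y hy => ?_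
        rw [mem_gridBox] at hy
        have hy0 : y j = 0 := by
          simpa using (hy j).2 (by simpa using hl.1)
        rw [hN j _ (by simp), h0 j _ (by simp)]
        have : Function.update y j 0 = y := by rw [← hy0]; simp
        rw [this, zero_mul, one_mul, zero_sub]
        exact CharTwo.neg_eq _
      · have hjl : j ∈ l := by
          have : j = i ∨ j ∈ l := by simpa [hS] using hj
          exact this.resolve_left hji
        refine Finset.sum_eq_zero fun y hy => ?_
        have v : ∀ v, (v = 0 ∨ v = N) →
            discJac F l (S.erase j) (Function.update y j v) = 0 := by
          intro v hv
          apply discJac_local F j l _ _ hjl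
          intro z hz _
          have hzj : z j = v := by simpa using hz j (by simp)
          rcases hv with rfl | rfl
          · rw [h0 j _ hzj, h0 j _ (by simp)]
          · rw [hN j _ hzj, hN j _ (by simp)]
        rw [v N (Or.inr rfl), v 0 (Or.inl rfl)]; simp
    rw [Finset.sum_congr rfl key]
    simp [hS]

lemma exists_full_cube (F : ι → (ι → ℕ) → ZMod 2) (N : ℕ) (h0 : ∀ i x, x i = 0 → F i x = 1)
    (hN : ∀ i x, x i = N → F i x = 0) :
    ∃ x : ι → ℕ, ∀ i, ∃ z : ι → ℕ, (∀ m, z m = x m ∨ z m = x m + 1) ∧ F i z ≠ F i x := by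
  by_contra! hcon
  have h := sum_discJac F N h0 hN (Finset.univ : Finset ι).toList (Finset.nodup_toList _) 0
  rw [Finset.sum_eq_zero] at h
  · exact zero_ne_one h
  · intro y _
    obtain ⟨i, hi⟩ := hcon y
    exact discJac_local F i _ _ _ (by simp) (fun z _ hz => hi z hz)

end Comb

lemma euclid_dist_le {n : ℕ} (x y : EuclideanSpace ℝ (Fin (n + 1))) (s : ℝ)
    (h : ∀ i, |x i - y i| ≤ s) : dist x y ≤ (n + 1) * s := by
  have hs : 0 ≤ s := (abs_nonneg _).trans (h 0)
  rw [EuclideanSpace.dist_eq]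
  apply Real.sqrt_le_iff.2 ⟨by positivity, ?_⟩
  calc ∑ i, dist (x i) (y i) ^ 2 ≤ ∑ i : Fin (n + 1), s ^ 2 := by
        refine Finset.sum_le_sum fun i _ => ?_
        rw [Real.dist_eq]
        exact pow_le_pow_left₀ (abs_nonneg _) (h i) 2
    _ = (n + 1) * s ^ 2 := by simp
    _ ≤ ((n + 1) * s) ^ 2 := by
        have : (0 : ℝ) ≤ n := Nat.cast_nonneg n
        nlinarith [mul_nonneg this (sq_nonneg s), mul_nonneg (mul_nonneg this this) (sq_nonneg s)]

lemma euclid_coord_le {n : ℕ} (x y : EuclideanSpace ℝ (Fin (n + 1))) (i : Fin (n + 1)) :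
    |x i - y i| ≤ dist x y := by
  rw [dist_eq_norm]
  have := PiLp.norm_apply_le (x - y) i
  simpa using this

lemma cantorCube_isBounded {n : ℕ} (U : Set (cantorCube n)) : Bornology.IsBounded U := by
  rw [Metric.isBounded_iff]
  refine ⟨(n + 1) * 1, fun x _ y _ => ?_⟩
  apply euclid_dist_le
  have key : ∀ (z : cantorCube n) (i : Fin (n + 1)), z.1 i ∈ Set.Icc (0 : ℝ) 1 := by
    intro z i
    by_cases h : i = 0
    · subst h; exact cantorSet_subset_unitInterval z.2.1
    · exact z.2.2 i h
  intro i
  have h1 := key x i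
  have h2 := key y i
  rw [Set.mem_Icc] at h1 h2
  rw [abs_le]; constructor <;> linarith

/-- grid point -/
noncomputable def gridPt (n N : ℕ) (x : Fin n → ℕ) : cantorCube n :=
  ⟨WithLp.toLp 2 (Fin.cons 0 (fun i => ((min (x i) N : ℕ) : ℝ) / N)), by
    constructor
    · simpa using zero_mem_cantorSet
    · intro i hi
      obtain ⟨j, rfl⟩ := Fin.exists_succ_eq.2 hi
      simp only [Fin.cons_succ, Set.mem_Icc]
      constructor
      · positivity
      · apply div_le_one_of_le₀ _ (Nat.cast_nonneg _)
        exact_mod_cast min_le_right _ _⟩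

lemma gridPt_zero (n N : ℕ) (x : Fin n → ℕ) : (gridPt n N x).1 0 = 0 := by simp [gridPt]
lemma gridPt_succ (n N : ℕ) (x : Fin n → ℕ) (i : Fin n) :
    (gridPt n N x).1 i.succ = ((min (x i) N : ℕ) : ℝ) / N := by simp [gridPt]

lemma lower_bound (n : ℕ) (σ : ℝ) (hσ : 0 < σ) : ¬ HasColouredCovers ↥(cantorCube n) n σ := by
  rintro ⟨δ₀, hδ₀, H⟩
  obtain ⟨𝒰, -, -, ⟨c, hc⟩, hdiam, hleb⟩ := H (min δ₀ (1 / 2)) (by positivity) (min_le_left _ _)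
  set δ := min δ₀ (1 / 2) with hδ
  have hδpos : 0 < δ := by positivity
  have hδhalf : δ ≤ 1 / 2 := min_le_right _ _
  obtain ⟨N, hNl⟩ := exists_nat_gt (((n : ℝ) + 1) / (σ * δ))
  have hNpos : (0 : ℝ) < N := lt_of_le_of_lt (by positivity) hNl
  have hN0 : N ≠ 0 := by rintro rfl; simp at hNpos
  have hfine : ((n : ℝ) + 1) * (1 / N) < σ * δ := by
    rw [div_lt_iff₀ (by positivity)] at hNl
    rw [mul_one_div, div_lt_iff₀ hNpos]; linarith
  classical
  let low : Fin n → Set (cantorCube n) → Prop := fun i U => ∃ z ∈ U, z.1 i.succ = 0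
  let F : Fin n → (Fin n → ℕ) → ZMod 2 := fun i x =>
    if x i = 0 ∨ ∃ U ∈ 𝒰, c U = i ∧ gridPt n N x ∈ U ∧ low i U then 1 else 0
  obtain ⟨x, hx⟩ := exists_full_cube F N (by
    intro i x h; simp [F, h]) (by
    intro i x h
    simp only [F]
    rw [if_neg]
    rintro (h' | ⟨U, hU, -, hxU, z, hz, hz0⟩)
    · exact hN0 (h.symm.trans h')
    · have h1 := Metric.dist_le_diam_of_mem (cantorCube_isBounded U) hxU hz
      have h2 := hdiam U hU
      have h3 := euclid_coord_le (gridPt n N x).1 z.1 i.succ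
      rw [gridPt_succ, hz0, h, min_self, div_self hNpos.ne'] at h3
      rw [Subtype.dist_eq] at h1
      norm_num at h3
      linarith)
  obtain ⟨U, hU, hball⟩ := hleb (gridPt n N x)
  have hmem : ∀ z : Fin n → ℕ, (∀ m, z m = x m ∨ z m = x m + 1) → gridPt n N z ∈ U := by
    intro z hz
    apply hball
    rw [Metric.mem_ball, Subtype.dist_eq]
    refine lt_of_le_of_lt (euclid_dist_le _ _ (1 / N) ?_) hfine
    intro i
    refine Fin.cases ?_ (fun i => ?_) i
    · rw [gridPt_zero, gridPt_zero]; simp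
    · rw [gridPt_succ, gridPt_succ, ← sub_div, abs_div, abs_of_pos hNpos]
      gcongr
      have : min (z i) N = min (x i) N ∨ min (z i) N = min (x i) N + 1 := by
        rcases hz i with h | h <;> omega
      rcases this with h | h <;> rw [h] <;> simp
  have hval : ∀ z : Fin n → ℕ, (∀ m, z m = x m ∨ z m = x m + 1) →
      F (c U) z = if low (c U) U then 1 else 0 := by
    intro z hz
    simp only [F]
    congr 1
    apply propext
    constructor
    · rintro (h | ⟨V, hV, hcV, hzV, hlow⟩)
      · exact ⟨_, hmem z hz, by rw [gridPt_succ, h]; simp⟩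
      · by_cases hVU : V = U
        · rwa [hVU] at hlow
        · exact absurd (hmem z hz) (Set.disjoint_left.1 (hc V hV U hU hVU hcV) hzV)
    · intro h
      exact Or.inr ⟨U, hU, rfl, hmem z hz, h⟩
  obtain ⟨z, hz, hne⟩ := hx (c U)
  exact hne (by rw [hval z hz, hval x (fun m => Or.inl rfl)])

lemma cantor_label (m : ℕ) : ∃ f : ℝ → ℕ, ∀ x ∈ cantorSet, ∀ y ∈ cantorSet,
    (f x = f y → |x - y| ≤ (1 / 3 : ℝ) ^ m) ∧ (f x ≠ f y → (1 / 3 : ℝ) ^ m ≤ |x - y|) := by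
  induction m with
  | zero =>
    refine ⟨fun _ => 0, fun x hx y hy => ⟨fun _ => ?_, fun h => absurd rfl h⟩⟩
    have h1 := cantorSet_subset_unitInterval hx
    have h2 := cantorSet_subset_unitInterval hy
    rw [Set.mem_Icc] at h1 h2
    rw [pow_zero, abs_le]; constructor <;> linarith
  | succ m ih =>
    obtain ⟨f, hf⟩ := ih
    have halves : ∀ x ∈ cantorSet, (x ≤ 1 / 3 ∧ 3 * x ∈ cantorSet) ∨
        (2 / 3 ≤ x ∧ 3 * x - 2 ∈ cantorSet) := by
      intro x hx
      rw [cantorSet_eq_union_halves] at hx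
      rcases hx with ⟨y, hy, rfl⟩ | ⟨y, hy, rfl⟩
      · left
        have h1 := cantorSet_subset_unitInterval hy
        rw [Set.mem_Icc] at h1
        refine ⟨by simp only; linarith, ?_⟩
        convert hy using 1; simp only; ring
      · right
        have h1 := cantorSet_subset_unitInterval hy
        rw [Set.mem_Icc] at h1
        refine ⟨by simp only; linarith, ?_⟩
        convert hy using 1; simp only; ring
    have hp : (1 / 3 : ℝ) ^ (m + 1) ≤ 1 / 3 := by
      have : (1 / 3 : ℝ) ^ m ≤ 1 := pow_le_one₀ (by norm_num) (by norm_num)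
      rw [pow_succ]; linarith
    refine ⟨fun x => if x ≤ 1 / 2 then 2 * f (3 * x) else 2 * f (3 * x - 2) + 1,
      fun x hx y hy => ?_⟩
    rcases halves x hx with ⟨h1, h2⟩ | ⟨h1, h2⟩ <;> rcases halves y hy with ⟨h3, h4⟩ | ⟨h3, h4⟩
    · have := hf _ h2 _ h4
      rw [← mul_sub, abs_mul, abs_of_pos (by norm_num : (0 : ℝ) < 3)] at this
      simp only [if_pos (by linarith : x ≤ 1 / 2), if_pos (by linarith : y ≤ 1 / 2), pow_succ]
      constructor
      · intro h
        have := this.1 (by omega); linarith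
      · intro h
        have := this.2 (by omega); linarith
    · simp only [if_pos (by linarith : x ≤ 1 / 2), if_neg (by linarith : ¬ y ≤ 1 / 2)]
      constructor
      · intro h; omega
      · intro _
        rw [le_abs]; right; linarith
    · simp only [if_neg (by linarith : ¬ x ≤ 1 / 2), if_pos (by linarith : y ≤ 1 / 2)]
      constructor
      · intro h; omega
      · intro _
        rw [le_abs]; left; linarith
    · have := hf _ h2 _ h4
      rw [sub_sub_sub_cancel_right, ← mul_sub, abs_mul,
        abs_of_pos (by norm_num : (0 : ℝ) < 3)] at this
      simp only [if_neg (by linarith : ¬ x ≤ 1 / 2), if_neg (by linarith : ¬ y ≤ 1 / 2), pow_succ]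
      constructor
      · intro h
        have := this.1 (by omega); linarith
      · intro h
        have := this.2 (by omega); linarith

lemma good_shift (n : ℕ) (u : Fin n → ℝ) : ∃ k : Fin (n + 1), ∀ i, ∀ z : ℤ,
    1 / (2 * ((n : ℝ) + 1)) ≤ |u i - (k : ℕ) / ((n : ℝ) + 1) - z| := by
  by_contra! hcon
  choose i z hz using hcon
  have hinj : Function.Injective i := by
    intro k k' h
    have h1 := hz k
    have h2 := hz k'
    rw [← h] at h2
    have hn : (0 : ℝ) < (n : ℝ) + 1 := by positivity
    have e : (1 : ℝ) / (2 * ((n : ℝ) + 1)) = (1 / 2) / ((n : ℝ) + 1) := by field_simp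
    rw [e] at h1 h2
    rw [lt_div_iff₀ hn, ← abs_of_pos hn, ← abs_mul, abs_of_pos hn, abs_lt] at h1 h2
    have e1 : ∀ (a : ℝ) (w : ℤ), (u (i k) - a / ((n : ℝ) + 1) - w) * ((n : ℝ) + 1) =
      u (i k) * ((n : ℝ) + 1) - a - w * ((n : ℝ) + 1) := by
      intro a w; field_simp
    rw [e1] at h1 h2
    have h3 : (((k : ℕ) : ℤ) - ((k' : ℕ) : ℤ) + (z k - z k') * ((n : ℤ) + 1) : ℤ) < 1 := by
      have : ((k : ℕ) : ℝ) - ((k' : ℕ) : ℝ) + (z k - z k') * ((n : ℝ) + 1) < 1 := by linarith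
      exact_mod_cast this
    have h4 : (-1 : ℤ) < (((k : ℕ) : ℤ) - ((k' : ℕ) : ℤ) + (z k - z k') * ((n : ℤ) + 1) : ℤ) := by
      have : -1 < ((k : ℕ) : ℝ) - ((k' : ℕ) : ℝ) + (z k - z k') * ((n : ℝ) + 1) := by linarith
      exact_mod_cast this
    have hk := k.2
    have hk' := k'.2
    have h5 : z k - z k' = 0 := by
      set w := z k - z k'
      by_contra hw
      rcases lt_or_gt_of_ne hw with hw | hw
      · have : w ≤ -1 := by omega
        nlinarith
      · have : 1 ≤ w := by omega
        nlinarith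
    rw [h5] at h3 h4
    ext
    omega
  have := Fintype.card_le_of_injective i hinj
  simp at this

/-- coloured cells -/
def cCell (n : ℕ) (f : ℝ → ℕ) (s : ℝ) (k : Fin (n + 1)) (q : ℕ) (m : Fin n → ℤ) :
    Set (cantorCube n) :=
  {x | f (x.1 0) = q ∧ ∀ i : Fin n, (m i : ℝ) < x.1 i.succ / s - (k : ℕ) / ((n : ℝ) + 1) ∧
    x.1 i.succ / s - (k : ℕ) / ((n : ℝ) + 1) < m i + 1}

lemma upper_bound (n : ℕ) :
    ∃ σ : ℝ, σ ∈ Set.Ioo (0 : ℝ) 1 ∧ HasColouredCovers ↥(cantorCube n) (n + 1) σ := by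
  have hn : (1 : ℝ) ≤ (n : ℝ) + 1 := by
    have : (0 : ℝ) ≤ n := Nat.cast_nonneg n
    linarith
  refine ⟨1 / (6 * ((n : ℝ) + 1) ^ 2), ⟨by positivity, ?_⟩, 1, one_pos, fun δ hδ hδ1 => ?_⟩
  · rw [div_lt_one (by positivity)]; nlinarith
  set s := δ / ((n : ℝ) + 1) with hs
  have hspos : 0 < s := by positivity
  have hs1 : s ≤ 1 := by rw [hs]; exact div_le_one_of_le₀ (by linarith) (by linarith)
  have hε : 1 / (6 * ((n : ℝ) + 1) ^ 2) * δ = s / (6 * ((n : ℝ) + 1)) := by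
    rw [hs]; field_simp
  obtain ⟨m, hm1, hm2⟩ := exists_nat_pow_near_of_lt_one hspos hs1
    (by norm_num : (0 : ℝ) < 1 / 3) (by norm_num)
  obtain ⟨f, hf⟩ := cantor_label (m + 1)
  have hε1 : s / (6 * ((n : ℝ) + 1)) < (1 / 3) ^ (m + 1) := by
    rw [div_lt_iff₀ (by positivity)]
    have : s ≤ 3 * (1 / 3) ^ (m + 1) := by rw [pow_succ]; linarith
    have h0 : (0 : ℝ) < (1 / 3) ^ (m + 1) := by positivity
    nlinarith
  classical
  let 𝒰 : Set (Set (cantorCube n)) := {U | ∃ k q m, U = cCell n f s k q m}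
  have hleb : ∀ x : cantorCube n, ∃ U ∈ 𝒰,
      Metric.ball x (1 / (6 * ((n : ℝ) + 1) ^ 2) * δ) ⊆ U := by
    intro x
    obtain ⟨k, hk⟩ := good_shift n (fun i => x.1 i.succ / s)
    refine ⟨_, ⟨k, f (x.1 0), fun i => ⌊x.1 i.succ / s - (k : ℕ) / ((n : ℝ) + 1)⌋, rfl⟩, ?_⟩
    intro y hy
    rw [Metric.mem_ball, hε, Subtype.dist_eq] at hy
    have hco : ∀ i, |y.1 i - x.1 i| < s / (6 * ((n : ℝ) + 1)) :=
      fun i => (euclid_coord_le _ _ i).trans_lt hy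
    refine ⟨?_, fun i => ?_⟩
    · by_contra h
      have := (hf _ y.2.1 _ x.2.1).2 h
      linarith [hco 0]
    · set a := x.1 i.succ / s - (k : ℕ) / ((n : ℝ) + 1) with ha
      have h1 := hk i ⌊a⌋
      have h2 := hk i (⌊a⌋ + 1)
      simp only [← ha] at h1 h2
      have f1 := Int.floor_le a
      have f2 := Int.lt_floor_add_one a
      push_cast at h2
      rw [abs_of_nonneg (by linarith)] at h1
      rw [abs_of_neg (by linarith)] at h2
      have h3 : |y.1 i.succ / s - x.1 i.succ / s| < 1 / (2 * ((n : ℝ) + 1)) := by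
        rw [← sub_div, abs_div, abs_of_pos hspos, div_lt_iff₀ hspos]
        refine (hco i.succ).trans ?_
        rw [one_div, ← div_eq_inv_mul]
        apply div_lt_div_of_pos_left hspos (by positivity) (by linarith)
      rw [abs_lt] at h3
      constructor <;> linarith
  refine ⟨𝒰, ?_, ?_, ?_, ?_, hleb⟩
  · rintro U ⟨k, q, m', rfl⟩
    unfold cCell
    rw [Set.setOf_and]
    apply IsOpen.inter
    · rw [Metric.isOpen_iff]
      intro x hx
      refine ⟨(1 / 3) ^ (m + 1), by positivity, fun y hy => ?_⟩
      rw [Metric.mem_ball, Subtype.dist_eq] at hy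
      rw [Set.mem_setOf_eq] at hx ⊢
      rw [← hx]
      by_contra h
      have := (hf _ y.2.1 _ x.2.1).2 h
      linarith [euclid_coord_le y.1 x.1 0]
    · rw [Set.setOf_forall]
      apply isOpen_iInter_of_finite
      intro i
      have hcont : Continuous fun x : cantorCube n =>
          x.1 i.succ / s - (k : ℕ) / ((n : ℝ) + 1) := by fun_prop
      exact (isOpen_lt continuous_const hcont).inter (isOpen_lt hcont continuous_const)
  · intro x
    obtain ⟨U, hU, h⟩ := hleb x
    exact ⟨U, hU, h (Metric.mem_ball_self (by positivity))⟩
  · refine ⟨fun U => if h : ∃ k q m, U = cCell n f s k q m then h.choose else 0, ?_⟩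
    intro U hU V hV hUV hc
    simp only [dif_pos (show ∃ k q m, U = cCell n f s k q m from hU),
      dif_pos (show ∃ k q m, V = cCell n f s k q m from hV)] at hc
    obtain ⟨q, a, ha⟩ := hU.choose_spec
    obtain ⟨r, b, hb⟩ := hV.choose_spec
    rw [hc] at ha
    generalize hV.choose = k at ha hb
    rw [Set.disjoint_left]
    intro x hxU hxV
    apply hUV
    rw [ha] at hxU
    rw [hb] at hxV
    rw [ha, hb]
    have e1 : q = r := hxU.1.symm.trans hxV.1
    have e2 : a = b := by
      funext i
      have h1 := hxU.2 i
      have h2 := hxV.2 i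
      have h3 : (a i : ℝ) < b i + 1 := h1.1.trans h2.2
      have h4 : (b i : ℝ) < a i + 1 := h2.1.trans h1.2
      have h3' : a i < b i + 1 := by exact_mod_cast h3
      have h4' : b i < a i + 1 := by exact_mod_cast h4
      omega
    rw [e1, e2]
  · rintro U ⟨k, q, m', rfl⟩
    apply Metric.diam_le_of_forall_dist_le hδ.le
    intro x hx y hy
    have : δ = (n + 1) * s := by rw [hs]; field_simp
    rw [this, Subtype.dist_eq]
    apply euclid_dist_le
    intro i
    refine Fin.cases ?_ (fun i => ?_) i
    · exact ((hf _ x.2.1 _ y.2.1).1 (hx.1.trans hy.1.symm)).trans hm1.le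
    · have h1 := hx.2 i
      have h2 := hy.2 i
      have h3 : |x.1 i.succ / s - y.1 i.succ / s| ≤ 1 := by
        rw [abs_le]; constructor <;> linarith
      rwa [← sub_div, abs_div, abs_of_pos hspos, div_le_one hspos] at h3

/-- For `n ≥ 1`, the space `X = C × [0,1]^n` has capacity dimension exactly
`n`: some `σ ∈ (0,1)` works with `n+1` colours, and no `σ ∈ (0,1)` works with `n` colours. -/
theorem statement17 (n : ℕ) (hn : 1 ≤ n) :
    (∃ σ : ℝ, σ ∈ Set.Ioo (0 : ℝ) 1 ∧ HasColouredCovers ↥(cantorCube n) (n + 1) σ) ∧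
      ∀ σ : ℝ, σ ∈ Set.Ioo (0 : ℝ) 1 → ¬ HasColouredCovers ↥(cantorCube n) n σ := by
  exact ⟨upper_bound n, fun σ hσ => lower_bound n σ hσ.1⟩
end
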